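/- arXiv:2010.03637 — 6 statements merged into one kernel-verified Lean document; each statement's English description precedes it below -/
import Mathlib

section
/- Let T be a finitely generated abelian group and A a finitely generated ℤT-module, and form the semidirect product G = A ⋊ T (with T acting on A through the module structure). Then G is a finitely generated metabelian group, and there exist a finite generating set a₁,…,a_m of A as a ℤT-module and a finite generating set f₁,…,f_l of the kernel S of the natural surjection from the free ℤT-module M on a₁,…,a_m onto A, such that the relative Dehn function of G satisfies δ̃_G(n) ≼ max{n³, (δ_A(n²))³} (the maximum taken pointwise in n), where δ_A is the module Dehn function of S with respect to f₁,…,f_l. -/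
open Function

/-- The length of the reduced word representing an element of a free group. -/
noncomputable def freeNorm {X : Type*} (w : FreeGroup X) : ℕ :=
  letI := Classical.decEq X
  w.toWord.length

/-- `w` equals a product of exactly `N` conjugates of elements of `R ∪ R⁻¹`. -/
def AreaIs {G : Type*} [Group G] (R : Set G) (w : G) (N : ℕ) : Prop :=
  ∃ r f : Fin N → G, (∀ i, r i ∈ R ∨ (r i)⁻¹ ∈ R) ∧
    w = (List.ofFn fun i => (f i)⁻¹ * r i * f i).prod

/-- The area of `w` with respect to the relators `R` is at most `N`. -/
def AreaLe {G : Type*} [Group G] (R : Set G) (w : G) (N : ℕ) : Prop :=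
  ∃ N' ≤ N, AreaIs R w N'

/-- `f ≼ g` : there is `C > 0` with `f n ≤ C * g (C * n) + C * n + C` for all `n`. -/
def Dominates (f g : ℕ → ℕ) : Prop :=
  ∃ C : ℕ, 0 < C ∧ ∀ n, f n ≤ C * g (C * n) + C * n + C

/-- `f ≈ g` : mutual domination. -/
def DehnEquiv (f g : ℕ → ℕ) : Prop := Dominates f g ∧ Dominates g f

/-- `δ` is the Dehn function of the presentation with relator set `R`. -/
def IsDehnFunctionOf {X : Type*} (R : Set (FreeGroup X)) (δ : ℕ → ℕ) : Prop :=
  ∀ n, IsLeast {N | ∀ w ∈ Subgroup.normalClosure R, freeNorm w ≤ n → AreaLe R w N} (δ n)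

/-- A group is metabelian if its derived subgroup is abelian. -/
def IsMetabelian (G : Type*) [Group G] : Prop :=
  ∀ a b : G, a ∈ commutator G → b ∈ commutator G → a * b = b * a

instance derivedSeriesNormalInst {G : Type*} [Group G] (n : ℕ) : (derivedSeries G n).Normal :=
  derivedSeries_normal G n

/-- The free metabelian group on `X`: the free group modulo its second derived subgroup. -/
abbrev FreeMetabelian (X : Type*) := FreeGroup X ⧸ derivedSeries (FreeGroup X) 2

/-- The word length of `w` in the free metabelian group is at most `n`. -/
def mNormLe {X : Type*} (w : FreeMetabelian X) (n : ℕ) : Prop :=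
  ∃ v : FreeGroup X, QuotientGroup.mk' (derivedSeries (FreeGroup X) 2) v = w ∧ freeNorm v ≤ n

/-- `δ` is the relative Dehn function (in the variety of metabelian groups) of the
relative presentation with relator set `R`. -/
def IsRelDehnFunctionOf {X : Type*} (R : Set (FreeMetabelian X)) (δ : ℕ → ℕ) : Prop :=
  ∀ n, IsLeast {N | ∀ w ∈ Subgroup.normalClosure R, mNormLe w n → AreaLe R w N} (δ n)

/-- The paper's commutator convention: `[x, y] = x⁻¹ * y⁻¹ * x * y`. -/
def pcomm {G : Type*} [Group G] (x y : G) : G := x⁻¹ * y⁻¹ * x * y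

/-- A group has torsion-free rank `k` if it has a finite-index subgroup isomorphic to `ℤ^k`. -/
def HasTFRank (Q : Type*) [Group Q] (k : ℕ) : Prop :=
  ∃ H : Subgroup Q, H.index ≠ 0 ∧ Nonempty (H ≃* Multiplicative (Fin k → ℤ))

/-- `G ⧸ A` is abelian and has torsion-free rank `j`. -/
def QuotientRankProp {G : Type*} [Group G] (A : Subgroup G) [A.Normal] (j : ℕ) : Prop :=
  (∀ x y : G ⧸ A, x * y = y * x) ∧ HasTFRank (G ⧸ A) j

/-- The set of torsion-free ranks of quotients `G ⧸ A` by abelian normal subgroups `A`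
with `G ⧸ A` abelian. -/
def abelianRankSet (G : Type*) [Group G] : Set ℕ :=
  {j | ∃ A : Subgroup G, ∃ h : A.Normal, (∀ x y : G, x ∈ A → y ∈ A → x * y = y * x) ∧
    @QuotientRankProp G _ A h j}
/-- `|λ|` : the sum of the absolute values of the integer coefficients of `λ ∈ ℤT`. -/
noncomputable def ringNorm {T : Type*} (lam : MonoidAlgebra ℤ T) : ℕ :=
  ∑ t ∈ lam.coeff.support, (lam.coeff t).natAbs

/-- The word length of `x` in the group `T` with respect to the generators `gens`. -/
noncomputable def wordLen {T : Type*} [Group T] {q : ℕ} (gens : Fin q → T) (x : T) : ℕ :=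
  sInf {n | ∃ w : FreeGroup (Fin q), FreeGroup.lift gens w = x ∧ freeNorm w = n}

/-- `‖f‖` for `f = Σ μ_j a_j` in the free `ℤT`-module on `a₁,…,a_m` :
`Σ_j Σ_{t ∈ supp μ_j} (|μ_j(t)| + 2 ℓ_T(t))`. -/
noncomputable def modNorm {T : Type*} [Group T] {q m : ℕ} (gens : Fin q → T)
    (g : Fin m → MonoidAlgebra ℤ T) : ℕ :=
  ∑ j, ∑ t ∈ (g j).coeff.support, (((g j).coeff t).natAbs + 2 * wordLen gens t)

/-- `g` can be written as `Σ αᵢ fᵢ` with `Σ |αᵢ| ≤ N`. -/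
def ModAreaLe {T : Type*} [CommGroup T] {m l : ℕ}
    (f : Fin l → (Fin m → MonoidAlgebra ℤ T))
    (g : Fin m → MonoidAlgebra ℤ T) (N : ℕ) : Prop :=
  ∃ α : Fin l → MonoidAlgebra ℤ T, g = ∑ i, α i • f i ∧ ∑ i, ringNorm (α i) ≤ N

/-- `δ` is the Dehn function of the submodule `S` of the free `ℤT`-module with respect
to the generating set `f` of `S` and the generating set `gens` of `T`. -/
def IsModDehnFunctionOf {T : Type*} [CommGroup T] {q m l : ℕ} (gens : Fin q → T)
    (S : Submodule (MonoidAlgebra ℤ T) (Fin m → MonoidAlgebra ℤ T))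
    (f : Fin l → (Fin m → MonoidAlgebra ℤ T)) (δ : ℕ → ℕ) : Prop :=
  ∀ n, IsLeast {N | ∀ g ∈ S, modNorm gens g ≤ n → ModAreaLe f g N} (δ n)
/-- The automorphism of the `ℤT`-module `A` given by the action of `t ∈ T`. -/
noncomputable def modAut {T : Type*} [CommGroup T] {A : Type*} [AddCommGroup A]
    [Module (MonoidAlgebra ℤ T) A] (t : T) : A ≃+ A where
  toFun x := MonoidAlgebra.of ℤ T t • x
  invFun x := MonoidAlgebra.of ℤ T t⁻¹ • x
  left_inv x := by
    show MonoidAlgebra.of ℤ T t⁻¹ • MonoidAlgebra.of ℤ T t • x = x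
    rw [smul_smul, ← map_mul, inv_mul_cancel, map_one, one_smul]
  right_inv x := by
    show MonoidAlgebra.of ℤ T t • MonoidAlgebra.of ℤ T t⁻¹ • x = x
    rw [smul_smul, ← map_mul, mul_inv_cancel, map_one, one_smul]
  map_add' x y := smul_add _ x y

/-- The action of `T` on `A` (through the module structure) as a homomorphism
`T →* MulAut (Multiplicative A)`. -/
noncomputable def modAction (T A : Type*) [CommGroup T] [AddCommGroup A]
    [Module (MonoidAlgebra ℤ T) A] : T →* MulAut (Multiplicative A) :=
  MonoidHom.mk' (fun t => AddEquiv.toMultiplicative (modAut t)) (by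
    intro s t
    ext x
    show Multiplicative.ofAdd (MonoidAlgebra.of ℤ T (s * t) • (Multiplicative.toAdd x))
      = Multiplicative.ofAdd (MonoidAlgebra.of ℤ T s • MonoidAlgebra.of ℤ T t •
          (Multiplicative.toAdd x))
    rw [smul_smul, ← map_mul])


open scoped commutatorElement
set_option linter.unusedVariables false

/-- An abstract conjugation-invariant cost on a group. -/
structure Cost {H : Type*} [Group H] (B : H → ℕ → Prop) : Prop where
  mono : ∀ {x a b}, B x a → a ≤ b → B x b
  one : B 1 0
  mul : ∀ {x y a b}, B x a → B y b → B (x * y) (a + b)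
  inv : ∀ {x a}, B x a → B x⁻¹ a
  conj : ∀ {x a} (y : H), B x a → B (y * x * y⁻¹) a

/-- Distance attached to a cost. -/
def DD {H : Type*} [Group H] (B : H → ℕ → Prop) (x y : H) (n : ℕ) : Prop := B (x * y⁻¹) n

/-- Cost of a commutator. -/
def KK {H : Type*} [Group H] (B : H → ℕ → Prop) (x y : H) (n : ℕ) : Prop := B ⁅x, y⁆ n

section cost
variable {H : Type*} [Group H] {B : H → ℕ → Prop}

theorem DD.mono (hB : Cost B) {x y : H} {a b : ℕ} (h : DD B x y a) (hab : a ≤ b) : DD B x y b :=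
  Cost.mono hB h hab

theorem DD.refl (hB : Cost B) (x : H) : DD B x x 0 := by
  simpa [DD] using hB.one

theorem DD.of_eq (hB : Cost B) {x y : H} (h : x = y) : DD B x y 0 := h ▸ DD.refl hB x

theorem DD.symm (hB : Cost B) {x y : H} {a : ℕ} (h : DD B x y a) : DD B y x a := by
  have := hB.inv h
  simpa [DD] using this

theorem DD.trans (hB : Cost B) {x y z : H} {a b : ℕ} (h : DD B x y a) (h' : DD B y z b) :
    DD B x z (a + b) := by
  have := hB.mul h h'
  simpa [DD, mul_assoc] using this

theorem DD.mul (hB : Cost B) {x y x' y' : H} {a b : ℕ} (h : DD B x y a) (h' : DD B x' y' b) :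
    DD B (x * x') (y * y') (a + b) := by
  have := hB.mul (hB.conj x h') h
  unfold DD
  rw [add_comm]
  convert this using 1
  group

theorem DD.inv (hB : Cost B) {x y : H} {a : ℕ} (h : DD B x y a) : DD B x⁻¹ y⁻¹ a := by
  have := hB.conj (x⁻¹) (hB.inv h)
  unfold DD
  convert this using 1
  group

theorem DD.mul_left (hB : Cost B) {x y : H} {a : ℕ} (z : H) (h : DD B x y a) :
    DD B (z * x) (z * y) a := by
  have := (DD.refl hB z).mul hB h
  simpa using this

theorem DD.mul_right (hB : Cost B) {x y : H} {a : ℕ} (z : H) (h : DD B x y a) :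
    DD B (x * z) (y * z) a := by
  have := h.mul hB (DD.refl hB z)
  simpa using this

theorem DD.cost (hB : Cost B) {x y : H} {a b : ℕ} (h : DD B x y a) (h' : B y b) :
    B x (a + b) := by
  have := hB.mul h h'
  simpa using this

theorem DD.one_right {x : H} {a : ℕ} : DD B x 1 a ↔ B x a := by simp [DD]

theorem KK.swap (hB : Cost B) {x y : H} {a : ℕ} (h : KK B x y a) : DD B (x * y) (y * x) a := by
  simpa [DD, KK, commutatorElement_def, mul_assoc] using h

theorem KK.mono (hB : Cost B) {x y : H} {a b : ℕ} (h : KK B x y a) (hab : a ≤ b) : KK B x y b :=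
  Cost.mono hB h hab

theorem KK.symm (hB : Cost B) {x y : H} {a : ℕ} (h : KK B x y a) : KK B y x a := by
  have := hB.inv h
  simpa [KK] using this

theorem KK.one_left (hB : Cost B) (z : H) : KK B 1 z 0 := by
  simpa [KK] using hB.one

theorem KK.mul_left (hB : Cost B) {x y z : H} {a b : ℕ} (h : KK B x z a) (h' : KK B y z b) :
    KK B (x * y) z (a + b) := by
  have := hB.mul (hB.conj x h') h
  unfold KK
  rw [add_comm]
  convert this using 1
  simp only [commutatorElement_def]
  group

theorem KK.inv_left (hB : Cost B) {x z : H} {a : ℕ} (h : KK B x z a) : KK B x⁻¹ z a := by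
  have := hB.conj x⁻¹ (hB.inv h)
  unfold KK
  convert this using 1
  simp only [commutatorElement_def]
  group

theorem KK.pow_left (hB : Cost B) {x z : H} {a : ℕ} (h : KK B x z a) (n : ℕ) :
    KK B (x ^ n) z (n * a) := by
  induction n with
  | zero => simpa using KK.one_left hB z
  | succ n ih => rw [pow_succ, add_mul, one_mul]; exact ih.mul_left hB h

theorem KK.zpow_left (hB : Cost B) {x z : H} {a : ℕ} (h : KK B x z a) (n : ℤ) :
    KK B (x ^ n) z (n.natAbs * a) := by
  obtain ⟨k, rfl | rfl⟩ := n.eq_nat_or_neg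
  · simpa using h.pow_left hB k
  · simpa using (h.pow_left hB k).inv_left hB

/-- ordered product of powers -/
def pw {J : Type*} (x : J → H) (l : List J) (v : J → ℤ) : H := (l.map fun j => x j ^ v j).prod

/-- ℓ¹ norm along a list -/
def vn {J : Type*} (l : List J) (v : J → ℤ) : ℕ := (l.map fun j => (v j).natAbs).sum

theorem pw_left {J : Type*} (hB : Cost B) (x : J → H) (z : H) (C : ℕ)
    (h : ∀ j, KK B (x j) z C) (l : List J) (v : J → ℤ) : KK B (pw x l v) z (vn l v * C) := by
  induction l with
  | nil => simpa [pw, vn] using KK.one_left hB z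
  | cons j l ih =>
    have := ((h j).zpow_left hB (v j)).mul_left hB ih
    simpa [pw, vn, add_mul] using this

theorem pw_add {J : Type*} (hB : Cost B) (x : J → H) (C : ℕ)
    (h : ∀ i j, KK B (x i) (x j) C) (l : List J) (v w : J → ℤ) :
    DD B (pw x l v * pw x l w) (pw x l (v + w)) (vn l v * vn l w * C) := by
  induction l with
  | nil => simpa [pw, vn] using DD.refl hB 1
  | cons j l ih =>
    have h1 : KK B (pw x l v) (x j ^ w j) (vn l v * ((w j).natAbs * C)) :=
      pw_left hB x _ _ (fun i => (((h j i).zpow_left hB (w j)).symm hB)) l v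
    have h2 := ((h1.swap hB).mul_left hB (x j ^ v j)).mul_right hB (pw x l w)
    have h3 := ih.mul_left hB (x j ^ (v j + w j))
    have h4 : DD B (pw x (j :: l) v * pw x (j :: l) w) (pw x (j :: l) (v + w))
      (vn l v * ((w j).natAbs * C) + vn l v * vn l w * C) := by
      have e1 : pw x (j :: l) v * pw x (j :: l) w
          = x j ^ v j * (pw x l v * x j ^ w j) * pw x l w := by
        simp [pw, mul_assoc]
      have e2 : pw x (j :: l) (v + w) = x j ^ (v j + w j) * pw x l (v + w) := by
        simp [pw]
      have e3 : x j ^ v j * (x j ^ w j * pw x l v) * pw x l w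
          = x j ^ (v j + w j) * (pw x l v * pw x l w) := by
        simp [zpow_add, mul_assoc]
      rw [e1, e2]
      rw [e3] at h2
      exact h2.trans hB h3
    refine h4.mono hB ?_
    simp only [vn, List.map_cons, List.sum_cons]
    have : (0:ℕ) ≤ (v j).natAbs * (w j).natAbs * C + (v j).natAbs * (vn l w) * C := by positivity
    simp only [vn] at this
    nlinarith

theorem pw_congr {J : Type*} (hB : Cost B) (x : J → H) (C : ℕ) (l : List J) (v w : J → ℤ)
    (h : ∀ j, DD B (x j ^ v j) (x j ^ w j) C) :
    DD B (pw x l v) (pw x l w) (l.length * C) := by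
  induction l with
  | nil => simpa [pw] using DD.refl hB 1
  | cons j l ih =>
    have := (h j).mul hB ih
    simp only [pw, List.map_cons, List.prod_cons, List.length_cons, add_mul, one_mul] at this ⊢
    rwa [add_comm]

/-- double commutator lemmas in a metabelian group -/
theorem KK.conj_right (hB : Cost B) (hH : IsMetabelian H) {a c : H} {n : ℕ} (hc : c ∈ commutator H)
    (h : KK B a c n) (y : H) : KK B a (y * c * y⁻¹) n := by
  have hd : ⁅a⁻¹, y⁻¹⁆ ∈ commutator H := by
    rw [commutator_def]
    exact Subgroup.commutator_mem_commutator (Subgroup.mem_top _) (Subgroup.mem_top _)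
  have e := hH _ _ hd hc
  have h1 := hB.conj y h
  unfold KK
  convert h1 using 1
  have e2 : y⁻¹ * a * y = a * ⁅a⁻¹, y⁻¹⁆ := by simp only [commutatorElement_def]; group
  calc ⁅a, y * c * y⁻¹⁆ = y * (((y⁻¹ * a * y) * c) * (y⁻¹ * a * y)⁻¹ * c⁻¹) * y⁻¹ := by
        simp only [commutatorElement_def]; group
    _ = y * (a * (⁅a⁻¹, y⁻¹⁆ * c) * ⁅a⁻¹, y⁻¹⁆⁻¹ * a⁻¹ * c⁻¹) * y⁻¹ := by
        rw [e2]; group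
    _ = y * ⁅a, c⁆ * y⁻¹ := by
        rw [e]; simp only [commutatorElement_def]; group

theorem comm_mem (x y : H) : ⁅x, y⁆ ∈ commutator H := by
  rw [commutator_def]
  exact Subgroup.commutator_mem_commutator (Subgroup.mem_top _) (Subgroup.mem_top _)

theorem KK.dbl_mul (hB : Cost B) (hH : IsMetabelian H) {a x y z : H} {n k : ℕ}
    (h : KK B a ⁅x, y⁆ n) (h' : KK B a ⁅x, z⁆ k) : KK B a ⁅x, y * z⁆ (n + k) := by
  have e : ⁅x, y * z⁆ = ⁅x, y⁆ * (y * ⁅x, z⁆ * y⁻¹) := by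
    simp only [commutatorElement_def]; group
  rw [e]
  exact ((h.symm hB).mul_left hB ((h'.conj_right hB hH (comm_mem x z) y).symm hB)).symm hB

theorem KK.dbl_inv (hB : Cost B) (hH : IsMetabelian H) {a x y : H} {n : ℕ}
    (h : KK B a ⁅x, y⁆ n) : KK B a ⁅x, y⁻¹⁆ n := by
  have e : ⁅x, y⁻¹⁆ = y⁻¹ * ⁅x, y⁆⁻¹ * y⁻¹⁻¹ := by
    simp only [commutatorElement_def]; group
  rw [e]
  exact (((h.symm hB).inv_left hB).symm hB).conj_right hB hH (inv_mem (comm_mem x y)) y⁻¹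

theorem KK.dbl_one (hB : Cost B) (a x : H) : KK B a ⁅x, 1⁆ 0 := by
  simpa [KK] using hB.one

theorem KK.dbl_pow (hB : Cost B) (hH : IsMetabelian H) {a x y : H} {n : ℕ}
    (h : KK B a ⁅x, y⁆ n) (k : ℕ) : KK B a ⁅x, y ^ k⁆ (k * n) := by
  induction k with
  | zero => simpa using KK.dbl_one hB a x
  | succ k ih => rw [pow_succ, add_mul, one_mul]; exact ih.dbl_mul hB hH h

theorem KK.dbl_zpow (hB : Cost B) (hH : IsMetabelian H) {a x y : H} {n : ℕ}
    (h : KK B a ⁅x, y⁆ n) (k : ℤ) : KK B a ⁅x, y ^ k⁆ (k.natAbs * n) := by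
  obtain ⟨k, rfl | rfl⟩ := k.eq_nat_or_neg
  · simpa using h.dbl_pow hB hH k
  · simpa using (h.dbl_pow hB hH k).dbl_inv hB hH

theorem KK.dbl_pw {J : Type*} (hB : Cost B) (hH : IsMetabelian H) {a x : H} {n : ℕ} (y : J → H)
    (h : ∀ j, KK B a ⁅x, y j⁆ n) (l : List J) (v : J → ℤ) :
    KK B a ⁅x, pw y l v⁆ (vn l v * n) := by
  induction l with
  | nil => simpa [pw, vn] using KK.dbl_one hB a x
  | cons j l ih =>
    have := ((h j).dbl_zpow hB hH (v j)).dbl_mul hB hH ih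
    simpa [pw, vn, add_mul] using this

end cost
set_option linter.unusedVariables false
set_option linter.unusedSectionVars false
set_option linter.unusedSimpArgs false

section TSsec
variable {T : Type*} [CommGroup T]

theorem ringNorm_eq_sum (a : MonoidAlgebra ℤ T) (s : Finset T) (h : a.coeff.support ⊆ s) :
    ringNorm a = ∑ t ∈ s, (a.coeff t).natAbs := by
  unfold ringNorm
  refine Finset.sum_subset h ?_
  intro t _ ht
  simpa using ht

theorem ringNorm_add (a b : MonoidAlgebra ℤ T) : ringNorm (a + b) ≤ ringNorm a + ringNorm b := by
  classical
  rw [ringNorm_eq_sum (a + b) (a.coeff.support ∪ b.coeff.support)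
      (by rw [MonoidAlgebra.coeff_add]; exact Finsupp.support_add),
    ringNorm_eq_sum a (a.coeff.support ∪ b.coeff.support) Finset.subset_union_left,
    ringNorm_eq_sum b (a.coeff.support ∪ b.coeff.support) Finset.subset_union_right,
    ← Finset.sum_add_distrib]
  refine Finset.sum_le_sum fun t _ => ?_
  simp only [MonoidAlgebra.coeff_add, Finsupp.add_apply]
  exact Int.natAbs_add_le _ _

theorem ringNorm_neg (a : MonoidAlgebra ℤ T) : ringNorm (-a) = ringNorm a := by
  unfold ringNorm
  rw [MonoidAlgebra.coeff_neg, Finsupp.support_neg]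
  simp

theorem ringNorm_zero : ringNorm (0 : MonoidAlgebra ℤ T) = 0 := by simp [ringNorm]

theorem ringNorm_single (t : T) : ringNorm (MonoidAlgebra.single t (1 : ℤ)) = 1 := by
  rw [ringNorm_eq_sum _ {t} (by rw [MonoidAlgebra.coeff_single]; exact Finsupp.support_single_subset)]
  simp

/-- basis element -/
noncomputable def tm {l : ℕ} (k : Fin l) (t : T) : Fin l → MonoidAlgebra ℤ T :=
  Pi.single k (MonoidAlgebra.single t 1)

/-- `g` is a signed sum of at most `N` basis elements `t·e_k` with `len t ≤ R`. -/
inductive TS (len : T → ℕ) (R : ℕ) {l : ℕ} : (Fin l → MonoidAlgebra ℤ T) → ℕ → Prop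
  | zero : TS len R 0 0
  | add {g N} (k : Fin l) (t : T) : TS len R g N → len t ≤ R → TS len R (g + tm k t) (N + 1)
  | sub {g N} (k : Fin l) (t : T) : TS len R g N → len t ≤ R → TS len R (g - tm k t) (N + 1)
  | mono {g N N'} : TS len R g N → N ≤ N' → TS len R g N'

variable {len : T → ℕ} {R : ℕ} {l : ℕ}

/-- total norm -/
noncomputable def tn (g : Fin l → MonoidAlgebra ℤ T) : ℕ := ∑ k, ringNorm (g k)

theorem tn_add (g h : Fin l → MonoidAlgebra ℤ T) : tn (g + h) ≤ tn g + tn h := by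
  unfold tn
  rw [← Finset.sum_add_distrib]
  exact Finset.sum_le_sum fun k _ => ringNorm_add _ _

theorem tn_neg (g : Fin l → MonoidAlgebra ℤ T) : tn (-g) = tn g := by
  simp [tn, ringNorm_neg]

theorem tn_tm (k : Fin l) (t : T) : tn (tm k t) = 1 := by
  unfold tn tm
  rw [Finset.sum_eq_single k]
  · simp [ringNorm_single]
  · intro b _ hb
    simp [hb, ringNorm_zero]
  · simp

theorem tm_coeff (k j : Fin l) (t u : T) (h : (tm k t j).coeff u ≠ 0) : u = t := by
  by_contra hu
  apply h
  unfold tm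
  by_cases hk : j = k
  · subst hk
    simp [Finsupp.single_apply, Ne.symm hu]
  · simp [hk]

theorem TS.norm {g : Fin l → MonoidAlgebra ℤ T} {N : ℕ} (h : TS len R g N) : tn g ≤ N := by
  induction h with
  | zero => simp [tn, ringNorm_zero]
  | add k t _ _ ih => have := tn_add ‹_› (tm k t); rw [tn_tm] at this; omega
  | @sub g N k t _ _ ih =>
    have := tn_add g (-tm k t); rw [tn_neg, tn_tm, ← sub_eq_add_neg] at this; omega
  | mono _ _ ih => omega

theorem TS.supp {g : Fin l → MonoidAlgebra ℤ T} {N : ℕ} (h : TS len R g N) (j : Fin l) (u : T)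
    (hu : (g j).coeff u ≠ 0) : len u ≤ R := by
  induction h with
  | zero => simp at hu
  | @add g N k t _ ht ih =>
    by_cases h1 : (g j).coeff u = 0
    · have : (tm k t j).coeff u ≠ 0 := by simpa [h1] using hu
      rw [tm_coeff k j t u this]; exact ht
    · exact ih h1
  | @sub g N k t _ ht ih =>
    by_cases h1 : (g j).coeff u = 0
    · have : (tm k t j).coeff u ≠ 0 := by simpa [h1] using hu
      rw [tm_coeff k j t u this]; exact ht
    · exact ih h1
  | mono _ _ ih => exact ih hu

theorem tn_sub_tm (g : Fin l → MonoidAlgebra ℤ T) (k : Fin l) (t : T) (h : (g k).coeff t ≠ 0) :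
    tn (g - tm k t) + 1 ≤ tn g ∨ tn (g + tm k t) + 1 ≤ tn g := by
  classical
  have hg := h
  have key : ∀ h : Fin l → MonoidAlgebra ℤ T, (∀ j ≠ k, h j = g j) →
      (∀ u ≠ t, (h k).coeff u = (g k).coeff u) →
      ((h k).coeff t).natAbs + 1 ≤ ((g k).coeff t).natAbs → tn h + 1 ≤ tn g := by
    intro h h1 h2 h3
    unfold tn
    rw [← Finset.add_sum_erase _ _ (Finset.mem_univ k),
      ← Finset.add_sum_erase _ (fun k => ringNorm (g k)) (Finset.mem_univ k)]
    have e1 : ∑ x ∈ Finset.univ.erase k, ringNorm (h x)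
        = ∑ x ∈ Finset.univ.erase k, ringNorm (g x) :=
      Finset.sum_congr rfl fun x hx => by rw [h1 x (Finset.ne_of_mem_erase hx)]
    have e2 : ringNorm (h k) + 1 ≤ ringNorm (g k) := by
      have hts : t ∈ (h k).coeff.support ∪ (g k).coeff.support :=
        Finset.mem_union_right _ (by simpa using hg)
      rw [ringNorm_eq_sum (h k) _ Finset.subset_union_left,
        ringNorm_eq_sum (g k) _ Finset.subset_union_right,
        ← Finset.add_sum_erase _ _ hts,
        ← Finset.add_sum_erase _ (fun x => ((g k).coeff x).natAbs) hts]
      have e3 : ∑ x ∈ ((h k).coeff.support ∪ (g k).coeff.support).erase t, ((h k).coeff x).natAbs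
        = ∑ x ∈ ((h k).coeff.support ∪ (g k).coeff.support).erase t, ((g k).coeff x).natAbs :=
        Finset.sum_congr rfl fun x hx => by rw [h2 x (Finset.ne_of_mem_erase hx)]
      omega
    omega
  rcases lt_or_gt_of_ne h with h0 | h0
  · right
    refine key _ (fun j hj => ?_) (fun u hu => ?_) ?_
    · simp [tm, hj]
    · simp [tm, Finsupp.single_apply, Ne.symm hu]
    · simp [tm]; omega
  · left
    refine key _ (fun j hj => ?_) (fun u hu => ?_) ?_
    · simp [tm, hj]
    · simp [tm, Finsupp.single_apply, Ne.symm hu]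
    · simp [tm]; omega

theorem TS.of (N : ℕ) : ∀ (g : Fin l → MonoidAlgebra ℤ T), tn g ≤ N →
    (∀ k t, (g k).coeff t ≠ 0 → len t ≤ R) → TS len R g N := by
  induction N with
  | zero =>
    intro g hg hs
    have : g = 0 := by
      by_contra hne
      have : ∃ k t, (g k).coeff t ≠ 0 := by
        by_contra hc
        push Not at hc
        exact hne (funext fun k => MonoidAlgebra.ext (Finsupp.ext fun t => hc k t))
      obtain ⟨k, t, hkt⟩ := this
      rcases tn_sub_tm g k t hkt with h | h <;> omega
    rw [this]; exact TS.zero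
  | succ N ih =>
    intro g hg hs
    by_cases h : ∃ k t, (g k).coeff t ≠ 0
    · obtain ⟨k, t, hkt⟩ := h
      have hs' : ∀ h : Fin l → MonoidAlgebra ℤ T, h = tm k t ∨ h = - tm k t →
          ∀ j u, ((g + h) j).coeff u ≠ 0 → len u ≤ R := by
        intro h hh j u hu
        by_cases h1 : (g j).coeff u = 0
        · have : (tm k t j).coeff u ≠ 0 := by
            rcases hh with rfl | rfl <;> simpa [h1] using hu
          rw [tm_coeff k j t u this]; exact hs k t hkt
        · exact hs j u h1
      rcases tn_sub_tm g k t hkt with h | h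
      · have := (ih (g - tm k t) (by omega) (by
          rw [sub_eq_add_neg]; exact hs' _ (Or.inr rfl))).add k t (hs k t hkt)
        simpa using this
      · have := (ih (g + tm k t) (by omega) (hs' _ (Or.inl rfl))).sub k t (hs k t hkt)
        simpa using this
    · push Not at h
      have : g = 0 := funext fun k => MonoidAlgebra.ext (Finsupp.ext fun t => h k t)
      rw [this]; exact TS.zero.mono (Nat.zero_le _)

theorem TS.monoR {R' : ℕ} {g : Fin l → MonoidAlgebra ℤ T} {N : ℕ} (h : TS len R g N)
    (hR : R ≤ R') : TS len R' g N :=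
  TS.of N g h.norm fun k t ht => (h.supp k t ht).trans hR

theorem TS.plus {g g' : Fin l → MonoidAlgebra ℤ T} {N N' : ℕ} (h : TS len R g N)
    (h' : TS len R g' N') : TS len R (g + g') (N + N') := by
  induction h' with
  | zero => simpa using h
  | add k t _ ht ih => rw [← add_assoc, ← add_assoc]; exact ih.add k t ht
  | sub k t _ ht ih => rw [← add_assoc, ← add_sub_assoc]; exact ih.sub k t ht
  | mono _ hN ih => exact ih.mono (by omega)

theorem TS.neg {g : Fin l → MonoidAlgebra ℤ T} {N : ℕ} (h : TS len R g N) :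
    TS len R (-g) N := by
  induction h with
  | zero => simpa using TS.zero
  | add k t _ ht ih => rw [neg_add, ← sub_eq_add_neg]; exact ih.sub k t ht
  | sub k t _ ht ih => rw [neg_sub', sub_neg_eq_add]; exact ih.add k t ht
  | mono _ hN ih => exact ih.mono hN

theorem smul_tm (s t : T) (k : Fin l) :
    (MonoidAlgebra.single s (1 : ℤ)) • tm k t = tm k (s * t) := by
  funext j
  by_cases hj : j = k
  · subst hj; simp [tm, MonoidAlgebra.single_mul_single]
  · simp [tm, hj]

theorem TS.smul (hlen : ∀ s t, len (s * t) ≤ len s + len t)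
    {g : Fin l → MonoidAlgebra ℤ T} {N : ℕ} (h : TS len R g N) (s : T) :
    TS len (R + len s) ((MonoidAlgebra.single s (1 : ℤ)) • g) N := by
  induction h with
  | zero => simpa using TS.zero
  | add k t _ ht ih =>
    rw [smul_add, smul_tm]; exact ih.add k _ (by have := hlen s t; omega)
  | sub k t _ ht ih =>
    rw [smul_sub, smul_tm]; exact ih.sub k _ (by have := hlen s t; omega)
  | mono _ hN ih => exact ih.mono hN

theorem TS.exists (g : Fin l → MonoidAlgebra ℤ T) : ∃ R N, TS len R g N := by
  classical
  refine ⟨∑ k, ∑ t ∈ (g k).coeff.support, len t, tn g, TS.of _ g le_rfl fun k t ht => ?_⟩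
  refine le_trans ?_ (Finset.single_le_sum (f := fun k => ∑ t ∈ (g k).coeff.support, len t)
    (fun _ _ => Nat.zero_le _) (Finset.mem_univ k))
  exact Finset.single_le_sum (f := fun t => len t) (fun _ _ => Nat.zero_le _) (by simpa using ht)

theorem TS.finite (hfin : ∀ R, {t | len t ≤ R}.Finite) (R N : ℕ) :
    {g : Fin l → MonoidAlgebra ℤ T | TS len R g N}.Finite := by
  classical
  have : ∀ N, {g : Fin l → MonoidAlgebra ℤ T | tn g ≤ N ∧ TS len R g N}.Finite := by
    intro N
    induction N with
    | zero =>
      refine (Set.finite_singleton (0 : Fin l → MonoidAlgebra ℤ T)).subset ?_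
      rintro g ⟨hg, hg2⟩
      by_contra hne
      have : ∃ k t, (g k).coeff t ≠ 0 := by
        by_contra hc
        push Not at hc
        exact hne (funext fun k => MonoidAlgebra.ext (Finsupp.ext fun t => hc k t))
      obtain ⟨k, t, hkt⟩ := this
      rcases tn_sub_tm g k t hkt with h | h <;> omega
    | succ N ih =>
      have hP : (Set.univ ×ˢ {t | len t ≤ R} : Set (Fin l × T)).Finite :=
        Set.finite_univ.prod (hfin R)
      have h1 := Set.Finite.image2 (fun (p : Fin l × T) (g : Fin l → MonoidAlgebra ℤ T) =>
        g + tm p.1 p.2) hP ih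
      have h2 := Set.Finite.image2 (fun (p : Fin l × T) (g : Fin l → MonoidAlgebra ℤ T) =>
        g - tm p.1 p.2) hP ih
      refine ((h1.union h2).union ih).subset ?_
      rintro g ⟨hg, hg2⟩
      by_cases h : ∃ k t, (g k).coeff t ≠ 0
      · obtain ⟨k, t, hkt⟩ := h
        have ht := hg2.supp k t hkt
        have hts : TS len R (tm k t) 1 := by simpa using (TS.zero (l := l)).add k t ht
        rcases tn_sub_tm g k t hkt with h | h
        · refine Or.inl (Or.inl ⟨(k, t), ⟨trivial, ht⟩, g - tm k t, ⟨by omega, ?_⟩, by simp⟩)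
          have := hg2.plus hts.neg
          rw [← sub_eq_add_neg] at this
          exact TS.of _ _ (by omega) this.supp
        · refine Or.inl (Or.inr ⟨(k, t), ⟨trivial, ht⟩, g + tm k t, ⟨by omega, ?_⟩, by simp⟩)
          have := hg2.plus hts
          exact TS.of _ _ (by omega) this.supp
      · right
        push Not at h
        have : g = 0 := funext fun k => MonoidAlgebra.ext (Finsupp.ext fun t => h k t)
        rw [this]; exact ⟨by simp [tn, ringNorm_zero], TS.zero.mono (Nat.zero_le _)⟩
  exact (this N).subset fun g hg => ⟨hg.norm, hg⟩

theorem TS.modNorm {q : ℕ} {gens : Fin q → T} {g : Fin l → MonoidAlgebra ℤ T} {N : ℕ}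
    (h : TS (wordLen gens) R g N) : modNorm gens g ≤ N * (1 + 2 * R) := by
  refine le_trans ?_ (Nat.mul_le_mul_right _ h.norm)
  unfold _root_.modNorm tn ringNorm
  rw [Finset.sum_mul]
  refine Finset.sum_le_sum fun k _ => ?_
  rw [Finset.sum_mul]
  refine Finset.sum_le_sum fun t ht => ?_
  have h0 : (g k).coeff t ≠ 0 := by simpa using ht
  have h1 := h.supp k t h0
  have h2 : 1 ≤ ((g k).coeff t).natAbs := by omega
  nlinarith

theorem TS.of_modNorm {q : ℕ} {gens : Fin q → T} {g : Fin l → MonoidAlgebra ℤ T} {n : ℕ}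
    (h : _root_.modNorm gens g ≤ n) : TS (wordLen gens) n g n := by
  refine TS.of _ _ (le_trans ?_ h) fun k t ht => le_trans ?_ h
  · unfold tn ringNorm _root_.modNorm
    exact Finset.sum_le_sum fun k _ => Finset.sum_le_sum fun t _ => Nat.le_add_right _ _
  · unfold _root_.modNorm
    refine le_trans ?_ (Finset.single_le_sum (f := fun k => ∑ t ∈ (g k).coeff.support,
      (((g k).coeff t).natAbs + 2 * wordLen gens t))
      (fun _ _ => Nat.zero_le _) (Finset.mem_univ k))
    refine le_trans ?_ (Finset.single_le_sum (f := fun t =>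
      (((g k).coeff t).natAbs + 2 * wordLen gens t))
      (fun _ _ => Nat.zero_le _) (a := t) (by simpa using ht))
    omega

end TSsec
set_option linter.unusedVariables false
set_option linter.unusedSectionVars false
set_option linter.unusedSimpArgs false

section trunc
variable {T : Type*} [CommGroup T]

theorem coeff_comb {m l : ℕ} (α : Fin l → MonoidAlgebra ℤ T)
    (f : Fin l → (Fin m → MonoidAlgebra ℤ T)) (k : Fin m) (u : T)
    (h : ((∑ i, α i • f i) k).coeff u ≠ 0) :
    ∃ i s t, (α i).coeff s ≠ 0 ∧ (f i k).coeff t ≠ 0 ∧ s * t = u := by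
  classical
  rw [Finset.sum_apply, MonoidAlgebra.coeff_sum, Finsupp.finsetSum_apply] at h
  obtain ⟨i, _, hi⟩ := Finset.exists_ne_zero_of_sum_ne_zero h
  have hi' : u ∈ (α i * f i k).coeff.support := by simpa using hi
  have := MonoidAlgebra.support_coeff_mul_subset _ _ hi'
  obtain ⟨s, hs, t, ht, hst⟩ := Finset.mem_mul.1 this
  exact ⟨i, s, t, by simpa using hs, by simpa using ht, hst⟩

theorem truncation {m l : ℕ} (len : T → ℕ) (hlen : ∀ s t, len (s * t) ≤ len s + len t)
    (hinv : ∀ t, len t⁻¹ ≤ len t)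
    (f : Fin l → (Fin m → MonoidAlgebra ℤ T)) (c : ℕ)
    (hf : ∀ i k t, (f i k).coeff t ≠ 0 → len t ≤ c)
    (g : Fin m → MonoidAlgebra ℤ T) (R : ℕ) (hg : ∀ k t, (g k).coeff t ≠ 0 → len t ≤ R)
    (α : Fin l → MonoidAlgebra ℤ T) (hα : g = ∑ i, α i • f i) (D : ℕ) (hD : tn α ≤ D) :
    ∃ α' : Fin l → MonoidAlgebra ℤ T, g = ∑ i, α' i • f i ∧ TS len (R + 2 * c * D) α' D := by
  classical
  let s : Finset (Σ _ : Fin l, T) := Finset.univ.sigma fun i => (α i).coeff.support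
  have hs : s.card ≤ D := by
    refine le_trans ?_ hD
    unfold tn ringNorm
    rw [Finset.card_sigma]
    refine Finset.sum_le_sum fun i _ => ?_
    rw [Finset.card_eq_sum_ones]
    refine Finset.sum_le_sum fun t ht => ?_
    have : (α i).coeff t ≠ 0 := by simpa using ht
    omega
  let φ : (Σ _ : Fin l, T) → ℕ := fun p => (len p.2 - R - 1) / (2 * c)
  have hcard : (s.image φ).card < (Finset.range (D + 1)).card := by
    rw [Finset.card_range]
    exact lt_of_le_of_lt Finset.card_image_le (by omega)
  obtain ⟨k, hk, hk'⟩ := Finset.exists_mem_notMem_of_card_lt_card hcard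
  have hkD : k ≤ D := by have := Finset.mem_range.1 hk; omega
  set r := R + 2 * c * k with hr
  have hgap : ∀ i t, (α i).coeff t ≠ 0 → r < len t → r + 2 * c < len t := by
    intro i t ht h1
    by_contra h2
    apply hk'
    refine Finset.mem_image.2 ⟨⟨i, t⟩, ?_, ?_⟩
    · simpa [s] using ht
    · show (len t - R - 1) / (2 * c) = k
      have e : len t - R - 1 = (len t - r - 1) + (2 * c) * k := by omega
      have hc : 0 < 2 * c := by omega
      rw [e, Nat.add_mul_div_left _ _ hc, Nat.div_eq_of_lt (by omega)]; simp
  let α' : Fin l → MonoidAlgebra ℤ T := fun i =>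
    MonoidAlgebra.ofCoeff ((α i).coeff.filter fun t => len t ≤ r)
  have c1 : ∀ i t, (α' i).coeff t = if len t ≤ r then (α i).coeff t else 0 := by
    intro i t
    simp only [α', MonoidAlgebra.coeff_ofCoeff, Finsupp.filter_apply]
  have hsum : g = ∑ i, α' i • f i + ∑ i, (α - α') i • f i := by
    rw [hα, ← Finset.sum_add_distrib]
    refine Finset.sum_congr rfl fun i _ => ?_
    rw [← add_smul]; simp
  have hG1 : ∀ k u, ((∑ i, α' i • f i) k).coeff u ≠ 0 → len u ≤ r + c := by
    intro k u hu
    obtain ⟨i, s, t, h1, h2, rfl⟩ := coeff_comb α' f k u hu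
    rw [c1] at h1
    have h3 : len s ≤ r := by by_contra h; simp [h] at h1
    have := hlen s t
    have := hf i k t h2
    omega
  have hG2 : ∀ k u, ((∑ i, (α - α') i • f i) k).coeff u ≠ 0 → r + c < len u := by
    intro k u hu
    obtain ⟨i, s, t, h1, h2, rfl⟩ := coeff_comb (α - α') f k u hu
    have h1' : (α i).coeff s - (α' i).coeff s ≠ 0 := by simpa using h1
    rw [c1] at h1'
    have h3 : ¬ len s ≤ r := by intro h; simp [h] at h1'
    have h4 : (α i).coeff s ≠ 0 := by simpa [h3] using h1'
    have h5 := hgap i s h4 (by omega)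
    have h6 := hlen (s * t) t⁻¹
    rw [mul_inv_cancel_right] at h6
    have := hinv t
    have := hf i k t h2
    omega
  have hz : ∑ i, (α - α') i • f i = 0 := by
    funext k
    refine MonoidAlgebra.ext (Finsupp.ext fun u => ?_)
    by_contra hu
    have h1 := hG2 k u hu
    have h2 : ((∑ i, α' i • f i) k).coeff u = 0 := by
      by_contra h; have := hG1 k u h; omega
    have h3 : (g k).coeff u = 0 := by
      by_contra h; have := hg k u h; omega
    apply hu
    rw [hsum] at h3
    simp only [Pi.add_apply, MonoidAlgebra.coeff_add, Finsupp.add_apply, h2, zero_add] at h3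
    exact h3
  refine ⟨α', by rw [hsum, hz, add_zero], TS.of _ _ ?_ ?_⟩
  · refine le_trans ?_ hD
    unfold tn
    refine Finset.sum_le_sum fun i _ => ?_
    rw [ringNorm_eq_sum (α' i) (α i).coeff.support (fun t ht => by
      have h0 : (α' i).coeff t ≠ 0 := by simpa using ht
      rw [c1] at h0
      have h1 : (α i).coeff t ≠ 0 := by intro h; simp [h] at h0
      simpa using h1)]
    unfold ringNorm
    refine Finset.sum_le_sum fun t _ => ?_
    rw [c1]; split_ifs <;> simp
  · intro i t ht
    rw [c1] at ht
    have h3 : len t ≤ r := by by_contra h; simp [h] at ht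
    refine h3.trans ?_
    rw [hr]
    gcongr

end trunc
open scoped commutatorElement
set_option linter.unusedVariables false
set_option linter.unusedSectionVars false
set_option linter.unusedSimpArgs false

section main
variable {H : Type*} [Group H] {T : Type*} [CommGroup T]

theorem exists_chom (hH : IsMetabelian H) {m : ℕ} (y : Fin m → T → H)
    (hy : ∀ k t, y k t ∈ commutator H) :
    ∃ c : (Fin m → MonoidAlgebra ℤ T) → H, (∀ g, c g ∈ commutator H) ∧
      (∀ g g', c (g + g') = c g * c g') ∧ ∀ k t, c (tm k t) = y k t := by
  classical
  let _ : CommGroup (commutator H) :=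
    { (inferInstance : Group (commutator H)) with
      mul_comm := fun a b => Subtype.ext (hH a b a.2 b.2) }
  let Y : Fin m → T → Additive (commutator H) := fun k t => Additive.ofMul ⟨y k t, hy k t⟩
  let c0 : (Fin m → MonoidAlgebra ℤ T) → Additive (commutator H) := fun g =>
    ∑ k, (g k).coeff.sum fun t z => z • Y k t
  have hadd : ∀ g g', c0 (g + g') = c0 g + c0 g' := by
    intro g g'
    simp only [c0]
    rw [← Finset.sum_add_distrib]
    refine Finset.sum_congr rfl fun k _ => ?_
    rw [Pi.add_apply, MonoidAlgebra.coeff_add]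
    exact Finsupp.sum_add_index' (fun t => zero_smul _ _) (fun t a b => add_smul _ _ _)
  refine ⟨fun g => ((Additive.toMul (c0 g) : commutator H) : H), fun g => Subtype.property _,
    fun g g' => ?_, fun k t => ?_⟩
  · show ((Additive.toMul (c0 (g + g')) : commutator H) : H) = _
    rw [hadd]; rfl
  · have : c0 (tm k t) = Y k t := by
      simp only [c0, tm]
      rw [Finset.sum_eq_single k]
      · simp
      · intro j _ hj; simp [hj]
      · simp
    show ((Additive.toMul (c0 (tm k t)) : commutator H) : H) = _
    rw [this]; rfl

/-- augmentation -/
noncomputable def aug {m : ℕ} (g : Fin m → MonoidAlgebra ℤ T) : Fin m → ℤ :=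
  fun k => (g k).coeff.sum fun _ z => z

theorem aug_add {m : ℕ} (g g' : Fin m → MonoidAlgebra ℤ T) : aug (g + g') = aug g + aug g' := by
  classical
  funext k
  simp only [aug, Pi.add_apply, MonoidAlgebra.coeff_add]
  exact Finsupp.sum_add_index' (fun t => rfl) (fun t a b => rfl)

theorem aug_tm {m : ℕ} (k : Fin m) (t : T) : aug (tm k t) = Pi.single k 1 := by
  funext j
  by_cases hj : j = k
  · subst hj; simp [aug, tm]
  · simp [aug, tm, hj]

theorem vn_aug {m : ℕ} (g : Fin m → MonoidAlgebra ℤ T) :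
    vn (List.finRange m) (aug g) ≤ tn g := by
  unfold vn tn
  rw [← Fin.sum_univ_def]
  refine Finset.sum_le_sum fun k _ => ?_
  simp only [aug, Finsupp.sum, ringNorm]
  exact Int.natAbs_sum_le _ _

theorem pw_zero {J : Type*} (x : J → H) (l : List J) : pw x l 0 = 1 := by
  induction l with
  | nil => simp [pw]
  | cons j l ih => simpa [pw] using ih

theorem pw_single {J : Type*} [DecidableEq J] (x : J → H) (l : List J) (hl : l.Nodup) (k : J) :
    pw x l (Pi.single k 1) = if k ∈ l then x k else 1 := by
  induction l with
  | nil => simp [pw]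
  | cons j l ih =>
    have h1 := ih (List.nodup_cons.1 hl).2
    have e : pw x (j :: l) (Pi.single k 1) = x j ^ (Pi.single k (1 : ℤ) : J → ℤ) j
      * pw x l (Pi.single k 1) := by simp [pw]
    rw [e, h1]
    by_cases hj : k = j
    · subst hj
      simp [(List.nodup_cons.1 hl).1]
    · simp [hj, Ne.symm hj]

/-- the word representing a module element -/
noncomputable def EE {m : ℕ} (x : Fin m → H) (c : (Fin m → MonoidAlgebra ℤ T) → H)
    (g : Fin m → MonoidAlgebra ℤ T) : H := pw x (List.finRange m) (aug g) * c g

/-- The working hypotheses. -/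
structure Dat (B : H → ℕ → Prop) (len : T → ℕ) {m : ℕ} (x : Fin m → H) (σ : T → H)
    (c : (Fin m → MonoidAlgebra ℤ T) → H) (C : ℕ) : Prop where
  hB : Cost B
  hlen : ∀ s t, len (s * t) ≤ len s + len t
  hinv : ∀ t, len t⁻¹ ≤ len t
  h1 : ∀ s t, DD B (σ s * σ t) (σ (s * t)) (C * (len s * len t + 1))
  h2 : ∀ i k t, KK B (x i) ⁅(x k)⁻¹, σ t⁆ (C * (len t + 1))
  h3 : ∀ i j, KK B (x i) (x j) C
  cadd : ∀ g g', c (g + g') = c g * c g'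
  ctm : ∀ k t, c (tm k t) = ⁅(x k)⁻¹, σ t⁆

variable {B : H → ℕ → Prop} {len : T → ℕ} {m : ℕ} {x : Fin m → H} {σ : T → H}
    {c : (Fin m → MonoidAlgebra ℤ T) → H} {C : ℕ}

theorem Dat.czero (d : Dat B len x σ c C) : c 0 = 1 := by
  have := d.cadd 0 0
  simpa using this

theorem Dat.cneg (d : Dat B len x σ c C) (g) : c (-g) = (c g)⁻¹ := by
  have := d.cadd g (-g)
  rw [add_neg_cancel, d.czero] at this
  exact (inv_eq_of_mul_eq_one_right this.symm).symm

theorem Dat.csub (d : Dat B len x σ c C) (g g') : c (g - g') = c g * (c g')⁻¹ := by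
  rw [sub_eq_add_neg, d.cadd, d.cneg]

theorem Dat.ccost (d : Dat B len x σ c C) {R N : ℕ} {g} (h : TS len R g N) (j : Fin m) :
    KK B (c g) (x j) (N * (C * (R + 1))) := by
  induction h with
  | zero => rw [d.czero]; simpa using KK.one_left d.hB _
  | @add g N k t _ ht ih =>
    rw [d.cadd, d.ctm, add_mul, one_mul]
    exact ih.mul_left d.hB (((d.h2 j k t).symm d.hB).mono d.hB (by gcongr))
  | @sub g N k t _ ht ih =>
    rw [d.csub, d.ctm, add_mul, one_mul]
    exact ih.mul_left d.hB ((((d.h2 j k t).symm d.hB).inv_left d.hB).mono d.hB (by gcongr))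
  | mono _ hN ih => exact ih.mono d.hB (by gcongr)

theorem Dat.Ezero (d : Dat B len x σ c C) : EE x c 0 = 1 := by
  have : aug (0 : Fin m → MonoidAlgebra ℤ T) = 0 := by funext k; simp [aug]
  rw [EE, this, d.czero, pw_zero, one_mul]

theorem Dat.Etm (d : Dat B len x σ c C) (k : Fin m) (t : T) :
    EE x c (tm k t) = σ t * x k * (σ t)⁻¹ := by
  rw [EE, aug_tm, d.ctm, pw_single _ _ (List.nodup_finRange m)]
  simp [commutatorElement_def, mul_assoc]

theorem Dat.Eadd (d : Dat B len x σ c C) {R R' N N' : ℕ} {g g'} (h : TS len R g N)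
    (h' : TS len R' g' N') :
    DD B (EE x c g * EE x c g') (EE x c (g + g')) (N * N' * C * (R + 2)) := by
  have n1 : vn (List.finRange m) (aug g) ≤ N := (vn_aug g).trans h.norm
  have n2 : vn (List.finRange m) (aug g') ≤ N' := (vn_aug g').trans h'.norm
  set p := pw x (List.finRange m) (aug g) with hp
  set p' := pw x (List.finRange m) (aug g') with hp'
  have k1 : KK B p' (c g) (vn (List.finRange m) (aug g') * (N * (C * (R + 1)))) :=
    pw_left d.hB x _ _ (fun j => (d.ccost h j).symm d.hB) _ _
  have k2 := (((k1.symm d.hB).swap d.hB).mul_left d.hB p).mul_right d.hB (c g')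
  have k3 := (pw_add d.hB x C d.h3 (List.finRange m) (aug g) (aug g')).mul_right d.hB (c g * c g')
  have e1 : EE x c g * EE x c g' = p * (c g * p') * c g' := by simp [EE, hp, hp', mul_assoc]
  have e2 : EE x c (g + g') = pw x (List.finRange m) (aug g + aug g') * (c g * c g') := by
    simp [EE, aug_add, d.cadd]
  have e3 : p * (p' * c g) * c g' = p * p' * (c g * c g') := by simp [mul_assoc]
  rw [e1, e2]
  rw [e3] at k2
  refine (k2.trans d.hB k3).mono d.hB ?_
  calc _ ≤ N' * (N * (C * (R + 1))) + N * N' * C := by gcongr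
    _ = _ := by ring

theorem Dat.Eneg (d : Dat B len x σ c C) {R N : ℕ} {g} (h : TS len R g N) :
    DD B (EE x c (-g)) (EE x c g)⁻¹ (N * N * C * (R + 2)) := by
  have := (d.Eadd h h.neg).mul_left d.hB (EE x c g)⁻¹
  rw [add_neg_cancel, d.Ezero] at this
  simpa using this

/-- near-equivariance -/
def PB (B : H → ℕ → Prop) (len : T → ℕ) {m : ℕ} (x : Fin m → H) (σ : T → H)
    (c : (Fin m → MonoidAlgebra ℤ T) → H) (g : Fin m → MonoidAlgebra ℤ T) : Prop :=
  ∃ K, ∀ s, DD B (EE x c (MonoidAlgebra.single s (1 : ℤ) • g)) (σ s * EE x c g * (σ s)⁻¹)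
    (K * (len s + 1))

theorem Dat.PB_add (d : Dat B len x σ c C) {g g'} (h : PB B len x σ c g) (h' : PB B len x σ c g') :
    PB B len x σ c (g + g') := by
  obtain ⟨K, hK⟩ := h
  obtain ⟨K', hK'⟩ := h'
  obtain ⟨R, N, hg⟩ := TS.exists (len := len) g
  obtain ⟨R', N', hg'⟩ := TS.exists (len := len) g'
  refine ⟨N * N' * C * (R + 2) + (K + K') + N * N' * C * (R + 2), fun s => ?_⟩
  rw [smul_add]
  have a1 := (d.Eadd (hg.smul d.hlen s) (hg'.smul d.hlen s)).symm d.hB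
  have a2 := (hK s).mul d.hB (hK' s)
  have a3 := ((d.Eadd hg hg').mul_left d.hB (σ s)).mul_right d.hB (σ s)⁻¹
  have e : σ s * EE x c g * (σ s)⁻¹ * (σ s * EE x c g' * (σ s)⁻¹) =
    σ s * (EE x c g * EE x c g') * (σ s)⁻¹ := by group
  rw [e] at a2
  refine ((a1.trans d.hB a2).trans d.hB a3).mono d.hB ?_
  have : N * N' * C * (R + len s + 2) ≤ N * N' * C * (R + 2) * (len s + 1) := by
    rw [mul_assoc (N * N' * C)]
    gcongr
    nlinarith [Nat.zero_le (R * len s)]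
  nlinarith [Nat.zero_le (N * N' * C * (R + 2) * len s)]

theorem Dat.PB_neg (d : Dat B len x σ c C) {g} (h : PB B len x σ c g) :
    PB B len x σ c (-g) := by
  obtain ⟨K, hK⟩ := h
  obtain ⟨R, N, hg⟩ := TS.exists (len := len) g
  refine ⟨N * N * C * (R + 2) + K + N * N * C * (R + 2), fun s => ?_⟩
  rw [smul_neg]
  have a1 := (d.Eneg (hg.smul d.hlen s))
  have a2 := (hK s).inv d.hB
  have a3 := (((d.Eneg hg).mul_left d.hB (σ s)).mul_right d.hB (σ s)⁻¹).symm d.hB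
  have e : (σ s * EE x c g * (σ s)⁻¹)⁻¹ = σ s * (EE x c g)⁻¹ * (σ s)⁻¹ := by group
  rw [e] at a2
  refine ((a1.trans d.hB a2).trans d.hB a3).mono d.hB ?_
  have : N * N * C * (R + len s + 2) ≤ N * N * C * (R + 2) * (len s + 1) := by
    rw [mul_assoc (N * N * C)]
    gcongr
    nlinarith [Nat.zero_le (R * len s)]
  nlinarith [Nat.zero_le (N * N * C * (R + 2) * len s)]

theorem Dat.PB_tm (d : Dat B len x σ c C) (k : Fin m) (t : T) : PB B len x σ c (tm k t) := by
  refine ⟨2 * C * (len t + 1), fun s => ?_⟩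
  rw [smul_tm, d.Etm, d.Etm]
  have a := (d.h1 s t).symm d.hB
  have b := (a.mul_right d.hB (x k)).mul d.hB (a.inv d.hB)
  have e : σ s * σ t * x k * (σ s * σ t)⁻¹ = σ s * (σ t * x k * (σ t)⁻¹) * (σ s)⁻¹ := by group
  rw [e] at b
  refine b.mono d.hB ?_
  nlinarith [Nat.zero_le (C * len t), Nat.zero_le (C * len s)]

theorem Dat.PB_all (d : Dat B len x σ c C) (g) : PB B len x σ c g := by
  obtain ⟨R, N, hg⟩ := TS.exists (len := len) g
  induction hg with
  | zero =>
    refine ⟨0, fun s => ?_⟩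
    rw [smul_zero, d.Ezero]
    simpa using DD.refl d.hB 1
  | add k t _ _ ih => exact d.PB_add ih (d.PB_tm k t)
  | sub k t _ _ ih => rw [sub_eq_add_neg]; exact d.PB_add ih (d.PB_neg (d.PB_tm k t))
  | mono _ _ ih => exact ih

theorem exists_bound {l : ℕ} {P : Fin l → ℕ → Prop} (hP : ∀ i a b, P i a → a ≤ b → P i b)
    (h : ∀ i, ∃ a, P i a) : ∃ a, ∀ i, P i a := by
  choose f hf using h
  exact ⟨∑ i, f i, fun i => hP i _ _ (hf i)
    (Finset.single_le_sum (fun _ _ => Nat.zero_le _) (Finset.mem_univ i))⟩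

theorem comb_add {l : ℕ} (f : Fin l → (Fin m → MonoidAlgebra ℤ T)) (α : Fin l → MonoidAlgebra ℤ T)
    (i : Fin l) (s : T) : ∑ j, (α + tm i s) j • f j
      = ∑ j, α j • f j + MonoidAlgebra.single s (1 : ℤ) • f i := by
  simp only [Pi.add_apply, add_smul, Finset.sum_add_distrib]
  congr 1
  rw [Finset.sum_eq_single i]
  · simp [tm]
  · intro j _ hj; simp [tm, hj]
  · simp

theorem comb_sub {l : ℕ} (f : Fin l → (Fin m → MonoidAlgebra ℤ T)) (α : Fin l → MonoidAlgebra ℤ T)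
    (i : Fin l) (s : T) : ∑ j, (α - tm i s) j • f j
      = ∑ j, α j • f j + -(MonoidAlgebra.single s (1 : ℤ) • f i) := by
  have := comb_add f (α - tm i s) i s
  rw [sub_add_cancel] at this
  rw [this]; simp

theorem Dat.comb (d : Dat B len x σ c C) {l : ℕ} (f : Fin l → (Fin m → MonoidAlgebra ℤ T))
    (hf : ∀ i, ∃ b, B (EE x c (f i)) b) :
    ∃ K, ∀ R N (α : Fin l → MonoidAlgebra ℤ T), TS len R α N →
      B (EE x c (∑ i, α i • f i)) (K * (N * N * (R + 1))) := by
  obtain ⟨b, hb⟩ := exists_bound (P := fun i b => B (EE x c (f i)) b)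
    (fun i a b h hab => d.hB.mono h hab) hf
  obtain ⟨M, hM⟩ : ∃ M, ∀ i, TS len M (f i) M :=
    exists_bound (fun i a b h hab => (h.mono hab).monoR hab) fun i => by
      obtain ⟨R, N, h⟩ := TS.exists (len := len) (f i)
      exact ⟨R + N, (h.mono (Nat.le_add_left _ _)).monoR (Nat.le_add_right _ _)⟩
  obtain ⟨Q, hQ⟩ : ∃ K, ∀ i s, DD B (EE x c (MonoidAlgebra.single s (1 : ℤ) • f i))
      (σ s * EE x c (f i) * (σ s)⁻¹) (K * (len s + 1)) :=
    exists_bound (fun i a b h hab s => (h s).mono d.hB (by gcongr)) fun i => d.PB_all (f i)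
  have hterm : ∀ R i s, len s ≤ R → B (EE x c (MonoidAlgebra.single s (1 : ℤ) • f i))
      ((Q + b) * (R + 1)) := by
    intro R i s hs
    refine d.hB.mono ((hQ i s).cost d.hB (d.hB.conj (σ s) (hb i))) ?_
    have : Q * (len s + 1) ≤ Q * (R + 1) := by gcongr
    nlinarith [Nat.zero_le (b * R)]
  refine ⟨2 * (M * M * C * (M + 2)) + (Q + b), fun R N α hα => ?_⟩
  suffices h : TS len (M + R) (∑ i, α i • f i) (N * M) ∧
      B (EE x c (∑ i, α i • f i))
        ((2 * (M * M * C * (M + 2)) + (Q + b)) * (N * N * (R + 1))) from h.2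
  set Z := M * M * C * (M + 2) with hZ
  have hZb : M * M * C * (M + R + 2) ≤ Z * (R + 1) := by
    rw [hZ, mul_assoc (M * M * C)]
    gcongr
    nlinarith [Nat.zero_le (M * R)]
  induction hα with
  | zero =>
    refine ⟨by simpa using TS.zero, ?_⟩
    simpa [d.Ezero] using d.hB.one
  | @add α N i s _ hs ih =>
    have t1 : TS len (M + R) (MonoidAlgebra.single s (1 : ℤ) • f i) M :=
      ((hM i).smul d.hlen s).monoR (by omega)
    rw [comb_add, add_mul, one_mul]
    refine ⟨ih.1.plus t1, ?_⟩
    have a := ((d.Eadd ih.1 t1).symm d.hB).cost d.hB (d.hB.mul ih.2 (hterm R i s hs))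
    refine d.hB.mono a ?_
    have : N * M * M * C * (M + R + 2) ≤ N * (Z * (R + 1)) := by
      calc _ = N * (M * M * C * (M + R + 2)) := by ring
        _ ≤ _ := by gcongr
    nlinarith [Nat.zero_le (N * (Z * (R + 1))), Nat.zero_le (Z * (R + 1)),
      Nat.zero_le ((Q + b) * (N * (R + 1)))]
  | @sub α N i s _ hs ih =>
    have t1 : TS len (M + R) (MonoidAlgebra.single s (1 : ℤ) • f i) M :=
      ((hM i).smul d.hlen s).monoR (by omega)
    rw [comb_sub, add_mul, one_mul]
    refine ⟨ih.1.plus t1.neg, ?_⟩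
    have a0 := (d.Eneg t1).cost d.hB (d.hB.inv (hterm R i s hs))
    have a := ((d.Eadd ih.1 t1.neg).symm d.hB).cost d.hB (d.hB.mul ih.2 a0)
    refine d.hB.mono a ?_
    have : N * M * M * C * (M + R + 2) ≤ N * (Z * (R + 1)) := by
      calc _ = N * (M * M * C * (M + R + 2)) := by ring
        _ ≤ _ := by gcongr
    nlinarith [Nat.zero_le (N * (Z * (R + 1))), Nat.zero_le (Z * (R + 1)),
      Nat.zero_le ((Q + b) * (N * (R + 1)))]
  | mono _ hN ih =>
    refine ⟨ih.1.mono (by gcongr), d.hB.mono ih.2 (by gcongr)⟩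

/-- evaluation of a word -/
def evw {J : Type*} (y : J → H) (L : List (J × Bool)) : H :=
  (L.map fun p => cond p.2 (y p.1) (y p.1)⁻¹).prod

theorem TS.tm {R : ℕ} (k : Fin m) (t : T) (ht : len t ≤ R) : TS len R (tm k t) 1 := by
  have := TS.add (len := len) (R := R) k t TS.zero ht
  simpa using this

theorem Dat.words (d : Dat B len x σ c C) (hl1 : len 1 = 0) (y : Fin m → H) (τ : Fin m → T)
    (hy : ∀ k, y k = x k * σ (τ k)) :
    ∃ K, ∀ L : List (Fin m × Bool), ∃ g t, TS len (K * L.length) g L.length ∧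
      DD B (evw y L) (EE x c g * σ t) (K * L.length ^ 3 + C) := by
  obtain ⟨k0, hk0⟩ : ∃ k0, ∀ k, len (τ k) ≤ k0 :=
    exists_bound (P := fun k b => len (τ k) ≤ b) (fun i a b h hab => h.trans hab)
      fun k => ⟨_, le_rfl⟩
  have hσ1 : DD B 1 (σ 1) C := by
    have := (d.h1 1 1).mul_right d.hB (σ 1)⁻¹
    rw [mul_one] at this
    simpa [hl1] using this.symm d.hB
  set Q := 10 * C * (k0 + 1) ^ 2 with hQ
  suffices h : ∀ L : List (Fin m × Bool), ∃ g t, TS len (k0 * L.length) g L.length ∧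
      len t ≤ k0 * L.length ∧
      DD B (evw y L) (EE x c g * σ t) (Q * L.length ^ 3 + C) by
    refine ⟨Q + k0, fun L => ?_⟩
    obtain ⟨g, t, h1, h2, h3⟩ := h L
    refine ⟨g, t, h1.monoR (by gcongr; omega), h3.mono d.hB (by gcongr; omega)⟩
  intro L
  induction L using List.reverseRecOn with
  | nil =>
    refine ⟨0, 1, by simpa using TS.zero, by simp [hl1], ?_⟩
    rw [d.Ezero]
    simpa [evw] using hσ1
  | append_singleton L p ih =>
    obtain ⟨g, t, hg, ht, hd⟩ := ih
    obtain ⟨k, b⟩ := p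
    rw [List.length_append, List.length_singleton]
    set n := L.length with hn
    have hev : evw y (L ++ [(k, b)]) = evw y L * cond b (y k) (y k)⁻¹ := by simp [evw]
    rw [hev]
    have hR : k0 * n ≤ k0 * (n + 1) := by gcongr; omega
    have hcube : Q * n ^ 3 + Q * (n + 1) ^ 2 ≤ Q * (n + 1) ^ 3 := by
      rw [← mul_add]
      gcongr
      nlinarith [Nat.zero_le n]
    cases b with
    | true =>
      have e : EE x c g * σ t * y k = (EE x c g * EE x c (tm k t)) * (σ t * σ (τ k)) := by
        rw [d.Etm, hy]; group
      have a0 := hd.mul_right d.hB (y k)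
      have a1 := (d.Eadd hg (TS.tm k t ht)).mul d.hB (d.h1 t (τ k))
      rw [e] at a0
      refine ⟨g + tm k t, t * τ k, TS.add k t (hg.monoR hR) (ht.trans hR), ?_,
        (a0.trans d.hB a1).mono d.hB ?_⟩
      · have := d.hlen t (τ k); have := hk0 k; rw [mul_add]; omega
      · have h1 : len t * len (τ k) ≤ k0 * n * k0 := Nat.mul_le_mul ht (hk0 k)
        have h2 : n * 1 * C * (k0 * n + 2) + C * (len t * len (τ k) + 1) ≤ Q * (n + 1) ^ 2 := by
          calc _ ≤ n * 1 * C * (k0 * n + 2) + C * (k0 * n * k0 + 1) := by gcongr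
            _ = C * (n * (k0 * n + 2) + (k0 * n * k0 + 1)) := by ring
            _ ≤ C * (10 * (k0 + 1) ^ 2 * (n + 1) ^ 2) := by
              gcongr
              ring_nf
              have := Nat.zero_le (k0 * n); have := Nat.zero_le (k0 * n ^ 2)
              have := Nat.zero_le (k0 ^ 2 * n); have := Nat.zero_le (k0 ^ 2 * n ^ 2)
              have := Nat.zero_le (k0 ^ 2); have := Nat.zero_le (n ^ 2)
              omega
            _ = _ := by rw [hQ]; ring
        omega
    | false =>
      set s := t * (τ k)⁻¹ with hs
      have hls : len s ≤ k0 * (n + 1) := by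
        have h := d.hlen t (τ k)⁻¹
        rw [← hs] at h
        have := d.hinv (τ k); have := hk0 k; rw [mul_add]; omega
      have hst : s * τ k = t := by simp [hs]
      have htm : TS len (k0 * (n + 1)) (tm k s) 1 := TS.tm k s hls
      have a0 := hd.mul_right d.hB (y k)⁻¹
      have b1 := ((d.h1 s (τ k)).symm d.hB).mul_right d.hB (y k)⁻¹
      rw [hst] at b1
      have e1 : σ s * σ (τ k) * (y k)⁻¹ = (EE x c (tm k s))⁻¹ * σ s := by
        rw [d.Etm, hy]; group
      rw [e1] at b1
      have b2 := (b1.trans d.hB (((d.Eneg htm).symm d.hB).mul_right d.hB (σ s))).mul_left d.hB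
        (EE x c g)
      have b3 := (d.Eadd hg htm.neg).mul_right d.hB (σ s)
      rw [mul_assoc] at b3
      rw [← sub_eq_add_neg] at b3
      rw [mul_assoc] at a0
      refine ⟨g - tm k s, s, TS.sub k s (hg.monoR hR) hls, hls,
        ((a0.trans d.hB b2).trans d.hB b3).mono d.hB ?_⟩
      have h1 : len s * len (τ k) ≤ k0 * (n + 1) * k0 := Nat.mul_le_mul hls (hk0 k)
      have h2 : C * (len s * len (τ k) + 1) + 1 * 1 * C * (k0 * (n + 1) + 2)
          + n * 1 * C * (k0 * n + 2) ≤ Q * (n + 1) ^ 2 := by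
        calc _ ≤ C * (k0 * (n + 1) * k0 + 1) + 1 * 1 * C * (k0 * (n + 1) + 2)
              + n * 1 * C * (k0 * n + 2) := by gcongr
          _ = C * ((k0 * (n + 1) * k0 + 1) + (k0 * (n + 1) + 2) + n * (k0 * n + 2)) := by ring
          _ ≤ C * (10 * (k0 + 1) ^ 2 * (n + 1) ^ 2) := by
            gcongr
            ring_nf
            have := Nat.zero_le (k0 * n); have := Nat.zero_le (k0 * n ^ 2)
            have := Nat.zero_le (k0 ^ 2 * n); have := Nat.zero_le (k0 ^ 2 * n ^ 2)
            have := Nat.zero_le (k0 ^ 2); have := Nat.zero_le (n ^ 2)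
            omega
          _ = _ := by rw [hQ]; ring
      omega
end main
open scoped commutatorElement
set_option linter.unusedVariables false
set_option linter.unusedSectionVars false
set_option linter.unusedSimpArgs false

theorem exists_coords (T : Type) [CommGroup T] [Group.FG T] :
    ∃ (J : Type) (_ : Fintype J) (u : J → T) (N : J → ℕ) (v : T → J → ℤ),
      (∀ j, u j ^ N j = 1) ∧ (∀ t, pw u Finset.univ.toList (v t) = t) ∧
      (∀ s t j, v s j + v t j = v (s * t) j ∨ v s j + v t j = v (s * t) j + N j) ∧
      (∀ s t j, (v (s * t) j).natAbs ≤ (v s j).natAbs + (v t j).natAbs) ∧ v 1 = 0 := by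
  classical
  obtain ⟨ι, j, _, _, p, hp, e, ⟨E⟩⟩ := CommGroup.equiv_free_prod_prod_multiplicative_zmod T
  have hne : ∀ i, NeZero (p i ^ e i) := fun i => ⟨pow_ne_zero _ (hp i).ne_zero⟩
  let u : j ⊕ ι → T := Sum.elim (fun a => E.symm (Pi.mulSingle a (Multiplicative.ofAdd 1), 1))
    (fun i => E.symm (1, Pi.mulSingle i (Multiplicative.ofAdd 1)))
  let v : T → j ⊕ ι → ℤ := fun t => Sum.elim (fun a => Multiplicative.toAdd ((E t).1 a))
    (fun i => ((Multiplicative.toAdd ((E t).2 i)).val : ℤ))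
  refine ⟨j ⊕ ι, inferInstance, u, Sum.elim (fun _ => 0) (fun i => p i ^ e i), v, ?_, ?_, ?_, ?_, ?_⟩
  · rintro (a | i)
    · simp
    · apply E.injective
      simp only [u, Sum.elim_inr, map_pow, MulEquiv.apply_symm_apply, map_one]
      ext : 1
      · simp
      · simp only [Prod.pow_snd, Prod.snd_one, ← Pi.mulSingle_pow]
        rw [← ofAdd_nsmul]
        simp
  · intro t
    have : pw u Finset.univ.toList (v t) = ∏ x, u x ^ v t x := by
      unfold pw; exact Finset.prod_map_toList _ _
    rw [this]
    apply E.injective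
    rw [map_prod, Fintype.prod_sum_type]
    simp only [map_zpow, u, v, Sum.elim_inl, Sum.elim_inr, MulEquiv.apply_symm_apply]
    ext b : 2
    · simp only [Prod.fst_mul, Prod.fst_prod, Prod.pow_fst, one_zpow, Finset.prod_const_one, mul_one,
        Finset.prod_apply, Pi.pow_apply]
      rw [Finset.prod_eq_single b]
      · simp [← ofAdd_zsmul]
      · intro a _ hab; simp [hab.symm]
      · simp
    · simp only [Prod.snd_mul, Prod.snd_prod, Prod.pow_snd, one_zpow, Finset.prod_const_one, one_mul,
        Finset.prod_apply, Pi.pow_apply]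
      rw [Finset.prod_eq_single b]
      · simp only [Pi.mulSingle_eq_same, ← ofAdd_zsmul]
        simp
      · intro a _ hab; simp [hab.symm]
      · simp
  · rintro s t (a | i)
    · left; simp [v]
    · simp only [v, Sum.elim_inr, map_mul, Prod.snd_mul, Pi.mul_apply, toAdd_mul]
      have := hne i
      rcases lt_or_ge ((Multiplicative.toAdd ((E s).2 i)).val + (Multiplicative.toAdd ((E t).2 i)).val)
        (p i ^ e i) with h | h
      · left; rw [ZMod.val_add_of_lt h]; push_cast; rfl
      · right; rw [← Nat.cast_add, ZMod.val_add_val_of_le h]; push_cast; ring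
  · rintro s t (a | i)
    · simp only [v, Sum.elim_inl, map_mul, Prod.fst_mul, Pi.mul_apply, toAdd_mul]
      exact Int.natAbs_add_le _ _
    · simp only [v, Sum.elim_inr, map_mul, Prod.snd_mul, Pi.mul_apply, toAdd_mul, Int.natAbs_natCast]
      exact ZMod.val_add_le _ _
  · funext x
    rcases x with a | i <;> simp [v]

section wl
variable {T : Type*} [CommGroup T] {q : ℕ} (gens : Fin q → T)

theorem wl_exists (hgens : Subgroup.closure (Set.range gens) = ⊤) (t : T) :
    ∃ w : FreeGroup (Fin q), FreeGroup.lift gens w = t ∧ freeNorm w = wordLen gens t := by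
  have hne : {n | ∃ w : FreeGroup (Fin q), FreeGroup.lift gens w = t ∧ freeNorm w = n}.Nonempty := by
    have : t ∈ (FreeGroup.lift gens).range := by
      rw [FreeGroup.range_lift_eq_closure, hgens]; trivial
    obtain ⟨w, hw⟩ := this
    exact ⟨_, w, hw, rfl⟩
  exact Nat.sInf_mem hne

theorem wl_le (w : FreeGroup (Fin q)) : wordLen gens (FreeGroup.lift gens w) ≤ freeNorm w :=
  Nat.sInf_le ⟨w, rfl, rfl⟩

theorem freeNorm_eq {X : Type*} [DecidableEq X] (w : FreeGroup X) : freeNorm w = w.norm := by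
  unfold freeNorm FreeGroup.norm
  congr!

theorem wl_one : wordLen gens 1 = 0 := by
  have := wl_le gens 1
  rw [freeNorm_eq] at this
  simpa using this

theorem wl_mul (hgens : Subgroup.closure (Set.range gens) = ⊤) (s t : T) :
    wordLen gens (s * t) ≤ wordLen gens s + wordLen gens t := by
  obtain ⟨w, hw, hw'⟩ := wl_exists gens hgens s
  obtain ⟨z, hz, hz'⟩ := wl_exists gens hgens t
  have := wl_le gens (w * z)
  rw [map_mul, hw, hz] at this
  rw [← hw', ← hz']
  refine this.trans ?_
  rw [freeNorm_eq, freeNorm_eq, freeNorm_eq]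
  exact FreeGroup.norm_mul_le _ _

theorem wl_inv (hgens : Subgroup.closure (Set.range gens) = ⊤) (t : T) :
    wordLen gens t⁻¹ ≤ wordLen gens t := by
  obtain ⟨w, hw, hw'⟩ := wl_exists gens hgens t
  have := wl_le gens w⁻¹
  rw [map_inv, hw, freeNorm_eq, FreeGroup.norm_inv_eq, ← freeNorm_eq, hw'] at this
  exact this

theorem wl_finite (hgens : Subgroup.closure (Set.range gens) = ⊤) (R : ℕ) :
    {t | wordLen gens t ≤ R}.Finite := by
  classical
  refine ((List.finite_length_le (Fin q × Bool) R).image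
    fun L => FreeGroup.lift gens (FreeGroup.mk L)).subset ?_
  intro t ht
  obtain ⟨w, hw, hw'⟩ := wl_exists gens hgens t
  refine ⟨w.toWord, ?_, by simpa [FreeGroup.mk_toWord] using hw⟩
  have : w.norm ≤ R := by rw [← freeNorm_eq, hw']; exact ht
  exact this

/-- any subadditive function is bounded linearly by the word length -/
theorem wl_bound (hgens : Subgroup.closure (Set.range gens) = ⊤) (F : T → ℕ)
    (h1 : F 1 = 0) (hm : ∀ s t, F (s * t) ≤ F s + F t) :
    ∃ M, ∀ t, F t ≤ M * wordLen gens t := by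
  classical
  refine ⟨∑ k, (F (gens k) + F (gens k)⁻¹), fun t => ?_⟩
  set M := ∑ k, (F (gens k) + F (gens k)⁻¹) with hM
  have hk : ∀ k, F (gens k) + F (gens k)⁻¹ ≤ M := fun k =>
    Finset.single_le_sum (f := fun k => F (gens k) + F (gens k)⁻¹)
      (fun _ _ => Nat.zero_le _) (Finset.mem_univ k)
  have key : ∀ L : List (Fin q × Bool), F (FreeGroup.lift gens (FreeGroup.mk L)) ≤ M * L.length := by
    intro L
    induction L with
    | nil => rw [show FreeGroup.mk ([] : List (Fin q × Bool)) = 1 from rfl, map_one, h1]; simp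
    | cons p L ih =>
      have e : FreeGroup.mk (p :: L) = FreeGroup.mk [p] * FreeGroup.mk L := by
        rw [FreeGroup.mul_mk]; rfl
      rw [e, map_mul, List.length_cons, mul_add, mul_one]
      refine (hm _ _).trans ?_
      have : F (FreeGroup.lift gens (FreeGroup.mk [p])) ≤ M := by
        obtain ⟨k, b⟩ := p
        have := hk k
        cases b <;> simp <;> omega
      omega
  obtain ⟨w, hw, hw'⟩ := wl_exists gens hgens t
  have := key w.toWord
  rw [FreeGroup.mk_toWord, hw] at this
  rw [← hw', freeNorm_eq]
  exact this

end wl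
open scoped commutatorElement
set_option linter.unusedVariables false
set_option linter.unusedSectionVars false
set_option linter.unusedSimpArgs false

theorem exists_bound' {J : Type*} [Fintype J] {P : J → ℕ → Prop}
    (hP : ∀ i a b, P i a → a ≤ b → P i b)
    (h : ∀ i, ∃ a, P i a) : ∃ a, ∀ i, P i a := by
  choose f hf using h
  exact ⟨∑ i, f i, fun i => hP i _ _ (hf i)
    (Finset.single_le_sum (fun _ _ => Nat.zero_le _) (Finset.mem_univ i))⟩

theorem map_pw {H G J : Type*} [Group H] [Group G] (ρ : H →* G) (x : J → H) (l : List J)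
    (v : J → ℤ) : ρ (pw x l v) = pw (fun j => ρ (x j)) l v := by
  unfold pw
  rw [map_list_prod, List.map_map]
  congr 1
  refine List.map_congr_left fun j _ => ?_
  simp

theorem vn_le {J : Type*} (l : List J) (v w z : J → ℤ)
    (h : ∀ j, (v j).natAbs ≤ (w j).natAbs + (z j).natAbs) : vn l v ≤ vn l w + vn l z := by
  induction l with
  | nil => simp [vn]
  | cons j l ih =>
    simp only [vn, List.map_cons, List.sum_cons] at ih ⊢
    have := h j
    omega

theorem semidirect_comm {N T : Type*} [CommGroup N] [CommGroup T] (φ : T →* MulAut N)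
    (a b : SemidirectProduct N T φ) (ha : a ∈ commutator (SemidirectProduct N T φ)) : a.right = 1 := by
  have : commutator (SemidirectProduct N T φ) ≤ (SemidirectProduct.rightHom (φ := φ)).ker :=
    Abelianization.commutator_subset_ker _
  exact this ha

theorem semidirect_meta {N T : Type*} [CommGroup N] [CommGroup T] (φ : T →* MulAut N) :
    IsMetabelian (SemidirectProduct N T φ) := by
  intro a b ha hb
  have h1 := semidirect_comm φ a a ha
  have h2 := semidirect_comm φ b b hb
  ext
  · simp [h1, h2, mul_comm]
  · simp [h1, h2]

theorem freeMetabelian_meta (Y : Type*) : IsMetabelian (FreeMetabelian Y) := by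
  intro a b ha hb
  have hc : commutator (FreeMetabelian Y) =
      (commutator (FreeGroup Y)).map (QuotientGroup.mk' (derivedSeries (FreeGroup Y) 2)) := by
    rw [commutator_def, commutator_def, Subgroup.map_commutator]
    rw [Subgroup.map_top_of_surjective _ (QuotientGroup.mk'_surjective _)]
  rw [hc] at ha hb
  obtain ⟨a, ha, rfl⟩ := ha
  obtain ⟨b, hb, rfl⟩ := hb
  rw [← commutatorElement_eq_one_iff_mul_comm, ← map_commutatorElement]
  apply (QuotientGroup.eq_one_iff _).2
  have h1 : derivedSeries (FreeGroup Y) 1 = commutator (FreeGroup Y) := derivedSeries_one _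
  rw [derivedSeries_succ, h1]
  exact Subgroup.commutator_mem_commutator ha hb

theorem reverse_ofFn_rev {α : Type*} {n : ℕ} (f : Fin n → α) :
    (List.ofFn f).reverse = List.ofFn fun i => f i.rev := by
  apply List.ext_getElem
  · simp
  · intro i h1 h2
    simp only [List.getElem_reverse, List.getElem_ofFn, List.length_ofFn]
    congr 1
    ext
    simp [Fin.rev]
    omega

section area
variable {H : Type*} [Group H] (RR : Set H)

theorem AreaLe.cost : Cost (AreaLe RR) where
  mono := by
    rintro x a b ⟨N, hN, h⟩ hab
    exact ⟨N, hN.trans hab, h⟩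
  one := ⟨0, le_rfl, Fin.elim0, Fin.elim0, fun i => i.elim0, by simp⟩
  mul := by
    rintro x y a b ⟨N, hN, r, f, hr, rfl⟩ ⟨N', hN', r', f', hr', rfl⟩
    refine ⟨N + N', by omega, Fin.append r r', Fin.append f f', ?_, ?_⟩
    · intro i
      refine Fin.addCases (fun i => ?_) (fun i => ?_) i
      · simpa using hr i
      · simpa using hr' i
    · rw [← List.prod_append, ← List.ofFn_fin_append]
      congr 2
      funext i
      refine Fin.addCases (fun i => ?_) (fun i => ?_) i <;> simp
  inv := by
    rintro x a ⟨N, hN, r, f, hr, rfl⟩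
    refine ⟨N, hN, fun i => (r i.rev)⁻¹, fun i => f i.rev, ?_, ?_⟩
    · intro i
      have := hr i.rev
      simpa [or_comm] using this
    · rw [List.prod_inv_reverse, List.map_ofFn, reverse_ofFn_rev]
      congr 2
      funext i
      simp [mul_assoc]
  conj := by
    rintro x a y ⟨N, hN, r, f, hr, rfl⟩
    refine ⟨N, hN, r, fun i => f i * y⁻¹, hr, ?_⟩
    rw [← MulAut.conj_apply, map_list_prod, List.map_ofFn]
    congr 2
    funext i
    simp [mul_assoc]

theorem AreaLe.mem {x : H} {n : ℕ} (h : AreaLe RR x n) : x ∈ Subgroup.normalClosure RR := by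
  obtain ⟨N, hN, r, f, hr, rfl⟩ := h
  refine Subgroup.list_prod_mem _ ?_
  intro z hz
  rw [List.mem_ofFn] at hz
  obtain ⟨i, rfl⟩ := hz
  have h1 : r i ∈ Subgroup.normalClosure RR := by
    rcases hr i with h | h
    · exact Subgroup.subset_normalClosure h
    · exact (Subgroup.inv_mem_iff _).1 (Subgroup.subset_normalClosure h)
  have := (inferInstance : (Subgroup.normalClosure RR).Normal).conj_mem _ h1 (f i)⁻¹
  simpa using this

theorem AreaLe.exists {x : H} (h : x ∈ Subgroup.normalClosure RR) : ∃ n, AreaLe RR x n := by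
  have hc := AreaLe.cost RR
  let K : Subgroup H :=
    { carrier := {x | ∃ n, AreaLe RR x n}
      one_mem' := ⟨0, hc.one⟩
      mul_mem' := by
        rintro a b ⟨n, hn⟩ ⟨k, hk⟩
        exact ⟨_, hc.mul hn hk⟩
      inv_mem' := by
        rintro a ⟨n, hn⟩
        exact ⟨_, hc.inv hn⟩ }
  have hK : K.Normal := ⟨by
    rintro a ⟨n, hn⟩ g
    exact ⟨_, hc.conj g hn⟩⟩
  have : Subgroup.normalClosure RR ≤ K := Subgroup.normalClosure_le_normal (by
    intro r hr
    exact ⟨1, 1, le_rfl, fun _ => r, fun _ => 1, fun _ => Or.inl hr, by simp⟩)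
  exact this h
end area

theorem exists_dat {T : Type} [CommGroup T] {q : ℕ} (gens : Fin q → T)
    (hgens : Subgroup.closure (Set.range gens) = ⊤)
    {H : Type*} [Group H] (hH : IsMetabelian H) {B : H → ℕ → Prop} (hB : Cost B)
    {N : Type*} [CommGroup N] (φ : T →* MulAut N) (ρ : H →* SemidirectProduct N T φ)
    (hρ : Function.Surjective ρ) (hker : ∀ x, ρ x = 1 → ∃ n, B x n) {m : ℕ} (y : Fin m → H) :
    ∃ (x : Fin m → H) (σ : T → H) (c : (Fin m → MonoidAlgebra ℤ T) → H) (C : ℕ),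
      Dat B (wordLen gens) x σ c C ∧ (∀ k, ρ (x k) = SemidirectProduct.inl (ρ (y k)).left) ∧
      (∀ t, ρ (σ t) = SemidirectProduct.inr t) ∧ (∀ k, y k = x k * σ (ρ (y k)).right) := by
  classical
  have : Group.FG T := (Group.fg_iff).2 ⟨Set.range gens, hgens, Set.finite_range gens⟩
  obtain ⟨J, _, u, Nj, v, hu, hpw, hadd, hsub, hv1⟩ := exists_coords T
  choose û hû using fun j => hρ (SemidirectProduct.inr (u j))
  set l : List J := Finset.univ.toList with hl
  let σ : T → H := fun t => pw û l (v t)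
  have hσ : ∀ t, ρ (σ t) = SemidirectProduct.inr t := by
    intro t
    have e : (fun j => ρ (û j)) = fun j => (SemidirectProduct.inr (u j) : SemidirectProduct N T φ) :=
      funext hû
    simp only [σ]
    rw [map_pw, e, ← map_pw, hpw]
  let x : Fin m → H := fun k => y k * (σ (ρ (y k)).right)⁻¹
  have hx : ∀ k, ρ (x k) = SemidirectProduct.inl (ρ (y k)).left := by
    intro k
    simp only [x, map_mul, map_inv, hσ]
    rw [mul_inv_eq_iff_eq_mul, SemidirectProduct.inl_left_mul_inr_right]
  obtain ⟨c, hc, cadd, ctm⟩ := exists_chom hH (fun k t => ⁅(x k)⁻¹, σ t⁆) (fun k t => comm_mem _ _)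
  obtain ⟨M, hM⟩ := wl_bound gens hgens (fun t => vn l (v t))
    (by simp [hv1, vn]) (fun s t => vn_le l _ _ _ (hsub s t))
  obtain ⟨C1, hC1⟩ : ∃ C1, ∀ p : J × J, KK B (û p.1) (û p.2) C1 :=
    exists_bound' (P := fun (p : J × J) b => KK B (û p.1) (û p.2) b) (fun i a b h hab => h.mono hB hab)
      fun p => hker _ (by
        rw [map_commutatorElement, hû, hû, ← map_commutatorElement, commutatorElement_eq_one_iff_mul_comm.2
          (mul_comm _ _), map_one])
  obtain ⟨C2, hC2⟩ : ∃ C2, ∀ j, B (û j ^ Nj j) C2 :=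
    exists_bound' (P := fun j b => B (û j ^ Nj j) b) (fun i a b h hab => hB.mono h hab)
      fun j => hker _ (by rw [map_pow, hû, ← map_pow, hu, map_one])
  obtain ⟨C3, hC3⟩ : ∃ C3, ∀ p : Fin m × Fin m × J, KK B (x p.1) ⁅(x p.2.1)⁻¹, û p.2.2⁆ C3 :=
    exists_bound' (P := fun (p : Fin m × Fin m × J) b => KK B (x p.1) ⁅(x p.2.1)⁻¹, û p.2.2⁆ b)
      (fun i a b h hab => h.mono hB hab)
      fun p => hker _ (by
        simp only [map_commutatorElement, map_inv, hx, hû]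
        rw [commutatorElement_eq_one_iff_mul_comm]
        ext <;> simp [commutatorElement_def, mul_comm])
  obtain ⟨C4, hC4⟩ : ∃ C4, ∀ p : Fin m × Fin m, KK B (x p.1) (x p.2) C4 :=
    exists_bound' (P := fun (p : Fin m × Fin m) b => KK B (x p.1) (x p.2) b) (fun i a b h hab => h.mono hB hab)
      fun p => hker _ (by
        rw [map_commutatorElement, hx, hx, ← map_commutatorElement,
          commutatorElement_eq_one_iff_mul_comm.2 (mul_comm _ _), map_one])
  refine ⟨x, σ, c, M * M * C1 + l.length * C2 + M * C3 + C4, ⟨hB, wl_mul gens hgens,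
    wl_inv gens hgens, ?_, ?_, ?_, cadd, ctm⟩, hx, hσ, fun k => by simp [x]⟩
  · intro s t
    have a1 := pw_add hB û C1 (fun i j => hC1 (i, j)) l (v s) (v t)
    have a2 := pw_congr hB û C2 l (v s + v t) (v (s * t)) (by
      intro j
      rcases hadd s t j with h | h
      · rw [Pi.add_apply, h]; exact (DD.refl hB _).mono hB (Nat.zero_le _)
      · rw [Pi.add_apply, h, add_comm, zpow_add]
        have := hC2 j
        unfold DD
        simpa using this)
    refine (a1.trans hB a2).mono hB ?_
    have h1 : vn l (v s) * vn l (v t) * C1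
        ≤ (M * wordLen gens s) * (M * wordLen gens t) * C1 := by
      gcongr
      · exact hM s
      · exact hM t
    have h2 : 0 ≤ M * M * C1 + (l.length * C2) * (wordLen gens s * wordLen gens t)
      + (M * C3 + C4) * (wordLen gens s * wordLen gens t + 1) := Nat.zero_le _
    nlinarith
  · intro i k t
    refine ((KK.dbl_pw hB hH û (fun j => hC3 (i, k, j)) l (v t))).mono hB ?_
    have h1 : vn l (v t) * C3 ≤ (M * wordLen gens t) * C3 := by gcongr; exact hM t
    have h2 : 0 ≤ M * C3 + (M * M * C1 + l.length * C2 + C4) * (wordLen gens t + 1) := Nat.zero_le _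
    nlinarith
  · intro i j
    exact (hC4 (i, j)).mono hB (Nat.le_add_left _ _)

theorem DD.map {H G : Type*} [Group H] [Group G] {B : H → ℕ → Prop} (ρ : H →* G)
    (hker : ∀ x n, B x n → ρ x = 1) {x y : H} {n : ℕ} (h : DD B x y n) : ρ x = ρ y := by
  have := hker _ _ h
  rwa [map_mul, map_inv, mul_inv_eq_one] at this

section val
variable {T : Type} [CommGroup T] {A : Type} [AddCommGroup A] [Module (MonoidAlgebra ℤ T) A]
  {H : Type*} [Group H] {B : H → ℕ → Prop}
  (ρ : H →* SemidirectProduct (Multiplicative A) T (modAction T A))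
 {len : T → ℕ} {m : ℕ} {x : Fin m → H} {σ : T → H}
    {c : (Fin m → MonoidAlgebra ℤ T) → H} {C : ℕ}

theorem lin_tm (a : Fin m → A) (k : Fin m) (t : T) :
    ∑ j, tm k t j • a j = MonoidAlgebra.of ℤ T t • a k := by
  rw [Finset.sum_eq_single k]
  · simp [tm]
  · intro j _ hj; simp [tm, hj]
  · simp

theorem Dat.rhoE (hker : ∀ x n, B x n → ρ x = 1) (d : Dat B len x σ c C) (a : Fin m → A)
    (hx : ∀ k, ρ (x k) = SemidirectProduct.inl (Multiplicative.ofAdd (a k)))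
    (hσ : ∀ t, ρ (σ t) = SemidirectProduct.inr t) (g : Fin m → MonoidAlgebra ℤ T) :
    ρ (EE x c g) = SemidirectProduct.inl (Multiplicative.ofAdd (∑ k, g k • a k)) := by
  have htm : ∀ k t, ρ (EE x c (tm k t)) =
      SemidirectProduct.inl (Multiplicative.ofAdd (∑ j, tm k t j • a j)) := by
    intro k t
    rw [d.Etm, map_mul, map_mul, map_inv, hx, hσ, lin_tm, ← map_inv, ← SemidirectProduct.inl_aut]
    rfl
  have hadd : ∀ g g', ρ (EE x c (g + g')) = ρ (EE x c g) * ρ (EE x c g') := by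
    intro g g'
    obtain ⟨R, N, hg⟩ := TS.exists (len := len) g
    obtain ⟨R', N', hg'⟩ := TS.exists (len := len) g'
    rw [← map_mul]
    exact ((d.Eadd hg hg').map ρ hker).symm
  have hneg : ∀ g, ρ (EE x c (-g)) = (ρ (EE x c g))⁻¹ := by
    intro g
    obtain ⟨R, N, hg⟩ := TS.exists (len := len) g
    rw [← map_inv]
    exact ((d.Eneg hg).map ρ hker)
  obtain ⟨R, N, hg⟩ := TS.exists (len := len) g
  induction hg with
  | zero => rw [d.Ezero]; simp
  | add k t _ _ ih =>
    rw [hadd, ih, htm, ← map_mul, ← ofAdd_add]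
    simp [add_smul, Finset.sum_add_distrib]
  | sub k t _ _ ih =>
    rw [sub_eq_add_neg, hadd, hneg, ih, htm, ← map_inv, ← map_mul, ← ofAdd_neg, ← ofAdd_add]
    simp [add_smul, Finset.sum_add_distrib, sub_smul, sub_eq_add_neg]
  | mono _ _ ih => exact ih
end val
open scoped commutatorElement
set_option linter.unusedVariables false
set_option linter.unusedSectionVars false
set_option linter.unusedSimpArgs false

theorem span_top {T : Type} [CommGroup T] {A : Type} [AddCommGroup A] [Module (MonoidAlgebra ℤ T) A]
    {H : Type*} [Group H] (ρ : H →* SemidirectProduct (Multiplicative A) T (modAction T A))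
    (hρ : Function.Surjective ρ) {m : ℕ} (y : Fin m → H)
    (hy : Subgroup.closure (Set.range y) = ⊤) :
    Submodule.span (MonoidAlgebra ℤ T)
      (Set.range fun k => Multiplicative.toAdd (ρ (y k)).left) = ⊤ := by
  set W := Submodule.span (MonoidAlgebra ℤ T)
      (Set.range fun k => Multiplicative.toAdd (ρ (y k)).left) with hW
  have hact : ∀ (t : T) (z : Multiplicative A), Multiplicative.toAdd z ∈ W →
      Multiplicative.toAdd (modAction T A t z) ∈ W := by
    intro t z hz
    have : Multiplicative.toAdd (modAction T A t z) =
      MonoidAlgebra.of ℤ T t • Multiplicative.toAdd z := rfl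
    rw [this]
    exact W.smul_mem _ hz
  let K : Subgroup (SemidirectProduct (Multiplicative A) T (modAction T A)) :=
    { carrier := {g | Multiplicative.toAdd g.left ∈ W}
      one_mem' := by simp
      mul_mem' := by
        intro a b ha hb
        simp only [Set.mem_ofPred_eq, SemidirectProduct.mul_left, toAdd_mul] at *
        exact W.add_mem ha (hact _ _ hb)
      inv_mem' := by
        intro a ha
        simp only [Set.mem_ofPred_eq, SemidirectProduct.inv_left] at *
        refine hact _ _ ?_
        rw [toAdd_inv]
        exact W.neg_mem ha }
  have h1 : Subgroup.closure (Set.range y) ≤ K.comap ρ := by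
    rw [Subgroup.closure_le]
    rintro _ ⟨k, rfl⟩
    exact Submodule.subset_span ⟨k, rfl⟩
  rw [eq_top_iff]
  intro a _
  obtain ⟨h, hh⟩ := hρ (SemidirectProduct.inl (Multiplicative.ofAdd a))
  have : ρ h ∈ K := h1 (by rw [hy]; trivial)
  rw [hh] at this
  exact this

theorem word_of_mNormLe {Y : Type} {m : ℕ} (ε : Fin m ≃ Y) (w : FreeMetabelian Y) (n : ℕ)
    (h : mNormLe w n) : ∃ L : List (Fin m × Bool), L.length ≤ n ∧
      w = evw (fun k => QuotientGroup.mk' (derivedSeries (FreeGroup Y) 2) (FreeGroup.of (ε k))) L := by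
  classical
  obtain ⟨v, rfl, hv⟩ := h
  rw [freeNorm_eq] at hv
  refine ⟨v.toWord.map fun p => (ε.symm p.1, p.2), by simpa [FreeGroup.norm] using hv, ?_⟩
  have h1 : ∀ v, QuotientGroup.mk' (derivedSeries (FreeGroup Y) 2) v =
      FreeGroup.lift (fun y => QuotientGroup.mk' (derivedSeries (FreeGroup Y) 2) (FreeGroup.of y)) v := by
    intro v
    congr 1
    ext y
    exact (FreeGroup.lift_apply_of).symm
  rw [h1]
  conv_lhs => rw [← FreeGroup.mk_toWord (x := v)]
  rw [FreeGroup.lift_mk, evw, List.map_map]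
  simp only [Function.comp_def, Equiv.apply_symm_apply]

theorem closure_y {Y : Type} {m : ℕ} (ε : Fin m ≃ Y) :
    Subgroup.closure (Set.range fun k : Fin m =>
      QuotientGroup.mk' (derivedSeries (FreeGroup Y) 2) (FreeGroup.of (ε k))) = ⊤ := by
  have : (Set.range fun k : Fin m =>
      QuotientGroup.mk' (derivedSeries (FreeGroup Y) 2) (FreeGroup.of (ε k))) =
      Set.image (QuotientGroup.mk' (derivedSeries (FreeGroup Y) 2)) (Set.range FreeGroup.of) := by
    rw [← Set.range_comp, ← ε.surjective.range_comp]
    rfl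
  rw [this, ← MonoidHom.map_closure, FreeGroup.closure_range_of]
  exact Subgroup.map_top_of_surjective _ (QuotientGroup.mk'_surjective _)

theorem exists_modDehn {T : Type} [CommGroup T] {q : ℕ} (gens : Fin q → T)
    (hgens : Subgroup.closure (Set.range gens) = ⊤) {m l : ℕ}
    (S : Submodule (MonoidAlgebra ℤ T) (Fin m → MonoidAlgebra ℤ T))
    (f : Fin l → (Fin m → MonoidAlgebra ℤ T))
    (hf : Submodule.span (MonoidAlgebra ℤ T) (Set.range f) = S) :
    ∃ δ, IsModDehnFunctionOf gens S f δ := by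
  have hex : ∀ g ∈ S, ∃ N, ModAreaLe f g N := by
    intro g hg
    rw [← hf] at hg
    obtain ⟨α, hα⟩ := (Submodule.mem_span_range_iff_exists_fun _).1 hg
    exact ⟨_, α, hα.symm, le_rfl⟩
  refine ⟨fun n => sInf {N | ∀ g ∈ S, modNorm gens g ≤ n → ModAreaLe f g N}, fun n => ?_⟩
  refine ⟨Nat.sInf_mem ?_, fun N hN => Nat.sInf_le hN⟩
  have hfin : {g : Fin m → MonoidAlgebra ℤ T | g ∈ S ∧ modNorm gens g ≤ n}.Finite :=
    (TS.finite (wl_finite gens hgens) n n).subset fun g hg => TS.of_modNorm hg.2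
  have := hfin.fintype
  obtain ⟨N, hN⟩ := exists_bound'
    (P := fun (g : {g : Fin m → MonoidAlgebra ℤ T | g ∈ S ∧ modNorm gens g ≤ n}) N =>
      ModAreaLe f g.1 N) (by
      rintro g a b ⟨α, h1, h2⟩ hab
      exact ⟨α, h1, h2.trans hab⟩) (fun g => hex g.1 g.2.1)
  exact ⟨N, fun g hg hn => hN ⟨g, hg, hn⟩⟩

theorem exists_gens {T : Type} [CommGroup T] {q : ℕ} (gens : Fin q → T)
    (hgens : Subgroup.closure (Set.range gens) = ⊤) {m : ℕ}
    (S : Submodule (MonoidAlgebra ℤ T) (Fin m → MonoidAlgebra ℤ T)) :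
    ∃ (l : ℕ) (f : Fin l → (Fin m → MonoidAlgebra ℤ T)),
      Submodule.span (MonoidAlgebra ℤ T) (Set.range f) = S := by
  have h1 : Group.FG T := (Group.fg_iff).2 ⟨Set.range gens, hgens, Set.finite_range gens⟩
  have h2 : Monoid.FG T := inferInstance
  have h3 : IsNoetherianRing (MonoidAlgebra ℤ T) := Algebra.FiniteType.isNoetherianRing ℤ _
  have h4 : S.FG := IsNoetherian.noetherian S
  exact Submodule.fg_iff_exists_fin_generating_family.1 h4
/-- For `G = A ⋊ T` with `T` finitely generated abelian and `A` a
finitely generated `ℤT`-module, `G` is finitely generated metabelian and its relative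
Dehn function satisfies `δ̃_G(n) ≼ max{n³, δ_A(n²)³}`. -/
theorem semidirect_relative_dehn
    (T : Type) [CommGroup T] (q : ℕ) (gens : Fin q → T)
    (hgens : Subgroup.closure (Set.range gens) = ⊤)
    (A : Type) [AddCommGroup A] [Module (MonoidAlgebra ℤ T) A]
    [Module.Finite (MonoidAlgebra ℤ T) A]
    -- a finite relative presentation of `G = A ⋊ T`, with relative Dehn function `δt`:
    (Y : Type) [Finite Y] (RR : Set (FreeMetabelian Y)) (hRR : RR.Finite)
    (eG : SemidirectProduct (Multiplicative A) T (modAction T A) ≃*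
      FreeMetabelian Y ⧸ Subgroup.normalClosure RR)
    (δt : ℕ → ℕ) (hδt : IsRelDehnFunctionOf RR δt) :
    Group.FG (SemidirectProduct (Multiplicative A) T (modAction T A)) ∧
    IsMetabelian (SemidirectProduct (Multiplicative A) T (modAction T A)) ∧
    ∃ (m : ℕ) (a : Fin m → A),
      Submodule.span (MonoidAlgebra ℤ T) (Set.range a) = ⊤ ∧
      ∃ S : Submodule (MonoidAlgebra ℤ T) (Fin m → MonoidAlgebra ℤ T),
        (∀ μ : Fin m → MonoidAlgebra ℤ T, μ ∈ S ↔ (∑ j, μ j • a j) = 0) ∧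
        ∃ (l : ℕ) (f : Fin l → (Fin m → MonoidAlgebra ℤ T)) (δA : ℕ → ℕ),
          Submodule.span (MonoidAlgebra ℤ T) (Set.range f) = S ∧
          IsModDehnFunctionOf gens S f δA ∧
          Dominates δt (fun n => max (n ^ 3) ((δA (n ^ 2)) ^ 3)) := by
  classical
  let H := FreeMetabelian Y
  let ρ : FreeMetabelian Y →* SemidirectProduct (Multiplicative A) T (modAction T A) :=
    eG.symm.toMonoidHom.comp (QuotientGroup.mk' (Subgroup.normalClosure RR))
  have hρ : Function.Surjective ρ := eG.symm.surjective.comp (QuotientGroup.mk'_surjective _)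
  have hρ1 : ∀ x, ρ x = 1 ↔ x ∈ Subgroup.normalClosure RR := by
    intro x
    have : ρ x = eG.symm (QuotientGroup.mk' (Subgroup.normalClosure RR) x) := rfl
    rw [this, map_eq_one_iff _ eG.symm.injective]
    exact QuotientGroup.eq_one_iff x
  have hB := AreaLe.cost RR
  have hker : ∀ x, ρ x = 1 → ∃ n, AreaLe RR x n := fun x hx => AreaLe.exists RR ((hρ1 x).1 hx)
  have hker' : ∀ x n, AreaLe RR x n → ρ x = 1 := fun x n hx => (hρ1 x).2 (AreaLe.mem RR hx)
  refine ⟨Group.fg_of_surjective hρ, semidirect_meta _, ?_⟩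
  obtain ⟨m, ⟨ε'⟩⟩ := Finite.exists_equiv_fin Y
  let ε := ε'.symm
  let y : Fin m → FreeMetabelian Y :=
    fun k => QuotientGroup.mk' (derivedSeries (FreeGroup Y) 2) (FreeGroup.of (ε k))
  have hy : Subgroup.closure (Set.range y) = ⊤ := closure_y ε
  let a : Fin m → A := fun k => Multiplicative.toAdd (ρ (y k)).left
  refine ⟨m, a, span_top ρ hρ y hy, ?_⟩
  obtain ⟨x, σ, c, C, d, hx, hσ, hyx⟩ :=
    exists_dat gens hgens (freeMetabelian_meta Y) hB (modAction T A) ρ hρ hker y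
  have hE : ∀ g, ρ (EE x c g) = SemidirectProduct.inl (Multiplicative.ofAdd (∑ k, g k • a k)) :=
    d.rhoE ρ hker' a hx hσ
  let S : Submodule (MonoidAlgebra ℤ T) (Fin m → MonoidAlgebra ℤ T) :=
    LinearMap.ker (Fintype.linearCombination (MonoidAlgebra ℤ T) a)
  have hS : ∀ μ : Fin m → MonoidAlgebra ℤ T, μ ∈ S ↔ (∑ j, μ j • a j) = 0 := by
    intro μ
    simp only [S, LinearMap.mem_ker, Fintype.linearCombination_apply]
  refine ⟨S, hS, ?_⟩
  obtain ⟨l, f, hf⟩ := exists_gens gens hgens S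
  obtain ⟨δA, hδA⟩ := exists_modDehn gens hgens S f hf
  refine ⟨l, f, δA, hf, hδA, ?_⟩
  obtain ⟨K, hK⟩ := d.words (wl_one gens) y (fun k => (ρ (y k)).right) hyx
  have hfS : ∀ i, f i ∈ S := fun i => by rw [← hf]; exact Submodule.subset_span ⟨i, rfl⟩
  obtain ⟨K', hK'⟩ := d.comb f (fun i => hker _ (by
    rw [hE, (hS _).1 (hfS i)]; simp))
  obtain ⟨b, hb⟩ : ∃ b, ∀ i, ∀ k t, (f i k).coeff t ≠ 0 → wordLen gens t ≤ b :=
    exists_bound (P := fun i b => ∀ k t, (f i k).coeff t ≠ 0 → wordLen gens t ≤ b)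
      (fun i a b h hab k t hk => (h k t hk).trans hab) fun i => by
      obtain ⟨R, N, h⟩ := TS.exists (len := wordLen gens) (f i)
      exact ⟨R, fun k t hk => h.supp k t hk⟩
  have hσ1 : AreaLe RR (σ 1) C := by
    have := (d.h1 1 1).mul_right d.hB (σ 1)⁻¹
    rw [mul_one] at this
    simpa [wl_one, DD] using this
  refine ⟨(2 * K + 1) + (K + K' * (K + 2 * b + 1)) + 2 * C, by omega, fun n => ?_⟩
  set Cf := (2 * K + 1) + (K + K' * (K + 2 * b + 1)) + 2 * C with hCf
  refine (hδt n).2 ?_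
  intro w hw hwn
  obtain ⟨L, hL, rfl⟩ := word_of_mNormLe ε w n hwn
  obtain ⟨g, t, hg, hd⟩ := hK L
  set p := L.length with hp
  have hr : ρ (EE x c g * σ t) = 1 := by
    rw [← hd.map ρ hker']
    exact (hρ1 _).2 hw
  rw [map_mul, hE, hσ] at hr
  have ht : t = 1 := by
    have := congrArg SemidirectProduct.right hr
    simpa using this
  have hgS : g ∈ S := by
    rw [hS]
    have := congrArg SemidirectProduct.left hr
    simp only [SemidirectProduct.mul_left, SemidirectProduct.left_inl, SemidirectProduct.right_inl,
      SemidirectProduct.left_inr, map_one, mul_one, SemidirectProduct.one_left] at this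
    exact ofAdd_eq_one.1 this
  subst ht
  set D := δA ((Cf * n) ^ 2) with hD
  have hnorm : modNorm gens g ≤ (Cf * n) ^ 2 := by
    refine hg.modNorm.trans ?_
    have hc : 2 * K + 1 ≤ Cf := by omega
    calc p * (1 + 2 * (K * p)) ≤ n * (1 + 2 * (K * n)) := by gcongr
      _ ≤ ((2 * K + 1) * n) ^ 2 := by
        rcases Nat.eq_zero_or_pos n with h | h
        · subst h; simp
        · have h2 : n ≤ n ^ 2 := by nlinarith
          nlinarith [Nat.zero_le (K * n ^ 2), Nat.zero_le (K ^ 2 * n ^ 2)]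
      _ ≤ _ := by gcongr
  obtain ⟨α, hα, hαD⟩ := (hδA ((Cf * n) ^ 2)).1 g hgS hnorm
  obtain ⟨α', hα', hTS⟩ := truncation (wordLen gens) (wl_mul gens hgens) (wl_inv gens hgens) f b hb
    g (K * p) (fun k t hk => hg.supp k t hk) α hα D hαD
  have hEg := hK' _ _ _ hTS
  rw [← hα'] at hEg
  have hfin := hd.cost hB (hB.mul hEg hσ1)
  refine hB.mono hfin ?_
  show _ ≤ Cf * max ((Cf * n) ^ 3) (D ^ 3) + Cf * n + Cf
  set Mx := max ((Cf * n) ^ 3) (D ^ 3) with hMx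
  have hnC : n ≤ Cf * n := Nat.le_mul_of_pos_left n (by omega)
  have hpn : p ≤ Cf * n := hL.trans hnC
  have m1 : p ^ 3 ≤ Mx := (Nat.pow_le_pow_left hpn 3).trans (le_max_left _ _)
  have m2 : D ^ 3 ≤ Mx := le_max_right _ _
  have m3 : D * D ≤ Mx := by
    refine le_trans ?_ m2
    rcases Nat.eq_zero_or_pos D with h | h
    · rw [h]; simp
    · calc D * D = D ^ 2 := by ring
        _ ≤ D ^ 3 := Nat.pow_le_pow_right h (by norm_num)
  have m4 : D * D * p ≤ Mx := by
    rcases le_total p D with h | h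
    · refine le_trans ?_ m2
      calc D * D * p ≤ D * D * D := by gcongr
        _ = D ^ 3 := by ring
    · refine le_trans ?_ m1
      calc D * D * p ≤ p * p * p := by gcongr
        _ = p ^ 3 := by ring
  have tot : K * p ^ 3 + K' * (D * D * (K * p + 2 * b * D + 1)) ≤
      (K + K' * (K + 2 * b + 1)) * Mx := by
    calc _ = K * p ^ 3 + K' * (K * (D * D * p) + 2 * b * D ^ 3 + D * D) := by ring
      _ ≤ K * Mx + K' * (K * Mx + 2 * b * Mx + Mx) := by gcongr
      _ = _ := by ring
  have tot2 : (K + K' * (K + 2 * b + 1)) * Mx ≤ Cf * Mx := by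
    gcongr
    omega
  have : 2 * C ≤ Cf := by omega
  have := Nat.zero_le (Cf * n)
  omega
end

section
/- Let R = ℤ[x₁,…,x_k] and let M = R^m be a free R-module of finite rank m. For every submodule S ⊆ M there exist a finite generating set f₁,…,f_l of S and a real constant K > 1 such that: every nonzero g ∈ S with deg(g) ≤ n and |g| ≤ p can be written as g = Σ_{i=1}^l α_i f_i with α_i ∈ R, deg(α_i f_i) ≤ deg(g) for every i with α_i f_i ≠ 0, and Σ_{i=1}^l |α_i| ≤ p·K^{n^k}. -/
/-- The sum of the absolute values of the integer coefficients of a multivariable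
polynomial over `ℤ`. -/
noncomputable def polyNorm {k : ℕ} (p : MvPolynomial (Fin k) ℤ) : ℕ :=
  ∑ d ∈ p.support, (p.coeff d).natAbs

/-- The norm of an element of the free module `ℤ[x₁,…,x_k]^m`. -/
noncomputable def vecNorm {k m : ℕ} (g : Fin m → MvPolynomial (Fin k) ℤ) : ℕ :=
  ∑ j, polyNorm (g j)

/-- The degree of an element of the free module `ℤ[x₁,…,x_k]^m` : the maximal total
degree of a monomial occurring in one of the components. -/
noncomputable def vecDeg {k m : ℕ} (g : Fin m → MvPolynomial (Fin k) ℤ) : ℕ :=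
  Finset.univ.sup fun j => (g j).totalDegree

namespace DivAux

open MvPolynomial

theorem wqo_fin {X A : Type*} [PartialOrder A] [WellQuasiOrderedLE A] (φ : X → A) (P : X → Prop) :
    ∃ F : Finset X, (∀ x ∈ F, P x) ∧ ∀ x, P x → ∃ y ∈ F, φ y ≤ φ x := by
  classical
  let s : Set A := {a | ∃ x, P x ∧ φ x = a}
  have hfin : {a | Minimal (· ∈ s) a}.Finite :=
    WellQuasiOrderedLE.finite_of_isAntichain (setOfPred_minimal_antichain _)
  have hrep : ∀ a : A, ∃ x : Option X, (a ∈ s → ∃ y, x = some y ∧ P y ∧ φ y = a) := by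
    intro a
    by_cases h : a ∈ s
    · obtain ⟨y, hy, hya⟩ := h
      exact ⟨some y, fun _ => ⟨y, rfl, hy, hya⟩⟩
    · exact ⟨none, fun h' => absurd h' h⟩
  choose r hr using hrep
  refine ⟨(hfin.toFinset.biUnion fun a => (r a).toFinset).filter P, ?_, ?_⟩
  · intro x hx
    exact (Finset.mem_filter.1 hx).2
  · intro x hx
    obtain ⟨b, hb, hbm⟩ := (Set.isPWO_of_wellQuasiOrderedLE s).exists_le_minimal
      (show φ x ∈ s from ⟨x, hx, rfl⟩)
    obtain ⟨y, hy, hPy, hφ⟩ := hr b hbm.1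
    refine ⟨y, ?_, by rw [hφ]; exact hb⟩
    simp only [Finset.mem_filter, Finset.mem_biUnion]
    exact ⟨⟨b, by simpa using hbm, by simp [hy]⟩, hPy⟩

variable {k m : ℕ}

theorem polyNorm_eq (p : MvPolynomial (Fin k) ℤ) (U : Finset (Fin k →₀ ℕ)) (h : p.support ⊆ U) :
    polyNorm p = ∑ d ∈ U, (p.coeff d).natAbs := by
  unfold polyNorm
  apply Finset.sum_subset h
  intro x _ hx
  simpa using hx

theorem polyNorm_zero : polyNorm (0 : MvPolynomial (Fin k) ℤ) = 0 := by simp [polyNorm]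

theorem polyNorm_add (p q : MvPolynomial (Fin k) ℤ) : polyNorm (p + q) ≤ polyNorm p + polyNorm q := by
  classical
  rw [polyNorm_eq p (p.support ∪ q.support) Finset.subset_union_left,
    polyNorm_eq q (p.support ∪ q.support) Finset.subset_union_right,
    polyNorm_eq (p+q) (p.support ∪ q.support) support_add, ← Finset.sum_add_distrib]
  apply Finset.sum_le_sum
  intro d _
  rw [coeff_add]
  exact Int.natAbs_add_le _ _

theorem polyNorm_neg (p : MvPolynomial (Fin k) ℤ) : polyNorm (-p) = polyNorm p := by
  simp [polyNorm]

theorem polyNorm_sub (p q : MvPolynomial (Fin k) ℤ) : polyNorm (p - q) ≤ polyNorm p + polyNorm q := by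
  rw [sub_eq_add_neg, ← polyNorm_neg q]
  exact polyNorm_add _ _

theorem polyNorm_monomial (e : Fin k →₀ ℕ) (a : ℤ) : polyNorm (monomial e a) = a.natAbs := by
  classical
  rw [polyNorm_eq _ {e} support_monomial_subset]
  simp

theorem polyNorm_monomial_mul (e : Fin k →₀ ℕ) (a : ℤ) (p : MvPolynomial (Fin k) ℤ) :
    polyNorm (monomial e a * p) ≤ a.natAbs * polyNorm p := by
  classical
  rw [polyNorm_eq _ (p.support.map (addLeftEmbedding e))]
  · rw [Finset.sum_map]
    simp only [addLeftEmbedding_apply, coeff_monomial_mul, Int.natAbs_mul]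
    rw [← Finset.mul_sum]
    rfl
  · intro d hd
    rw [mem_support_iff, coeff_monomial_mul'] at hd
    split_ifs at hd with h
    · simp only [Finset.mem_map, mem_support_iff, addLeftEmbedding_apply]
      exact ⟨d - e, right_ne_zero_of_mul hd, add_tsub_cancel_of_le h⟩
    · exact absurd rfl hd

theorem coeff_le_polyNorm (p : MvPolynomial (Fin k) ℤ) (d : Fin k →₀ ℕ) :
    (p.coeff d).natAbs ≤ polyNorm p := by
  by_cases h : d ∈ p.support
  · exact Finset.single_le_sum (f := fun d => (p.coeff d).natAbs) (fun _ _ => Nat.zero_le _) h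
  · simp at h; simp [h]

abbrev M (k m : ℕ) := Fin m → MvPolynomial (Fin k) ℤ

abbrev cf (g : M k m) (t : (Fin k →₀ ℕ) × Fin m) : ℤ := (g t.2).coeff t.1

theorem cf_le_vecNorm (g : M k m) (t : (Fin k →₀ ℕ) × Fin m) : (cf g t).natAbs ≤ vecNorm g :=
  (coeff_le_polyNorm _ _).trans
    (Finset.single_le_sum (f := fun j => polyNorm (g j)) (fun _ _ => Nat.zero_le _) (Finset.mem_univ t.2))

theorem vecNorm_sub (g h : M k m) : vecNorm (g - h) ≤ vecNorm g + vecNorm h := by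
  unfold vecNorm
  rw [← Finset.sum_add_distrib]
  exact Finset.sum_le_sum fun j _ => polyNorm_sub _ _

theorem vecNorm_monomial_smul (e : Fin k →₀ ℕ) (a : ℤ) (g : M k m) :
    vecNorm (monomial e a • g) ≤ a.natAbs * vecNorm g := by
  unfold vecNorm
  rw [Finset.mul_sum]
  exact Finset.sum_le_sum fun j _ => polyNorm_monomial_mul _ _ _

theorem vecDeg_le_iff (g : M k m) (n : ℕ) :
    vecDeg g ≤ n ↔ ∀ t, cf g t ≠ 0 → t.1.degree ≤ n := by
  unfold vecDeg
  simp only [Finset.sup_le_iff, Finset.mem_univ, true_imp_iff, Prod.forall]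
  constructor
  · intro h d j hd
    have := h j
    simp only [MvPolynomial.totalDegree, Finset.sup_le_iff, mem_support_iff] at this
    exact this d hd
  · intro h j
    simp only [MvPolynomial.totalDegree, Finset.sup_le_iff, mem_support_iff]
    intro d hd
    exact h d j hd

theorem vecDeg_add_le {g h : M k m} {n : ℕ} (hg : vecDeg g ≤ n) (hh : vecDeg h ≤ n) :
    vecDeg (g + h) ≤ n := by
  rw [vecDeg_le_iff] at *
  intro t ht
  by_cases h1 : cf g t = 0
  · apply hh
    simpa [cf, h1] using ht
  · exact hg t h1

/-- the order key -/
noncomputable def key (t : (Fin k →₀ ℕ) × Fin m) : (DegLex (Fin k →₀ ℕ)) ×ₗ Fin m :=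
  toLex (toDegLex t.1, t.2)

theorem key_inj {s t : (Fin k →₀ ℕ) × Fin m} (h : key s = key t) : s = t := by
  unfold key at h
  simpa [Prod.ext_iff] using h

theorem key_deg {s t : (Fin k →₀ ℕ) × Fin m} (h : key s ≤ key t) : s.1.degree ≤ t.1.degree := by
  have := Prod.Lex.monotone_fst _ _ h
  exact Finsupp.DegLex.monotone_degree this

theorem key_add {s t : (Fin k →₀ ℕ) × Fin m} (e : Fin k →₀ ℕ) (h : key s ≤ key t) :
    key (e + s.1, s.2) ≤ key (e + t.1, t.2) := by
  unfold key at *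
  rw [Prod.Lex.toLex_le_toLex] at *
  simpa [toDegLex_add] using h

/-- `t` is the leading position of `g`. -/
def Lead (g : M k m) (t : (Fin k →₀ ℕ) × Fin m) : Prop :=
  cf g t ≠ 0 ∧ ∀ s, cf g s ≠ 0 → key s ≤ key t

theorem exists_lead (g : M k m) (hg : g ≠ 0) : ∃ t, Lead g t := by
  classical
  let U : Finset ((Fin k →₀ ℕ) × Fin m) :=
    Finset.univ.biUnion fun j => (g j).support.image fun d => (d, j)
  have hU : ∀ t, t ∈ U ↔ cf g t ≠ 0 := by
    rintro ⟨d, j⟩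
    simp [U]
  have hne : U.Nonempty := by
    by_contra h
    apply hg
    ext j d
    by_contra h'
    exact h ⟨(d, j), (hU _).2 (by simpa using h')⟩
  obtain ⟨t, ht, hmax⟩ := U.exists_max_image key hne
  exact ⟨t, (hU t).1 ht, fun s hs => hmax s ((hU s).2 hs)⟩

theorem cf_shift (g : M k m) (e d : Fin k →₀ ℕ) (j : Fin m) (a : ℤ) :
    cf (monomial e a • g) (e + d, j) = a * cf g (d, j) := by
  simp [cf, coeff_monomial_mul]

theorem cf_shift_ne (g : M k m) (e : Fin k →₀ ℕ) (a : ℤ) (s) (h : cf (monomial e a • g) s ≠ 0) :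
    ∃ d, s = (e + d, s.2) ∧ cf g (d, s.2) ≠ 0 := by
  simp only [cf, Pi.smul_apply, smul_eq_mul, coeff_monomial_mul'] at h
  split_ifs at h with h'
  · exact ⟨s.1 - e, by rw [add_tsub_cancel_of_le h'], right_ne_zero_of_mul h⟩
  · exact absurd rfl h

theorem shift_le {g : M k m} {t} (hg : Lead g t) (e : Fin k →₀ ℕ) (a : ℤ) (s)
    (h : cf (monomial e a • g) s ≠ 0) : key s ≤ key (e + t.1, t.2) := by
  obtain ⟨d, hs, hd⟩ := cf_shift_ne g e a s h
  rw [hs]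
  exact key_add (s := (d, s.2)) e (hg.2 _ hd)

/-- Groebner property -/
def Grob (S : Submodule (MvPolynomial (Fin k) ℤ) (M k m)) (F : Finset (M k m)) : Prop :=
  ∀ g ∈ S, ∀ t, Lead g t → ∃ f ∈ F, ∃ d, Lead f (d, t.2) ∧ d ≤ t.1 ∧ cf f (d, t.2) ∣ cf g t

theorem exists_grob (S : Submodule (MvPolynomial (Fin k) ℤ) (M k m)) :
    ∃ F : Finset (M k m), (∀ f ∈ F, f ∈ S) ∧ Grob S F := by
  classical
  have := fun j : Fin m => wqo_fin
    (fun x : M k m × (Fin k →₀ ℕ) => (x.2, (cf x.1 (x.2, j)).natAbs))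
    (fun x => x.1 ∈ S ∧ Lead x.1 (x.2, j))
  choose F hF hF2 using this
  refine ⟨Finset.univ.biUnion fun j => (F j).image Prod.fst, ?_, ?_⟩
  · intro f hf
    simp only [Finset.mem_biUnion, Finset.mem_univ, true_and, Finset.mem_image] at hf
    obtain ⟨j, x, hx, rfl⟩ := hf
    exact (hF j x hx).1
  · rintro g hg ⟨d, j⟩ ht
    -- choose minimal coefficient
    have hne : ((F j).filter fun x => x.2 ≤ d).Nonempty := by
      obtain ⟨y, hy, hyle⟩ := hF2 j (g, d) ⟨hg, ht⟩
      exact ⟨y, Finset.mem_filter.2 ⟨hy, hyle.1⟩⟩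
    obtain ⟨x, hx, hmin⟩ := Finset.exists_min_image _ (fun x => (cf x.1 (x.2, j)).natAbs) hne
    rw [Finset.mem_filter] at hx
    obtain ⟨hxS, hxL⟩ := hF j x hx.1
    refine ⟨x.1, ?_, x.2, hxL, hx.2, ?_⟩
    · simp only [Finset.mem_biUnion, Finset.mem_univ, true_and, Finset.mem_image]
      exact ⟨j, x, hx.1, rfl⟩
    · by_contra hnd
      set c := cf g (d, j) with hc
      set c' := cf x.1 (x.2, j) with hc'
      set e := d - x.2 with he
      have hed : e + x.2 = d := tsub_add_cancel_of_le hx.2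
      set h := g - monomial e (c / c') • x.1 with hh
      have hcf : cf h (d, j) = c % c' := by
        have h1 := cf_shift x.1 e x.2 j (c / c')
        rw [hed] at h1
        have : cf h (d, j) = cf g (d, j) - cf (monomial e (c / c') • x.1) (d, j) := by
          simp [h, cf]
        rw [this, h1, Int.emod_def, mul_comm]
      have hc'0 : c' ≠ 0 := hxL.1
      have hL : Lead h (d, j) := by
        refine ⟨?_, ?_⟩
        · rw [hcf]
          intro h0
          exact hnd (Int.dvd_of_emod_eq_zero h0)
        · intro s hs
          by_cases h1 : cf g s = 0
          · have h2 : cf (monomial e (c / c') • x.1) s ≠ 0 := by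
              intro h2
              apply hs
              have : cf h s = cf g s - cf (monomial e (c / c') • x.1) s := by
                simp [h, cf]
              rw [this, h1, h2, sub_zero]
            have := shift_le hxL _ _ _ h2
            simpa [hed] using this
          · exact ht.2 _ h1
      have hhS : h ∈ S := S.sub_mem hg (S.smul_mem _ hxS)
      obtain ⟨y, hy, hyle⟩ := hF2 j (h, d) ⟨hhS, hL⟩
      have h3 := hmin y (Finset.mem_filter.2 ⟨hy, hyle.1⟩)
      have h4 := hyle.2
      simp only [hcf] at h4
      have h5 : (c % c').natAbs < c'.natAbs := by
        have := Int.emod_nonneg c hc'0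
        have := Int.emod_lt_abs c hc'0
        rw [Int.abs_eq_natAbs] at this
        omega
      change c'.natAbs ≤ _ at h3
      omega

/-- bounded representation -/
def Rep (F : Finset (M k m)) (g : M k m) (n B : ℕ) : Prop :=
  ∃ α : M k m → MvPolynomial (Fin k) ℤ, g = ∑ f ∈ F, α f • f ∧
    (∀ f ∈ F, vecDeg (α f • f) ≤ n) ∧ ∑ f ∈ F, polyNorm (α f) ≤ B

theorem vecDeg_zero : vecDeg (0 : M k m) = 0 := by
  simp [vecDeg]

theorem rep_zero (F : Finset (M k m)) (n B : ℕ) : Rep F 0 n B :=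
  ⟨fun _ => 0, by simp, by simp [vecDeg_zero], by simp [polyNorm_zero]⟩

theorem Rep.mono {F : Finset (M k m)} {g : M k m} {n B B' : ℕ} (h : Rep F g n B) (hB : B ≤ B') :
    Rep F g n B' := by
  obtain ⟨α, h1, h2, h3⟩ := h
  exact ⟨α, h1, h2, h3.trans hB⟩

theorem rep_step {F : Finset (M k m)} {g f : M k m} {n B : ℕ} (hf : f ∈ F) (e : Fin k →₀ ℕ) (a : ℤ)
    (h : Rep F (g - monomial e a • f) n B) (hd : vecDeg (monomial e a • f) ≤ n) :
    Rep F g n (B + a.natAbs) := by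
  classical
  obtain ⟨α, h1, h2, h3⟩ := h
  refine ⟨fun x => α x + if x = f then monomial e a else 0, ?_, ?_, ?_⟩
  · simp only [add_smul, Finset.sum_add_distrib, ite_smul, zero_smul, Finset.sum_ite_eq', hf,
      if_true]
    rw [← h1, sub_add_cancel]
  · intro x hx
    simp only [add_smul, ite_smul, zero_smul]
    apply vecDeg_add_le (h2 x hx)
    split_ifs with hxf
    · rw [hxf]; exact hd
    · simp [vecDeg_zero]
  · calc _ ≤ ∑ x ∈ F, (polyNorm (α x) + if x = f then a.natAbs else 0) := by
          apply Finset.sum_le_sum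
          intro x _
          refine (polyNorm_add _ _).trans ?_
          split_ifs
          · rw [polyNorm_monomial]
          · rw [polyNorm_zero]
      _ ≤ _ := by
          rw [Finset.sum_add_distrib]
          simp [hf, h3]

theorem division (S : Submodule (MvPolynomial (Fin k) ℤ) (M k m)) (F : Finset (M k m))
    (hFS : ∀ f ∈ F, f ∈ S) (hF : Grob S F) (n b : ℕ) (hb : ∀ f ∈ F, vecNorm f ≤ b) :
    ∀ (N : ℕ) (U : Finset ((Fin k →₀ ℕ) × Fin m)), U.card ≤ N →
      (∀ t ∈ U, t.1.degree ≤ n) → (∀ t ∈ U, ∀ s, key s ≤ key t → s ∈ U) →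
      ∀ g ∈ S, (∀ t, cf g t ≠ 0 → t ∈ U) → Rep F g n (vecNorm g * (b + 2) ^ N) := by
  classical
  intro N
  induction N with
  | zero =>
    intro U hU _ _ g _ hgU
    have : g = 0 := by
      by_contra hg
      obtain ⟨t, ht⟩ := exists_lead g hg
      have := hgU t ht.1
      simp at hU
      simp [hU] at this
    rw [this]
    exact rep_zero _ _ _
  | succ N ih =>
    intro U hU hUn hUl g hg hgU
    by_cases hg0 : g = 0
    · rw [hg0]; exact rep_zero _ _ _
    obtain ⟨⟨d, j⟩, ht⟩ := exists_lead g hg0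
    obtain ⟨f, hfF, d', hfL, hdd, q, hq⟩ := hF g hg _ ht
    simp only at hfL hdd hq
    set e := d - d' with he
    have hed : e + d' = d := tsub_add_cancel_of_le hdd
    have htU : (d, j) ∈ U := hgU _ ht.1
    have hsh : ∀ s, cf (monomial e q • f) s ≠ 0 → key s ≤ key (d, j) := by
      intro s hs
      have := shift_le hfL _ _ _ hs
      simpa [hed] using this
    have hsub : ∀ s, cf (g - monomial e q • f) s = cf g s - cf (monomial e q • f) s := by
      intro s; simp [cf]
    have hcf0 : cf (g - monomial e q • f) (d, j) = 0 := by
      have h1 := cf_shift f e d' j q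
      rw [hed] at h1
      rw [hsub, h1, hq]; ring
    have hqle : q.natAbs ≤ vecNorm g := by
      refine le_trans ?_ (cf_le_vecNorm g (d, j))
      rw [hq, Int.natAbs_mul]
      exact Nat.le_mul_of_pos_left _ (Int.natAbs_pos.2 hfL.1)
    have hrec := ih (U.filter fun s => key s < key (d, j)) (by
        have : (U.filter fun s => key s < key (d, j)).card < U.card := by
          apply Finset.card_lt_card
          rw [Finset.filter_ssubset]
          exact ⟨(d, j), htU, lt_irrefl _⟩
        omega)
      (fun t h => hUn t (Finset.mem_filter.1 h).1)
      (fun t h s hs => by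
        rw [Finset.mem_filter] at h ⊢
        exact ⟨hUl t h.1 s hs, lt_of_le_of_lt hs h.2⟩)
      (g - monomial e q • f) (S.sub_mem hg (S.smul_mem _ (hFS f hfF)))
      (fun s hs => by
        have hle : key s ≤ key (d, j) := by
          by_cases h1 : cf g s = 0
          · apply hsh
            intro h2
            apply hs
            rw [hsub, h1, h2, sub_zero]
          · exact ht.2 _ h1
        rw [Finset.mem_filter]
        refine ⟨hUl _ htU s hle, lt_of_le_of_ne hle ?_⟩
        intro h
        rw [key_inj h] at hs
        exact hs hcf0)
    refine (rep_step hfF e q hrec ?_).mono ?_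
    · rw [vecDeg_le_iff]
      intro s hs
      exact (key_deg (hsh s hs)).trans (hUn _ htU)
    · have h1 : vecNorm (g - monomial e q • f) ≤ vecNorm g * (b + 1) := by
        refine (vecNorm_sub _ _).trans ?_
        have := (vecNorm_monomial_smul e q f).trans (Nat.mul_le_mul hqle (hb f hfF))
        linarith
      have h2 : 1 ≤ (b + 2) ^ N := Nat.one_le_pow _ _ (by omega)
      calc _ ≤ vecNorm g * (b + 1) * (b + 2) ^ N + vecNorm g * (b + 2) ^ N := by
            apply Nat.add_le_add (Nat.mul_le_mul_right _ h1)
            exact hqle.trans (Nat.le_mul_of_pos_right _ h2)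
        _ = _ := by ring

theorem exists_D (k m n : ℕ) : ∃ U : Finset ((Fin k →₀ ℕ) × Fin m), U.card ≤ (n + 1) ^ k * m ∧
    ∀ t, t ∈ U ↔ t.1.degree ≤ n := by
  classical
  let V : Finset ((Fin k →₀ ℕ) × Fin m) :=
    (Finset.univ : Finset ((Fin k → Fin (n + 1)) × Fin m)).image
      fun x => (Finsupp.equivFunOnFinite.symm (fun i => (x.1 i : ℕ)), x.2)
  refine ⟨V.filter fun t => t.1.degree ≤ n, ?_, ?_⟩
  · refine (Finset.card_filter_le _ _).trans (Finset.card_image_le.trans ?_)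
    simp
  · rintro ⟨d, j⟩
    simp only [Finset.mem_filter, and_iff_right_iff_imp]
    intro h
    refine Finset.mem_image.2 ⟨(fun i => ⟨d i, ?_⟩, j), Finset.mem_univ _, ?_⟩
    · exact Nat.lt_succ_of_le ((Finsupp.le_degree i d).trans h)
    · simp only [Prod.mk.injEq, and_true]
      ext i
      simp

theorem vecNorm_const {g : M k m} (hg : vecDeg g ≤ 0) :
    vecNorm g = ∑ j, ((g j).coeff 0).natAbs := by
  rw [vecDeg_le_iff] at hg
  unfold vecNorm
  apply Finset.sum_congr rfl
  intro j _
  rw [polyNorm_eq _ {0}]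
  · simp
  · intro d hd
    have := hg (d, j) (by simpa using hd)
    simpa [Finsupp.degree_eq_zero_iff] using this

/-- Graver property -/
def Grav (S : Submodule (MvPolynomial (Fin k) ℤ) (M k m)) (F : Finset (M k m)) : Prop :=
  ∀ g ∈ S, g ≠ 0 → vecDeg g ≤ 0 → ∃ f ∈ F, f ≠ 0 ∧ vecDeg f ≤ 0 ∧
    vecNorm (g - f) + vecNorm f = vecNorm g

theorem vecDeg_sub_le {g h : M k m} {n : ℕ} (hg : vecDeg g ≤ n) (hh : vecDeg h ≤ n) :
    vecDeg (g - h) ≤ n := by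
  rw [sub_eq_add_neg]
  apply vecDeg_add_le hg
  rw [vecDeg_le_iff] at *
  intro t ht
  apply hh
  simpa [cf] using ht

theorem exists_grav (S : Submodule (MvPolynomial (Fin k) ℤ) (M k m)) :
    ∃ F : Finset (M k m), (∀ f ∈ F, f ∈ S) ∧ Grav S F := by
  obtain ⟨F, h1, h2⟩ := wqo_fin
    (fun (g : M k m) (j : Fin m) => (((g j).coeff 0).toNat, (-((g j).coeff 0)).toNat))
    (fun g => g ∈ S ∧ g ≠ 0 ∧ vecDeg g ≤ 0)
  refine ⟨F, fun f hf => (h1 f hf).1, ?_⟩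
  intro g hg hg0 hgd
  obtain ⟨f, hf, hle⟩ := h2 g ⟨hg, hg0, hgd⟩
  obtain ⟨_, hf0, hfd⟩ := h1 f hf
  refine ⟨f, hf, hf0, hfd, ?_⟩
  rw [vecNorm_const hgd, vecNorm_const hfd, vecNorm_const (vecDeg_sub_le hgd hfd),
    ← Finset.sum_add_distrib]
  apply Finset.sum_congr rfl
  intro j _
  have h3 := (hle j).1
  have h4 := (hle j).2
  simp only [Pi.sub_apply, coeff_sub] at *
  omega

theorem graver_division (S : Submodule (MvPolynomial (Fin k) ℤ) (M k m)) (F : Finset (M k m))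
    (hFS : ∀ f ∈ F, f ∈ S) (hF : Grav S F) :
    ∀ (N : ℕ), ∀ g ∈ S, vecDeg g ≤ 0 → vecNorm g ≤ N → Rep F g 0 N := by
  intro N
  induction N using Nat.strong_induction_on with
  | _ N ih =>
    intro g hg hgd hgN
    by_cases hg0 : g = 0
    · rw [hg0]; exact rep_zero _ _ _
    obtain ⟨f, hf, hf0, hfd, hn⟩ := hF g hg hg0 hgd
    have hpos : 1 ≤ vecNorm f := by
      obtain ⟨t, ht⟩ := exists_lead f hf0
      exact (Int.natAbs_pos.2 ht.1).trans_le (cf_le_vecNorm f t)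
    have hone : (monomial (0 : Fin k →₀ ℕ) (1 : ℤ)) • f = f := by
      rw [show (monomial (0 : Fin k →₀ ℕ) (1 : ℤ)) = 1 from rfl, one_smul]
    have hr := ih (N - 1) (by omega) (g - f) (S.sub_mem hg (hFS f hf)) (vecDeg_sub_le hgd hfd)
      (by omega)
    refine (rep_step hf 0 1 (B := N - 1) (by rw [hone]; exact hr) (by rw [hone]; exact hfd)).mono ?_
    simp
    omega

theorem main (S : Submodule (MvPolynomial (Fin k) ℤ) (M k m)) :
    ∃ (F : Finset (M k m)) (K : ℕ), 1 < K ∧ (∀ f ∈ F, f ∈ S) ∧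
      ∀ (n p : ℕ) (g : M k m), g ∈ S → vecDeg g ≤ n → vecNorm g ≤ p →
        Rep F g (vecDeg g) (p * K ^ (n ^ k)) := by
  classical
  obtain ⟨F1, h1S, h1⟩ := exists_grob S
  obtain ⟨F2, h2S, h2⟩ := exists_grav S
  have hFS : ∀ f ∈ F1 ∪ F2, f ∈ S := by
    intro f hf
    rcases Finset.mem_union.1 hf with h | h
    · exact h1S f h
    · exact h2S f h
  have h1' : Grob S (F1 ∪ F2) := by
    intro g hg t ht
    obtain ⟨f, hf, h⟩ := h1 g hg t ht
    exact ⟨f, Finset.mem_union_left _ hf, h⟩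
  have h2' : Grav S (F1 ∪ F2) := by
    intro g hg t ht
    obtain ⟨f, hf, h⟩ := h2 g hg t ht
    exact ⟨f, Finset.mem_union_right _ hf, h⟩
  set F := F1 ∪ F2
  set b := F.sup vecNorm
  have hb : ∀ f ∈ F, vecNorm f ≤ b := fun f hf => Finset.le_sup hf
  have hpos : 0 < (b + 2) ^ (2 ^ k * m) := Nat.pow_pos (by omega)
  refine ⟨F, (b + 2) ^ (2 ^ k * m) + 1, by omega, hFS, ?_⟩
  intro n p g hg hgn hgp
  rcases Nat.eq_zero_or_pos n with hn | hn
  · subst hn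
    have h0 : vecDeg g = 0 := by omega
    rw [h0]
    refine (graver_division S F hFS h2' p g hg (by omega) hgp).mono ?_
    exact Nat.le_mul_of_pos_right _ (Nat.pow_pos (by omega))
  · obtain ⟨U, hUc, hU⟩ := exists_D k m (vecDeg g)
    have hc : U.card ≤ 2 ^ k * m * n ^ k := by
      refine hUc.trans ?_
      calc _ ≤ (2 * n) ^ k * m := by gcongr; omega
        _ = _ := by rw [mul_pow]; ring
    refine (division S F hFS h1' (vecDeg g) b hb _ U hc (fun t ht => (hU t).1 ht)
      (fun t ht s hs => (hU s).2 ((key_deg hs).trans ((hU t).1 ht))) g hg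
      (fun t ht => (hU t).2 ((vecDeg_le_iff g _).1 le_rfl t ht))).mono ?_
    rw [pow_mul]
    gcongr
    omega

end DivAux

/-- Effective division (Gröbner basis) bound for submodules of a free
module of finite rank over `ℤ[x₁,…,x_k]`. -/
theorem division_mvpolynomial (k m : ℕ)
    (S : Submodule (MvPolynomial (Fin k) ℤ) (Fin m → MvPolynomial (Fin k) ℤ)) :
    ∃ (l : ℕ) (f : Fin l → (Fin m → MvPolynomial (Fin k) ℤ)) (K : ℝ), 1 < K ∧
      Submodule.span (MvPolynomial (Fin k) ℤ) (Set.range f) = S ∧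
      ∀ (n p : ℕ) (g : Fin m → MvPolynomial (Fin k) ℤ), g ∈ S → g ≠ 0 →
        vecDeg g ≤ n → vecNorm g ≤ p →
        ∃ α : Fin l → MvPolynomial (Fin k) ℤ,
          g = ∑ i, α i • f i ∧
          (∀ i, α i • f i ≠ 0 → vecDeg (α i • f i) ≤ vecDeg g) ∧
          ((∑ i, polyNorm (α i) : ℕ) : ℝ) ≤ (p : ℝ) * K ^ (n ^ k) := by

  obtain ⟨F, K, hK, hFS, h⟩ := DivAux.main S
  have key : ∀ (n p : ℕ) (g : Fin m → MvPolynomial (Fin k) ℤ), g ∈ S →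
        vecDeg g ≤ n → vecNorm g ≤ p →
        ∃ α : Fin F.card → MvPolynomial (Fin k) ℤ,
          g = ∑ i, α i • (F.equivFin.symm i : Fin m → MvPolynomial (Fin k) ℤ) ∧
          (∀ i, vecDeg (α i • (F.equivFin.symm i : Fin m → MvPolynomial (Fin k) ℤ)) ≤ vecDeg g) ∧
          ∑ i, polyNorm (α i) ≤ p * K ^ (n ^ k) := by
    intro n p g hg hn hp
    obtain ⟨α, h1, h2, h3⟩ := h n p g hg hn hp
    refine ⟨fun i => α (F.equivFin.symm i), ?_, ?_, ?_⟩
    · rw [Equiv.sum_comp F.equivFin.symm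
        (fun x : F => α x • (x : Fin m → MvPolynomial (Fin k) ℤ))]
      rw [Finset.sum_coe_sort F (fun x => α x • x)]
      exact h1
    · intro i
      exact h2 _ (F.equivFin.symm i).2
    · rw [Equiv.sum_comp F.equivFin.symm (fun x : F => polyNorm (α x))]
      rw [Finset.sum_coe_sort F (fun x => polyNorm (α x))]
      exact h3
  refine ⟨F.card, fun i => (F.equivFin.symm i : Fin m → MvPolynomial (Fin k) ℤ), K,
    by exact_mod_cast hK, ?_, ?_⟩
  · apply le_antisymm
    · rw [Submodule.span_le]
      rintro _ ⟨i, rfl⟩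
      exact hFS _ (F.equivFin.symm i).2
    · intro g hg
      obtain ⟨α, h1, _⟩ := key _ _ g hg le_rfl le_rfl
      rw [h1]
      exact Submodule.sum_mem _ fun i _ =>
        Submodule.smul_mem _ _ (Submodule.subset_span ⟨i, rfl⟩)
  · intro n p g hg _ hn hp
    obtain ⟨α, h1, h2, h3⟩ := key n p g hg hn hp
    exact ⟨α, h1, fun i _ => h2 i, by exact_mod_cast h3⟩
end

section
/- Let T = ℤ^k be a free abelian group of rank k (written multiplicatively), ℤT its integral group ring, M a free ℤT-module of finite rank m, and S ⊆ M a submodule. Then there exist a finite generating set f₁,…,f_l of S and a real constant K > 1 such that: every nonzero g ∈ S with deg(g) ≤ n and |g| ≤ p can be written as g = Σ_{i=1}^l α_i f_i with α_i ∈ ℤT, deg(α_i f_i) ≤ deg(g) for every i with α_i f_i ≠ 0, and Σ_{i=1}^l |α_i| ≤ p·K^{n^{2k}}. -/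
/-- The integral group ring of the free abelian group `ℤ^k`. -/
abbrev LaurentGroupRing (k : ℕ) := MonoidAlgebra ℤ (Multiplicative (Fin k → ℤ))

/-- `|λ|` : the sum of the absolute values of the integer coefficients. -/
noncomputable def grNorm {k : ℕ} (lam : LaurentGroupRing k) : ℕ :=
  ∑ t ∈ lam.coeff.support, (lam.coeff t).natAbs

/-- `deg λ` : the maximal `ℓ¹`-norm of an exponent vector in the support of `λ`. -/
noncomputable def grDeg {k : ℕ} (lam : LaurentGroupRing k) : ℕ :=
  lam.coeff.support.sup fun t => ∑ i, (Multiplicative.toAdd t i).natAbs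

/-- The norm of an element of the free module `(ℤT)^m`. -/
noncomputable def grVecNorm {k m : ℕ} (g : Fin m → LaurentGroupRing k) : ℕ :=
  ∑ j, grNorm (g j)

/-- The degree of an element of the free module `(ℤT)^m`. -/
noncomputable def grVecDeg {k m : ℕ} (g : Fin m → LaurentGroupRing k) : ℕ :=
  Finset.univ.sup fun j => grDeg (g j)

namespace DivGR

/-- coefficient of `g` at the monomial `x` -/
noncomputable def co {k m : ℕ} (g : Fin m → LaurentGroupRing k) (x : (Fin k → ℤ) × Fin m) : ℤ :=
  (g x.2).coeff (Multiplicative.ofAdd x.1)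

/-- a monomial of the group ring -/
noncomputable def mon {k : ℕ} (w : Fin k → ℤ) (q : ℤ) : LaurentGroupRing k :=
  MonoidAlgebra.single (Multiplicative.ofAdd w) q

/-- the `ℓ¹`-norm -/
def l1 {k : ℕ} (v : Fin k → ℤ) : ℕ := ∑ i, (v i).natAbs

/-- the monomial order -/
def key {k m : ℕ} (x : (Fin k → ℤ) × Fin m) : ℕ ×ₗ (Lex (Fin k → ℤ) ×ₗ Fin m) :=
  toLex (l1 x.1, toLex (toLex x.1, x.2))

lemma key_inj {k m : ℕ} {x y : (Fin k → ℤ) × Fin m} (h : key x = key y) : x = y := by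
  simp only [key, EmbeddingLike.apply_eq_iff_eq, Prod.mk.injEq] at h
  exact Prod.ext h.2.1 h.2.2

lemma l1_add {k : ℕ} (u w : Fin k → ℤ) : l1 (u + w) ≤ l1 u + l1 w := by
  unfold l1
  rw [← Finset.sum_add_distrib]
  exact Finset.sum_le_sum fun i _ => Int.natAbs_add_le _ _

lemma key_l1 {k m : ℕ} {x y : (Fin k → ℤ) × Fin m} (h : key x ≤ key y) : l1 x.1 ≤ l1 y.1 := by
  simp only [key, Prod.Lex.toLex_le_toLex] at h
  omega

lemma key_shift {k m : ℕ} (u v w : Fin k → ℤ) (i j : Fin m) (hw : l1 (v + w) = l1 v + l1 w)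
    (h : key (u, i) ≤ key (v, j)) : key (u + w, i) ≤ key (v + w, j) := by
  have h1 := key_l1 h
  have h2 := l1_add u w
  simp only at h1
  simp only [key, Prod.Lex.toLex_le_toLex] at h ⊢
  rcases lt_or_eq_of_le (show l1 (u + w) ≤ l1 (v + w) by omega) with h3 | h3
  · exact Or.inl h3
  · right
    refine ⟨h3, ?_⟩
    have h4 := (h.resolve_left (by omega)).2
    rcases h4 with h4 | ⟨h4, h5⟩
    · left
      exact add_lt_add_left h4 (toLex w)
    · right
      refine ⟨?_, h5⟩
      rw [toLex_inj] at h4 ⊢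
      rw [h4]

lemma co_mon {k m : ℕ} (w : Fin k → ℤ) (q : ℤ) (g : Fin m → LaurentGroupRing k)
    (v : Fin k → ℤ) (j : Fin m) : co (mon w q • g) (v, j) = q * co g (v - w, j) := by
  simp only [co, mon, Pi.smul_apply, smul_eq_mul]
  rw [MonoidAlgebra.coeff_single_mul_eq_mul_coeff (Multiplicative.ofAdd (v - w))]
  intro a _
  rw [← eq_inv_mul_iff_mul_eq]
  have : (Multiplicative.ofAdd w)⁻¹ * Multiplicative.ofAdd v = Multiplicative.ofAdd (v - w) := by
    rw [← ofAdd_neg, ← ofAdd_add]; congr 1; abel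
  rw [this]

lemma co_add {k m : ℕ} (g h : Fin m → LaurentGroupRing k) (x) : co (g + h) x = co g x + co h x := by
  simp [co]

lemma co_neg {k m : ℕ} (g : Fin m → LaurentGroupRing k) (x) : co (-g) x = - co g x := by
  simp [co]

lemma co_sub {k m : ℕ} (g h : Fin m → LaurentGroupRing k) (x) : co (g - h) x = co g x - co h x := by
  rw [sub_eq_add_neg, co_add, co_neg]; ring

lemma co_zero {k m : ℕ} (x) : co (0 : Fin m → LaurentGroupRing k) x = 0 := by
  simp [co]

lemma co_ext {k m : ℕ} {g h : Fin m → LaurentGroupRing k} (H : ∀ x, co g x = co h x) : g = h := by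
  funext j
  ext a
  exact H (Multiplicative.toAdd a, j)

/-! norms -/

lemma grNorm_eq {k : ℕ} (a : LaurentGroupRing k) (s : Finset (Multiplicative (Fin k → ℤ)))
    (h : a.coeff.support ⊆ s) : grNorm a = ∑ t ∈ s, (a.coeff t).natAbs := by
  unfold grNorm
  refine Finset.sum_subset h fun t _ ht => ?_
  rw [Finsupp.notMem_support_iff] at ht
  simp [ht]

lemma grNorm_add {k : ℕ} (a b : LaurentGroupRing k) : grNorm (a + b) ≤ grNorm a + grNorm b := by
  classical
  rw [grNorm_eq a (a.coeff.support ∪ b.coeff.support) Finset.subset_union_left,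
    grNorm_eq b (a.coeff.support ∪ b.coeff.support) Finset.subset_union_right,
    grNorm_eq (a + b) (a.coeff.support ∪ b.coeff.support) Finsupp.support_add,
    ← Finset.sum_add_distrib]
  exact Finset.sum_le_sum fun i _ => Int.natAbs_add_le _ _

lemma grNorm_neg {k : ℕ} (a : LaurentGroupRing k) : grNorm (-a) = grNorm a := by
  rw [grNorm_eq (-a) a.coeff.support (by simp)]
  simp [grNorm]

lemma grNorm_zero {k : ℕ} : grNorm (0 : LaurentGroupRing k) = 0 := by simp [grNorm]

lemma grNorm_mon {k : ℕ} (w : Fin k → ℤ) (q : ℤ) : grNorm (mon w q) = q.natAbs := by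
  rw [grNorm_eq _ {Multiplicative.ofAdd w} (by simpa [mon] using Finsupp.support_single_subset)]
  simp [mon]

lemma grNorm_mon_mul {k : ℕ} (w : Fin k → ℤ) (q : ℤ) (a : LaurentGroupRing k) :
    grNorm (mon w q * a) ≤ q.natAbs * grNorm a := by
  have key : ∀ t, (mon w q * a).coeff (Multiplicative.ofAdd w * t) = q * a.coeff t := by
    intro t
    rw [mon, MonoidAlgebra.coeff_single_mul_eq_mul_coeff t]
    intro b _
    exact mul_right_inj _
  rw [grNorm_eq _ (a.coeff.support.map (Equiv.mulLeft (Multiplicative.ofAdd w)).toEmbedding),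
    Finset.sum_map]
  · simp [key, grNorm, Finset.mul_sum, Int.natAbs_mul]
  · intro t ht
    rw [Finset.mem_map_equiv, Finsupp.mem_support_iff]
    intro h
    rw [Finsupp.mem_support_iff] at ht
    apply ht
    have := key ((Multiplicative.ofAdd w)⁻¹ * t)
    rw [mul_inv_cancel_left] at this
    rw [this]
    simp only [Equiv.mulLeft_symm, Equiv.coe_mulLeft] at h
    simp [h]

lemma norm_sub {k m : ℕ} (g h : Fin m → LaurentGroupRing k) :
    grVecNorm (g - h) ≤ grVecNorm g + grVecNorm h := by
  unfold grVecNorm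
  rw [← Finset.sum_add_distrib]
  refine Finset.sum_le_sum fun i _ => ?_
  rw [Pi.sub_apply, sub_eq_add_neg, ← grNorm_neg (h i)]
  exact grNorm_add _ _

lemma norm_mon {k m : ℕ} (w : Fin k → ℤ) (q : ℤ) (g : Fin m → LaurentGroupRing k) :
    grVecNorm (mon w q • g) ≤ q.natAbs * grVecNorm g := by
  unfold grVecNorm
  rw [Finset.mul_sum]
  exact Finset.sum_le_sum fun i _ => grNorm_mon_mul _ _ _

lemma co_le_norm {k m : ℕ} (g : Fin m → LaurentGroupRing k) (x) :
    (co g x).natAbs ≤ grVecNorm g := by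
  classical
  refine le_trans ?_ (Finset.single_le_sum (f := fun j => grNorm (g j)) (fun _ _ => Nat.zero_le _)
    (Finset.mem_univ x.2))
  rw [grNorm_eq (g x.2) (insert (Multiplicative.ofAdd x.1) (g x.2).coeff.support)
    (Finset.subset_insert _ _)]
  exact Finset.single_le_sum (f := fun t => ((g x.2).coeff t).natAbs) (fun _ _ => Nat.zero_le _)
    (Finset.mem_insert_self _ _)

/-! representations -/

/-- support contained in `s` -/
def Supp {k m : ℕ} (g : Fin m → LaurentGroupRing k) (s : Finset ((Fin k → ℤ) × Fin m)) : Prop :=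
  ∀ x, co g x ≠ 0 → x ∈ s

lemma Supp.add {k m : ℕ} {g h : Fin m → LaurentGroupRing k} {s : Finset ((Fin k → ℤ) × Fin m)}
    (hg : Supp g s) (hh : Supp h s) : Supp (g + h) s := by
  intro x hx
  by_contra hs
  have h1 : co g x = 0 := by by_contra h; exact hs (hg x h)
  have h2 : co h x = 0 := by by_contra h; exact hs (hh x h)
  exact hx (by rw [co_add, h1, h2, add_zero])

/-- bounded representation -/
def Rep {k m : ℕ} (F : Finset (Fin m → LaurentGroupRing k)) (s : Finset ((Fin k → ℤ) × Fin m))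
    (N : ℕ) (g : Fin m → LaurentGroupRing k) : Prop :=
  ∃ α : (Fin m → LaurentGroupRing k) → LaurentGroupRing k,
    g = ∑ f ∈ F, α f • f ∧ (∀ f ∈ F, Supp (α f • f) s) ∧ ∑ f ∈ F, grNorm (α f) ≤ N

lemma Rep.zero {k m : ℕ} (F : Finset (Fin m → LaurentGroupRing k)) (s) (N : ℕ) :
    Rep F s N 0 := by
  refine ⟨fun _ => 0, by simp, fun f _ x hx => ?_, by simp [grNorm_zero]⟩
  rw [zero_smul, co_zero] at hx
  exact absurd rfl hx

lemma Rep.mono {k m : ℕ} {F F' : Finset (Fin m → LaurentGroupRing k)}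
    {s s' : Finset ((Fin k → ℤ) × Fin m)}
    {N N' : ℕ} {g : Fin m → LaurentGroupRing k} (h : Rep F s N g) (hF : F ⊆ F') (hs : s ⊆ s')
    (hN : N ≤ N') : Rep F' s' N' g := by
  classical
  obtain ⟨α, h1, h2, h3⟩ := h
  refine ⟨fun f => if f ∈ F then α f else 0, ?_, ?_, ?_⟩
  · rw [h1, ← Finset.sum_subset hF]
    · exact Finset.sum_congr rfl fun f hf => by simp only [if_pos hf]
    · intro f _ hf
      simp only [if_neg hf, zero_smul]
  · intro f _
    by_cases hf : f ∈ F
    · simp only [if_pos hf]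
      exact fun x hx => hs (h2 f hf x hx)
    · simp only [if_neg hf, zero_smul]
      exact fun x hx => absurd (co_zero x) hx
  · refine le_trans (le_of_eq ?_) (h3.trans hN)
    rw [← Finset.sum_subset hF]
    · exact Finset.sum_congr rfl fun f hf => by simp only [if_pos hf]
    · intro f _ hf
      simp only [if_neg hf, grNorm_zero]

lemma Rep.add_mon {k m : ℕ} {F : Finset (Fin m → LaurentGroupRing k)}
    {s : Finset ((Fin k → ℤ) × Fin m)}
    {N : ℕ} {g f : Fin m → LaurentGroupRing k} (h : Rep F s N g) (hf : f ∈ F)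
    (w : Fin k → ℤ) (q : ℤ) (hs : Supp (mon w q • f) s) :
    Rep F s (N + q.natAbs) (g + mon w q • f) := by
  classical
  obtain ⟨α, h1, h2, h3⟩ := h
  refine ⟨fun a => α a + if a = f then mon w q else 0, ?_, ?_, ?_⟩
  · simp only [add_smul, Finset.sum_add_distrib, ite_smul, zero_smul]
    rw [Finset.sum_ite_eq' F f, if_pos hf, ← h1]
  · intro a ha
    by_cases hfa : a = f
    · subst hfa
      simp only [if_true, add_smul]
      exact (h2 a ha).add hs
    · simp only [if_neg hfa, add_zero]
      exact h2 a ha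
  · calc _ ≤ ∑ a ∈ F, (grNorm (α a) + if a = f then q.natAbs else 0) := by
          refine Finset.sum_le_sum fun a _ => (grNorm_add _ _).trans ?_
          split_ifs
          · rw [grNorm_mon]
          · rw [grNorm_zero]
      _ ≤ _ := by
          rw [Finset.sum_add_distrib, Finset.sum_ite_eq' F f, if_pos hf]
          omega

/-- the leading monomial is at most `x` -/
def Lead {k m : ℕ} (g : Fin m → LaurentGroupRing k) (x : (Fin k → ℤ) × Fin m) : Prop :=
  ∀ y, co g y ≠ 0 → key y ≤ key x

lemma Lead.sub {k m : ℕ} {g h : Fin m → LaurentGroupRing k} {x} (hg : Lead g x) (hh : Lead h x) :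
    Lead (g - h) x := by
  intro y hy
  by_contra hs
  have h1 : co g y = 0 := by by_contra h; exact hs (hg y h)
  have h2 : co h y = 0 := by by_contra h; exact hs (hh y h)
  exact hy (by rw [co_sub, h1, h2, sub_zero])

lemma division {k m : ℕ} (S : Submodule (LaurentGroupRing k) (Fin m → LaurentGroupRing k))
    (F : Finset (Fin m → LaurentGroupRing k)) (C : ℕ) (hC : ∀ f ∈ F, grVecNorm f ≤ C)
    (hFS : ∀ f ∈ F, f ∈ S)
    (hF : ∀ g ∈ S, ∀ x, Lead g x → co g x ≠ 0 → ∃ f ∈ F, ∃ (w : Fin k → ℤ) (q : ℤ), Lead (mon w q • f) x ∧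
      co (mon w q • f) x = co g x ∧ q.natAbs ≤ (co g x).natAbs)
    (s : Finset ((Fin k → ℤ) × Fin m)) : (∀ x ∈ s, ∀ y, key y ≤ key x → y ∈ s) →
    ∀ g ∈ S, Supp g s → Rep F s (grVecNorm g * (2 + C) ^ s.card) g := by
  classical
  induction s using Finset.induction_on_max_value (key (k := k) (m := m)) with
  | empty =>
    intro _ g _ hs
    have : g = 0 := co_ext fun x => by
      rw [co_zero]
      by_contra h
      exact absurd (hs x h) (Finset.notMem_empty x)
    subst this
    exact Rep.zero _ _ _
  | insert a s ha hmax ih =>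
    intro hlow g hg hs
    have hlow' : ∀ x ∈ s, ∀ y, key y ≤ key x → y ∈ s := by
      intro x hx y hy
      have h1 := hlow x (Finset.mem_insert_of_mem hx) y hy
      rcases Finset.mem_insert.1 h1 with rfl | h1
      · have := key_inj (le_antisymm hy (hmax x hx))
        exact absurd (this ▸ hx) ha
      · exact h1
    have hlead : Lead g a := by
      intro y hy
      rcases Finset.mem_insert.1 (hs y hy) with rfl | h1
      · exact le_rfl
      · exact hmax y h1
    have hcard : (insert a s).card = s.card + 1 := Finset.card_insert_of_notMem ha
    have hpow : 1 ≤ (2 + C) ^ s.card := Nat.one_le_pow _ _ (by omega)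
    by_cases h0 : co g a = 0
    · refine (ih hlow' g hg fun x hx => ?_).mono subset_rfl (Finset.subset_insert _ _) ?_
      · rcases Finset.mem_insert.1 (hs x hx) with rfl | h1
        · exact absurd h0 hx
        · exact h1
      · rw [hcard]
        exact Nat.mul_le_mul_left _ (Nat.pow_le_pow_right (by omega) (by omega))
    · obtain ⟨f, hf, w, q, hl, hco, hq⟩ := hF g hg a hlead h0
      have hsupp : Supp (mon w q • f) (insert a s) := fun y hy =>
        hlow a (Finset.mem_insert_self _ _) y (hl y hy)
      have hR := ih hlow' (g - mon w q • f) (S.sub_mem hg (S.smul_mem _ (hFS f hf))) (by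
        intro y hy
        have h1 := hlow a (Finset.mem_insert_self _ _) y (hlead.sub hl y hy)
        rcases Finset.mem_insert.1 h1 with rfl | h1
        · rw [co_sub, hco, sub_self] at hy
          exact absurd rfl hy
        · exact h1)
      have hR2 := (hR.mono subset_rfl (Finset.subset_insert a s) le_rfl).add_mon hf w q hsupp
      rw [sub_add_cancel] at hR2
      refine hR2.mono subset_rfl subset_rfl ?_
      have hq' : q.natAbs ≤ grVecNorm g := hq.trans (co_le_norm g a)
      have hn : grVecNorm (g - mon w q • f) ≤ grVecNorm g * (1 + C) := by
        refine (norm_sub _ _).trans ?_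
        have h1 := (norm_mon w q f).trans (Nat.mul_le_mul hq' (hC f hf))
        linarith
      rw [hcard, pow_succ]
      have h2 := Nat.mul_le_mul_right ((2 + C) ^ s.card) hn
      have h3 := Nat.mul_le_mul_left (grVecNorm g) hpow
      nlinarith

/-! well-quasi-order input -/

lemma wqo_basis {A Q : Type*} [PartialOrder Q] [WellQuasiOrderedLE Q] (e : A → Q) (P : Set A) :
    ∃ B : Finset A, (∀ b ∈ B, b ∈ P) ∧ ∀ a ∈ P, ∃ b ∈ B, e b ≤ e a := by
  classical
  have hfin : {q | Minimal (· ∈ e '' P) q}.Finite :=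
    WellQuasiOrderedLE.finite_of_isAntichain (setOfPred_minimal_antichain _)
  have hex : ∀ q : {q | Minimal (· ∈ e '' P) q}, ∃ a ∈ P, e a = q := fun q => q.2.1
  choose r hr1 hr2 using hex
  have := hfin.fintype
  refine ⟨Finset.univ.image r, ?_, ?_⟩
  · intro b hb
    obtain ⟨q, _, rfl⟩ := Finset.mem_image.1 hb
    exact hr1 q
  · intro a ha
    obtain ⟨q, hq1, hq2⟩ := (Set.isPWO_of_wellQuasiOrderedLE (e '' P)).exists_le_minimal
      (Set.mem_image_of_mem e ha)
    exact ⟨r ⟨q, hq2⟩, Finset.mem_image_of_mem _ (Finset.mem_univ _), (hr2 ⟨q, hq2⟩).trans_le hq1⟩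

/-- positive and negative parts -/
def enc {k : ℕ} (v : Fin k → ℤ) : (Fin k → ℕ) × (Fin k → ℕ) :=
  (fun i => (v i).toNat, fun i => (-v i).toNat)

lemma enc_le {k : ℕ} {u v : Fin k → ℤ} (h : enc u ≤ enc v) : l1 v = l1 u + l1 (v - u) := by
  unfold l1
  rw [← Finset.sum_add_distrib]
  refine Finset.sum_congr rfl fun i _ => ?_
  have h1 := h.1 i
  have h2 := h.2 i
  simp only [enc] at h1 h2
  simp only [Pi.sub_apply]
  omega

lemma exists_groebner {k m : ℕ}
    (S : Submodule (LaurentGroupRing k) (Fin m → LaurentGroupRing k)) :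
    ∃ F : Finset (Fin m → LaurentGroupRing k), (∀ f ∈ F, f ∈ S) ∧
    (∀ g ∈ S, ∀ x, Lead g x → co g x ≠ 0 → ∃ f ∈ F, ∃ (w : Fin k → ℤ) (q : ℤ), Lead (mon w q • f) x ∧
      co (mon w q • f) x = co g x ∧ q.natAbs ≤ (co g x).natAbs) := by
  classical
  obtain ⟨B, hB1, hB2⟩ := wqo_basis
    (fun a : ((Fin k → ℤ) × Fin m) × (Fin m → LaurentGroupRing k) =>
      (enc a.1.1, (a.1.2 : ℕ), (a.1.2.rev : ℕ), (co a.2 a.1).natAbs))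
    {a | a.2 ∈ S ∧ Lead a.2 a.1 ∧ co a.2 a.1 ≠ 0}
  refine ⟨B.image Prod.snd, ?_, ?_⟩
  · intro f hf
    obtain ⟨b, hb, rfl⟩ := Finset.mem_image.1 hf
    exact (hB1 b hb).1
  · intro g hg x hl h0
    have hex : ∃ n : ℕ, ∃ h ∈ S, Lead h x ∧ co h x ≠ 0 ∧ (co h x).natAbs = n :=
      ⟨_, g, hg, hl, h0, rfl⟩
    obtain ⟨h, hhS, hhl, hh0, hhn⟩ := Nat.find_spec hex
    have hmin := fun n (hn : n < Nat.find hex) => Nat.find_min hex hn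
    obtain ⟨⟨y, f⟩, hb, hle⟩ := hB2 (x, h) ⟨hhS, hhl, hh0⟩
    obtain ⟨hfS, hfl, hf0⟩ := hB1 _ hb
    obtain ⟨v, j⟩ := x
    obtain ⟨u, i⟩ := y
    simp only [Prod.mk_le_mk] at hle hfS hfl hf0
    obtain ⟨he, h1, h2, h3⟩ := hle
    have hij : i = j := by
      rw [Fin.val_rev, Fin.val_rev] at h2
      ext
      have := i.2
      have := j.2
      omega
    subst hij
    have hl1 := enc_le he
    have hleadq : ∀ q, Lead (mon (v - u) q • f) (v, i) := by
      rintro q ⟨z, l⟩ hz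
      rw [co_mon] at hz
      have h4 := hfl _ (right_ne_zero_of_mul hz)
      have h5 := key_shift _ _ (v - u) _ _ (by rw [add_sub_cancel]; exact hl1) h4
      rwa [sub_add_cancel, add_sub_cancel] at h5
    have hcoq : ∀ q, co (mon (v - u) q • f) (v, i) = q * co f (u, i) := by
      intro q
      rw [co_mon, sub_sub_cancel]
    refine ⟨f, Finset.mem_image_of_mem _ hb, v - u, co g (v, i) / co f (u, i), hleadq _, ?_, ?_⟩
    · rw [hcoq]
      by_contra hne
      have hr : co (g - mon (v - u) (co g (v, i) / co f (u, i)) • f) (v, i)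
          = co g (v, i) % co f (u, i) := by
        rw [co_sub, hcoq, Int.emod_def, mul_comm]
      have hlt : (co g (v, i) % co f (u, i)).natAbs < (co f (u, i)).natAbs := by
        have h7 := Int.emod_lt_abs (co g (v, i)) hf0
        have h8 := Int.emod_nonneg (co g (v, i)) hf0
        zify
        rwa [abs_of_nonneg h8]
      refine hmin (co g (v, i) % co f (u, i)).natAbs (by omega) ⟨_, S.sub_mem hg
        (S.smul_mem _ hfS), hl.sub (hleadq _), ?_, congrArg Int.natAbs hr⟩
      rw [hr]
      intro h6
      apply hne
      have := Int.emod_add_mul_ediv (co g (v, i)) (co f (u, i))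
      rw [h6] at this
      linarith
    · exact Int.natAbs_ediv_le_natAbs _ _

/-! degree zero part -/

/-- constant vectors -/
noncomputable def cst {k m : ℕ} (z : Fin m → ℤ) : Fin m → LaurentGroupRing k := fun j => mon 0 (z j)

lemma cst_sub {k m : ℕ} (z y : Fin m → ℤ) : (cst (z - y) : Fin m → LaurentGroupRing k)
    = cst z - cst y := by
  funext j
  simp [cst, mon]

lemma norm_cst {k m : ℕ} (z : Fin m → ℤ) :
    grVecNorm (cst z : Fin m → LaurentGroupRing k) = l1 z := by
  simp [grVecNorm, cst, grNorm_mon, l1]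

lemma cst_supp {k m : ℕ} (z : Fin m → ℤ) (x : (Fin k → ℤ) × Fin m) (h : co (cst z) x ≠ 0) :
    x.1 = 0 := by
  by_contra h1
  apply h
  simp only [co, cst, mon, MonoidAlgebra.coeff_single]
  rw [Finsupp.single_eq_of_ne]
  exact h1

/-- the ball of monomials of degree at most `n` -/
noncomputable def ball (k m n : ℕ) : Finset ((Fin k → ℤ) × Fin m) :=
  ((Fintype.piFinset fun _ => Finset.Icc (-(n : ℤ)) n) ×ˢ Finset.univ).filter
    fun x => l1 x.1 ≤ n

lemma mem_ball {k m n : ℕ} (x : (Fin k → ℤ) × Fin m) : x ∈ ball k m n ↔ l1 x.1 ≤ n := by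
  simp only [ball, Finset.mem_filter, Finset.mem_product, Fintype.mem_piFinset, Finset.mem_Icc,
    Finset.mem_univ, and_true, and_iff_right_iff_imp]
  intro h i
  have : (x.1 i).natAbs ≤ l1 x.1 :=
    Finset.single_le_sum (f := fun i => (x.1 i).natAbs) (fun _ _ => Nat.zero_le _)
      (Finset.mem_univ i)
  omega

lemma card_ball (k m n : ℕ) : (ball k m n).card ≤ (2 * n + 1) ^ k * m := by
  refine (Finset.card_filter_le _ _).trans ?_
  rw [Finset.card_product, Fintype.card_piFinset]
  simp only [Int.card_Icc, Finset.prod_const, Finset.card_univ, Fintype.card_fin]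
  apply Nat.mul_le_mul_right
  apply Nat.pow_le_pow_left
  omega

lemma supp_ball {k m n : ℕ} (g : Fin m → LaurentGroupRing k) :
    Supp g (ball k m n) ↔ grVecDeg g ≤ n := by
  simp only [Supp, mem_ball, grVecDeg, grDeg, Finset.sup_le_iff, Finset.mem_univ, true_imp_iff,
    Finsupp.mem_support_iff]
  constructor
  · intro h j t ht
    exact h (Multiplicative.toAdd t, j) ht
  · intro h x hx
    exact h x.2 (Multiplicative.ofAdd x.1) hx

lemma exists_graver {k m : ℕ}
    (S : Submodule (LaurentGroupRing k) (Fin m → LaurentGroupRing k)) :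
    ∃ F : Finset (Fin m → LaurentGroupRing k), (∀ f ∈ F, f ∈ S) ∧
    ∀ g ∈ S, grVecDeg g = 0 → Rep F (ball k m 0) (grVecNorm g) g := by
  classical
  obtain ⟨B, hB1, hB2⟩ := wqo_basis (enc (k := m))
    {z | (cst z : Fin m → LaurentGroupRing k) ∈ S ∧ z ≠ 0}
  refine ⟨B.image cst, ?_, ?_⟩
  · intro f hf
    obtain ⟨b, hb, rfl⟩ := Finset.mem_image.1 hf
    exact (hB1 b hb).1
  · have main : ∀ (n : ℕ) (z : Fin m → ℤ), (cst z : Fin m → LaurentGroupRing k) ∈ S → l1 z = n →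
        Rep (B.image cst) (ball k m 0) (l1 z) (cst z : Fin m → LaurentGroupRing k) := by
      intro n
      induction n using Nat.strong_induction_on with
      | _ n ih =>
        intro z hz hn
        by_cases h0 : z = 0
        · subst h0
          have : (cst 0 : Fin m → LaurentGroupRing k) = 0 := by
            funext j; simp [cst, mon]
          rw [this]
          exact Rep.zero _ _ _
        · obtain ⟨u, hu, hle⟩ := hB2 z ⟨hz, h0⟩
          obtain ⟨huS, hu0⟩ := hB1 u hu
          have hl := enc_le hle
          have hpos : 1 ≤ l1 u := by
            by_contra h
            apply hu0
            funext i
            have : (u i).natAbs ≤ l1 u :=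
              Finset.single_le_sum (f := fun i => (u i).natAbs) (fun _ _ => Nat.zero_le _)
                (Finset.mem_univ i)
            simp only [Pi.zero_apply]
            omega
          have hS : (cst (z - u) : Fin m → LaurentGroupRing k) ∈ S := by
            rw [cst_sub]; exact S.sub_mem hz huS
          have hone : mon (0 : Fin k → ℤ) 1 = 1 := rfl
          have hR := (ih (l1 (z - u)) (by omega) (z - u) hS rfl).add_mon
            (Finset.mem_image_of_mem cst hu) 0 1 (by
              rw [hone, one_smul]
              intro x hx
              rw [mem_ball, cst_supp u x hx]
              simp [l1])
          rw [hone, one_smul, cst_sub, sub_add_cancel] at hR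
          exact hR.mono subset_rfl subset_rfl (by simp; omega)
    intro g hg hd
    have hgc : g = cst (fun j => co g (0, j)) := by
      refine co_ext fun x => ?_
      by_cases hx : x.1 = 0
      · obtain ⟨v, j⟩ := x
        simp only at hx
        subst hx
        simp [co, cst, mon]
      · have h1 : co g x = 0 := by
          by_contra h
          have h2 := (supp_ball g).2 hd.le x h
          rw [mem_ball] at h2
          apply hx
          funext i
          have : (x.1 i).natAbs ≤ l1 x.1 :=
            Finset.single_le_sum (f := fun i => (x.1 i).natAbs) (fun _ _ => Nat.zero_le _)
              (Finset.mem_univ i)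
          simp only [Pi.zero_apply]
          omega
        rw [h1]
        by_contra h
        exact hx (cst_supp _ x (Ne.symm h))
    rw [hgc] at hg ⊢
    rw [norm_cst]
    exact main _ _ hg rfl

end DivGR

/-- Effective division bound for submodules of a free module of finite
rank over the integral group ring of the free abelian group `T = ℤ^k`. -/
theorem division_group_ring (k m : ℕ)
    (S : Submodule (LaurentGroupRing k) (Fin m → LaurentGroupRing k)) :
    ∃ (l : ℕ) (f : Fin l → (Fin m → LaurentGroupRing k)) (K : ℝ), 1 < K ∧
      Submodule.span (LaurentGroupRing k) (Set.range f) = S ∧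
      ∀ (n p : ℕ) (g : Fin m → LaurentGroupRing k), g ∈ S → g ≠ 0 →
        grVecDeg g ≤ n → grVecNorm g ≤ p →
        ∃ α : Fin l → LaurentGroupRing k,
          g = ∑ i, α i • f i ∧
          (∀ i, α i • f i ≠ 0 → grVecDeg (α i • f i) ≤ grVecDeg g) ∧
          ((∑ i, grNorm (α i) : ℕ) : ℝ) ≤ (p : ℝ) * K ^ (n ^ (2 * k)) := by
  classical
  obtain ⟨F₁, hF₁S, hF₁⟩ := DivGR.exists_groebner S
  obtain ⟨F₂, hF₂S, hF₂⟩ := DivGR.exists_graver S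
  let F := F₁ ∪ F₂
  let C := ∑ f ∈ F₁, grVecNorm f
  have hC : ∀ f ∈ F₁, grVecNorm f ≤ C := fun f hf =>
    Finset.single_le_sum (f := fun f => grVecNorm f) (fun _ _ => Nat.zero_le _) hf
  have hFS : ∀ f ∈ F, f ∈ S := by
    intro f hf
    rcases Finset.mem_union.1 hf with h | h
    · exact hF₁S f h
    · exact hF₂S f h
  let K : ℕ := (2 + C) ^ (3 ^ k * m + 1)
  have hK : 1 < K := Nat.one_lt_pow (by omega) (by omega)
  have hrep : ∀ (n p : ℕ) (g : Fin m → LaurentGroupRing k), g ∈ S →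
      grVecDeg g ≤ n → grVecNorm g ≤ p →
      DivGR.Rep F (DivGR.ball k m (grVecDeg g)) (p * K ^ (n ^ (2 * k))) g := by
    intro n p g hg hn hp
    by_cases hd : grVecDeg g = 0
    · rw [hd]
      refine (hF₂ g hg hd).mono Finset.subset_union_right subset_rfl ?_
      exact hp.trans (Nat.le_mul_of_pos_right _ (Nat.pow_pos (by omega)))
    · refine (DivGR.division S F₁ C hC hF₁S hF₁ (DivGR.ball k m (grVecDeg g)) ?_ g hg
        ((DivGR.supp_ball g).2 le_rfl)).mono Finset.subset_union_left subset_rfl ?_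
      · intro x hx y hy
        rw [DivGR.mem_ball] at hx ⊢
        exact (DivGR.key_l1 hy).trans hx
      · refine Nat.mul_le_mul hp ?_
        rw [← pow_mul]
        refine Nat.pow_le_pow_right (by omega) ?_
        refine (DivGR.card_ball _ _ _).trans ?_
        calc (2 * grVecDeg g + 1) ^ k * m ≤ (3 * n) ^ k * m :=
              Nat.mul_le_mul_right _ (Nat.pow_le_pow_left (by omega) _)
          _ = (3 ^ k * m) * n ^ k := by rw [mul_pow]; ring
          _ ≤ (3 ^ k * m + 1) * n ^ (2 * k) :=
              Nat.mul_le_mul (by omega) (Nat.pow_le_pow_right (by omega) (by omega))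
  let f : Fin F.card → (Fin m → LaurentGroupRing k) := fun i => (F.equivFin.symm i : _)
  have hsum : ∀ {A : Type} [AddCommMonoid A] (φ : (Fin m → LaurentGroupRing k) → A),
      ∑ i, φ (f i) = ∑ a ∈ F, φ a := by
    intro A _ φ
    rw [← Finset.sum_coe_sort F]
    exact Equiv.sum_comp F.equivFin.symm (fun a => φ a)
  refine ⟨F.card, f, (K : ℝ), by exact_mod_cast hK, ?_, ?_⟩
  · apply le_antisymm
    · rw [Submodule.span_le]
      rintro _ ⟨i, rfl⟩
      exact hFS _ (F.equivFin.symm i).2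
    · intro g hg
      obtain ⟨α, h1, -, -⟩ := hrep _ _ g hg le_rfl le_rfl
      rw [h1, ← hsum (fun a => α a • a)]
      exact Submodule.sum_mem _ fun i _ => Submodule.smul_mem _ _ (Submodule.subset_span ⟨i, rfl⟩)
  · intro n p g hg _ hn hp
    obtain ⟨α, h1, h2, h3⟩ := hrep n p g hg hn hp
    refine ⟨fun i => α (f i), ?_, ?_, ?_⟩
    · rw [hsum (fun a => α a • a)]
      exact h1
    · intro i _
      exact (DivGR.supp_ball _).1 (h2 _ (F.equivFin.symm i).2)
    · rw [hsum (fun a => grNorm (α a))]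
      exact_mod_cast h3
end

section
/- Let U be a free abelian group with basis u₁,…,u_k and let T be a finitely generated abelian group generated by t₁,…,t_l with k ≤ l, where t₁,…,t_k have infinite order. For each 1 ≤ i ≤ k let d_i ≥ 1 and let f_i = 1 + c_{i,1}t_i + ⋯ + c_{i,d_i−1}t_i^{d_i−1} + t_i^{d_i} ∈ ℤT with c_{i,j} ∈ ℤ. Let M be a free module over the group ring ℤ[U×T] with basis e₁,…,e_r, and let S ⊆ M be the submodule generated by {(u_i − f_i)·e_j : 1 ≤ i ≤ k, 1 ≤ j ≤ r} (where u_i and f_i are viewed in ℤ[U×T] via the inclusions U, T ↪ U×T). If h = Σ_{i=1}^r h_i e_i ∈ S and every h_i lies in the subring ℤT ⊆ ℤ[U×T] (i.e., h_i is supported on {1}×T), then h = 0. -/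
open MonoidAlgebra

theorem aux_regular {T : Type} [CommGroup T] (t : T) (ht : ¬ IsOfFinOrder t) (d : ℕ)
    (c : ℕ → ℤ) (hc : c 0 = 1) :
    (∑ s ∈ Finset.range (d + 1), MonoidAlgebra.single (t ^ s) (c s) : MonoidAlgebra ℤ T) ∈
      nonZeroDivisors (MonoidAlgebra ℤ T) := by
  rw [mem_nonZeroDivisors_iff_right]
  intro g hg
  by_contra hne
  obtain ⟨y, hy⟩ : ∃ y, g.coeff y ≠ 0 := by
    by_contra! hall
    exact hne (by ext y; simpa using hall y)
  have hinj : Function.Injective (fun n : ℤ => t ^ n * y) := fun a b hab =>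
    injective_zpow_iff_not_isOfFinOrder.2 ht (mul_right_cancel hab)
  have hfin : {n : ℤ | g.coeff (t ^ n * y) ≠ 0}.Finite := by
    refine (g.coeff.support.finite_toSet.preimage hinj.injOn).subset ?_
    intro n hn
    simpa using hn
  obtain ⟨n, hn, hmin⟩ := Set.exists_min_image _ id hfin ⟨0, by simpa using hy⟩
  have h1 := congrArg (fun z : MonoidAlgebra ℤ T => z.coeff (t ^ n * y)) hg
  rw [mul_comm, Finset.sum_mul] at h1
  simp only [MonoidAlgebra.coeff_sum, Finsupp.finsetSum_apply, MonoidAlgebra.coeff_single_mul_apply,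
    MonoidAlgebra.coeff_zero, Finsupp.zero_apply] at h1
  rw [Finset.sum_range_succ', Finset.sum_eq_zero] at h1
  · apply hn
    simpa [hc] using h1
  · intro s _
    have : g.coeff ((t ^ (s + 1))⁻¹ * (t ^ n * y)) = 0 := by
      by_contra hcon
      have e : (t ^ (s + 1))⁻¹ * (t ^ n * y) = t ^ (n - ((s + 1 : ℕ) : ℤ)) * y := by
        rw [zpow_sub, zpow_natCast, ← mul_assoc, mul_comm (t ^ (s+1))⁻¹]
      rw [e] at hcon
      have := hmin _ hcon
      simp only [id] at this
      omega
    rw [this, mul_zero]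

/-- The homomorphism from a free abelian group given by images of the basis. -/
def auxHom {k : ℕ} {G : Type} [CommGroup G] (w : Fin k → G) :
    Multiplicative (Fin k → ℤ) →* G where
  toFun v := ∏ i, w i ^ (Multiplicative.toAdd v i)
  map_one' := by simp
  map_mul' a b := by simp [zpow_add, Finset.prod_mul_distrib]

theorem auxHom_single {k : ℕ} {G : Type} [CommGroup G] (w : Fin k → G) (i : Fin k) :
    auxHom w (Multiplicative.ofAdd (Pi.single i (1 : ℤ))) = w i := by
  classical
  simp only [auxHom, MonoidHom.coe_mk, OneHom.coe_mk, toAdd_ofAdd]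
  rw [Finset.prod_eq_single i]
  · simp
  · intro j _ hj
    simp [hj]
  · simp

theorem aux_exists {k : ℕ} {T L : Type} [CommGroup T] [CommRing L]
    (ι : MonoidAlgebra ℤ T →+* L) (w : Fin k → Lˣ) :
    ∃ φ : MonoidAlgebra ℤ (Multiplicative (Fin k → ℤ) × T) →+* L,
      (∀ (x : T) (n : ℤ), φ (MonoidAlgebra.single (1, x) n) = ι (MonoidAlgebra.single x n)) ∧
      ∀ i, φ (MonoidAlgebra.single (Multiplicative.ofAdd (Pi.single i (1 : ℤ)), 1) 1) = w i := by
  let F : Multiplicative (Fin k → ℤ) × T →* L :=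
    ((Units.coeHom L).comp (auxHom w)).coprod ((ι : _ →* L).comp (MonoidAlgebra.of ℤ T))
  refine ⟨(MonoidAlgebra.lift ℤ L _ F).toRingHom, ?_, ?_⟩
  · intro x n
    have h1 : (MonoidAlgebra.single x n : MonoidAlgebra ℤ T) = n • MonoidAlgebra.single x 1 := by
      simp
    rw [h1, map_zsmul]
    simp [F, MonoidAlgebra.lift_single]
  · intro i
    simp [F, MonoidAlgebra.lift_single, auxHom_single, ← MonoidAlgebra.one_def]

theorem aux_decomp {G : Type} (g : MonoidAlgebra ℤ G) :
    g = ∑ x ∈ g.coeff.support, MonoidAlgebra.single x (g.coeff x) := by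
  classical
  ext y
  simp [MonoidAlgebra.coeff_sum, Finsupp.finsetSum_apply, MonoidAlgebra.coeff_single,
    Finsupp.single_apply]

/-- Let `U` be free abelian with basis `u₁,…,u_k`, `T` a finitely
generated abelian group with generators `t₁,…,t_l` (`k ≤ l`) whose first `k` generators
have infinite order, and `f_i = 1 + c_{i,1}t_i + ⋯ + t_i^{d_i} ∈ ℤT`. If an element of
the submodule of `ℤ[U×T]^r` generated by the `(u_i − f_i)·e_j` has all coordinates
supported on `{1}×T`, then it is zero. -/
theorem submodule_no_T_elements
    (k l r : ℕ) (hkl : k ≤ l)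
    (T : Type) [CommGroup T] (t : Fin l → T)
    (hgen : Subgroup.closure (Set.range t) = ⊤)
    (horder : ∀ i : Fin l, (i : ℕ) < k → ¬ IsOfFinOrder (t i))
    (d : Fin k → ℕ) (hd : ∀ i, 1 ≤ d i)
    (c : Fin k → ℕ → ℤ) (hc0 : ∀ i, c i 0 = 1) (hcd : ∀ i, c i (d i) = 1)
    -- the elements `(u_i − f_i)·e_j` of the free module `ℤ[U×T]^r`,
    -- where `U = ℤ^k` with basis `u_i` and `f_i = Σ_{s=0}^{d_i} c_{i,s} t_i^s`:
    (gen : Fin k → Fin r →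
      (Fin r → MonoidAlgebra ℤ (Multiplicative (Fin k → ℤ) × T)))
    (hgendef : ∀ (i : Fin k) (j : Fin r), gen i j = Pi.single j
      (MonoidAlgebra.single ((Multiplicative.ofAdd (Pi.single i (1 : ℤ)), (1 : T))) (1 : ℤ) -
        ∑ s ∈ Finset.range (d i + 1),
          MonoidAlgebra.single ((1 : Multiplicative (Fin k → ℤ)), (t (Fin.castLE hkl i)) ^ s)
            (c i s)))
    (h : Fin r → MonoidAlgebra ℤ (Multiplicative (Fin k → ℤ) × T))
    (hmem : h ∈ Submodule.span (MonoidAlgebra ℤ (Multiplicative (Fin k → ℤ) × T))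
      {g | ∃ i j, g = gen i j})
    (hsupp : ∀ (j : Fin r), ∀ x ∈ (h j).coeff.support, x.1 = (1 : Multiplicative (Fin k → ℤ))) :
    h = 0 := by
  classical
  let f : Fin k → MonoidAlgebra ℤ T := fun i => ∑ s ∈ Finset.range (d i + 1),
    MonoidAlgebra.single ((t (Fin.castLE hkl i)) ^ s) (c i s)
  have hf : ∀ i, f i ∈ nonZeroDivisors (MonoidAlgebra ℤ T) := fun i =>
    aux_regular _ (horder _ (by simp)) _ _ (hc0 i)
  obtain ⟨L, _, ι, hinj, hu⟩ : ∃ (L : Type) (_ : CommRing L) (ι : MonoidAlgebra ℤ T →+* L),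
      Function.Injective ι ∧ ∀ i, IsUnit (ι (f i)) :=
    ⟨Localization (nonZeroDivisors (MonoidAlgebra ℤ T)), inferInstance, algebraMap _ _,
      IsLocalization.injective _ le_rfl, fun i =>
      IsLocalization.map_units _ (⟨f i, hf i⟩ : nonZeroDivisors (MonoidAlgebra ℤ T))⟩
  obtain ⟨φ, hφT, hφU⟩ := aux_exists ι (fun i => (hu i).unit)
  have hS : ∀ j, φ (h j) = 0 := by
    refine Submodule.span_induction (p := fun h _ => ∀ j, φ (h j) = 0) ?_ ?_ ?_ ?_ hmem
    · rintro _ ⟨i, j, rfl⟩ j'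
      rw [hgendef]
      by_cases hj : j' = j
      · subst hj
        rw [Pi.single_eq_same, map_sub, map_sum]
        simp only [hφT]
        rw [← map_sum]
        rw [hφU, IsUnit.unit_spec]
        exact sub_self _
      · rw [Pi.single_eq_of_ne hj, map_zero]
    · intro j; simp
    · intro x y _ _ hx hy j
      simp [hx j, hy j]
    · intro a x _ hx j
      simp [hx j]
  funext j
  have h0 : ι
      (∑ x ∈ (h j).coeff.support, MonoidAlgebra.single x.2 ((h j).coeff x)) = 0 := by
    rw [← hS j, map_sum]
    conv_rhs => rw [aux_decomp (h j), map_sum]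
    refine Finset.sum_congr rfl fun x hx => ?_
    obtain ⟨a, b⟩ := x
    obtain rfl : a = 1 := hsupp j _ hx
    rw [← hφT]
  have h1 := hinj (h0.trans (map_zero _).symm)
  ext x
  by_contra hx
  have hx' : (h j).coeff x ≠ 0 := by simpa using hx
  have h2 := congrArg (fun z : MonoidAlgebra ℤ T => z.coeff x.2) h1
  simp only [MonoidAlgebra.coeff_sum, Finsupp.finsetSum_apply, MonoidAlgebra.coeff_single,
    MonoidAlgebra.coeff_zero, Finsupp.zero_apply] at h2
  rw [Finset.sum_eq_single x] at h2
  · exact hx' (by simpa using h2)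
  · intro y hy hyx
    rw [Finsupp.single_eq_of_ne]
    intro he
    apply hyx
    refine Prod.ext ?_ (by simp [he])
    rw [hsupp j _ hy, hsupp j x (by simpa using hx')]
  · intro hh
    exact absurd (by simpa using hx') hh
end

section
/- Let f(t) = t^d + c_{d−1}t^{d−1} + ⋯ + c₁t + 1 ∈ ℤ[t] with d ≥ 1 and c₁,…,c_{d−1} ∈ ℤ. Then there exists a real number α > 1 such that |f(t)^n| > αⁿ for all integers n ≥ 1, where |p| denotes the sum of the absolute values of the coefficients of the polynomial p. -/
/-- `|p|` : the sum of the absolute values of the integer coefficients of `p`. -/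
noncomputable def intPolyNorm (p : Polynomial ℤ) : ℕ :=
  ∑ i ∈ p.support, (p.coeff i).natAbs

theorem norm_eval_le (p : Polynomial ℤ) (z : ℂ) (hz : ‖z‖ = 1) :
    ‖Polynomial.aeval z p‖ ≤ (intPolyNorm p : ℝ) := by
  rw [Polynomial.aeval_eq_sum_range, intPolyNorm]
  have h : ∑ i ∈ p.support, (p.coeff i).natAbs
      = ∑ i ∈ Finset.range (p.natDegree + 1), (p.coeff i).natAbs := by
    apply Finset.sum_subset
    · exact Polynomial.supp_subset_range_natDegree_succ
    · intro i _ hi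
      simpa using hi
  rw [h]
  push_cast
  refine (norm_sum_le _ _).trans (Finset.sum_le_sum fun i _ => ?_)
  simp [hz, Nat.cast_natAbs]

theorem exists_big (f : Polynomial ℤ) (hmonic : f.Monic)
    (hdeg : 1 ≤ f.natDegree) (hconst : f.coeff 0 = 1) :
    ∃ z : ℂ, ‖z‖ = 1 ∧ 2 ≤ ‖Polynomial.aeval z f‖ := by
  obtain ⟨d, hd⟩ : ∃ d, d = f.natDegree := ⟨_, rfl⟩
  have hd0 : d ≠ 0 := by omega
  have hζ := Complex.isPrimitiveRoot_exp d hd0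
  obtain ⟨ζ, hζe⟩ : ∃ ζ, ζ = Complex.exp (2 * Real.pi * Complex.I / d) := ⟨_, rfl⟩
  rw [← hζe] at hζ
  have hn : ‖ζ‖ = 1 := hζ.norm'_eq_one hd0
  have hsum : ∑ i ∈ Finset.range d, Polynomial.aeval (ζ ^ i) f = 2 * d := by
    simp_rw [Polynomial.aeval_eq_sum_range, ← hd]
    rw [Finset.sum_comm]
    have key : ∀ j ∈ Finset.range (d - 1),
        ∑ i ∈ Finset.range d, f.coeff (j + 1) • (ζ ^ i) ^ (j + 1) = 0 := by
      intro j hj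
      rw [Finset.mem_range] at hj
      rw [← Finset.smul_sum]
      have h1 : ζ ^ (j + 1) ≠ 1 := hζ.pow_ne_one_of_pos_of_lt (by omega) (by omega)
      have h2 := mul_geom_sum (ζ ^ (j + 1)) d
      rw [← pow_mul, mul_comm (j + 1) d, pow_mul, hζ.pow_eq_one, one_pow, sub_self] at h2
      have h3 := (mul_eq_zero.mp h2).resolve_left (sub_ne_zero.mpr h1)
      simp_rw [pow_right_comm ζ _ (j + 1)]
      rw [h3, smul_zero]
    rw [Finset.sum_range_succ]
    obtain ⟨e, he⟩ : ∃ e, d = e + 1 := ⟨d - 1, by omega⟩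
    have hc : f.coeff d = 1 := by rw [hd]; exact hmonic
    have hp : ∀ i, (ζ ^ i) ^ d = 1 := fun i => by
      rw [pow_right_comm, hζ.pow_eq_one, one_pow]
    have h4 : ∑ j ∈ Finset.range d, ∑ i ∈ Finset.range d, f.coeff j • (ζ ^ i) ^ j = d := by
      rw [show Finset.range d = Finset.range (d - 1 + 1) by congr 1; omega]
      rw [Finset.sum_range_succ', show d - 1 + 1 = d by omega, Finset.sum_eq_zero key]
      simp [hconst]
    rw [h4]
    simp [hc, hp]
    ring
  by_contra! hcon
  have hlt : ‖∑ i ∈ Finset.range d, Polynomial.aeval (ζ ^ i) f‖ < ∑ i ∈ Finset.range d, (2:ℝ) := by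
    refine (norm_sum_le _ _).trans_lt (Finset.sum_lt_sum_of_nonempty ?_ fun i _ => ?_)
    · simpa using hd0
    · exact hcon _ (by simp [hn])
  rw [hsum] at hlt
  simp [mul_comm] at hlt

/-- If `f(t) = t^d + c_{d-1}t^{d-1} + ⋯ + c₁t + 1` with `d ≥ 1`, then
the coefficient norms of the powers of `f` grow exponentially: there is `α > 1` with
`|f^n| > αⁿ` for all `n ≥ 1`. -/
theorem power_norm_growth (f : Polynomial ℤ) (hmonic : f.Monic)
    (hdeg : 1 ≤ f.natDegree) (hconst : f.coeff 0 = 1) :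
    ∃ α : ℝ, 1 < α ∧ ∀ n : ℕ, 1 ≤ n → α ^ n < (intPolyNorm (f ^ n) : ℝ) := by
  obtain ⟨z, hz, h2⟩ := exists_big f hmonic hdeg hconst
  refine ⟨3 / 2, by norm_num, fun n hn => ?_⟩
  refine lt_of_lt_of_le ?_ (norm_eval_le (f ^ n) z hz)
  rw [map_pow, norm_pow]
  exact pow_lt_pow_left₀ (by linarith) (by norm_num) (by omega)
end

section
/- Let f(t) = t^d + c_{d−1}t^{d−1} + ⋯ + c₁t + 1 ∈ ℤ[t] with d ≥ 1 and c₁,…,c_{d−1} ∈ ℤ. Then there exists z₀ ∈ ℂ with |z₀| = 1 such that |f(z₀)| > 1, where f(z₀) denotes the evaluation of f at z₀ in ℂ. -/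
/-- If `f(t) = t^d + c_{d-1}t^{d-1} + ⋯ + c₁t + 1` with `d ≥ 1`, then
there is a point `z₀` on the unit circle with `|f(z₀)| > 1`. -/
theorem exists_unit_circle_value_gt_one (f : Polynomial ℤ) (hmonic : f.Monic)
    (hdeg : 1 ≤ f.natDegree) (hconst : f.coeff 0 = 1) :
    ∃ z₀ : ℂ, ‖z₀‖ = 1 ∧ 1 < ‖Polynomial.aeval z₀ f‖ := by
  by_contra! H
  obtain ⟨d, hd⟩ : ∃ d, f.natDegree = d + 1 := ⟨f.natDegree - 1, by omega⟩
  have hζ := Complex.isPrimitiveRoot_exp (d + 1) (by omega)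
  set ζ := Complex.exp (2 * Real.pi * Complex.I / ((d + 1 : ℕ) : ℂ)) with hζdef
  have hn : ‖ζ‖ = 1 := hζ.norm'_eq_one (by omega)
  -- average over the roots of unity of order `d + 1`
  have key : ∑ k ∈ Finset.range (d + 1), Polynomial.aeval (ζ ^ k) f = 2 * ((d : ℂ) + 1) := by
    have e : ∀ k ∈ Finset.range (d + 1), Polynomial.aeval (ζ ^ k) f
        = ∑ i ∈ Finset.range (d + 2), (f.coeff i : ℂ) * (ζ ^ i) ^ k := by
      intro k _
      rw [Polynomial.aeval_eq_sum_range, hd]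
      refine Finset.sum_congr rfl fun i _ => ?_
      rw [zsmul_eq_mul, ← pow_mul, ← pow_mul, mul_comm k i]
    rw [Finset.sum_congr rfl e, Finset.sum_comm, Finset.sum_range_succ, Finset.sum_range_succ']
    have hl : f.coeff (d + 1) = 1 := hd ▸ hmonic.coeff_natDegree
    rw [Finset.sum_eq_zero]
    · simp only [hl, hconst, hζ.pow_eq_one]
      simp
      ring
    · intro i hi
      have hi' := Finset.mem_range.1 hi
      rw [← Finset.mul_sum]
      have h1 : ζ ^ (i + 1) ≠ 1 := hζ.pow_ne_one_of_pos_of_lt (by omega) (by omega)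
      rw [geom_sum_eq h1, ← pow_mul, mul_comm (i + 1), pow_mul, hζ.pow_eq_one]
      simp
  have h2 : ‖∑ k ∈ Finset.range (d + 1), Polynomial.aeval (ζ ^ k) f‖ ≤ (d : ℝ) + 1 := by
    refine (norm_sum_le_of_le _ (fun k _ => H (ζ ^ k) (by simp [hn]))).trans ?_
    simp
  rw [key] at h2
  have h3 : ‖(2 * ((d : ℂ) + 1))‖ = 2 * ((d : ℝ) + 1) := by
    rw [norm_mul]
    have : ((d : ℂ) + 1) = ((d + 1 : ℕ) : ℂ) := by push_cast; rfl
    rw [this, Complex.norm_natCast]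
    simp
  rw [h3] at h2
  have : (0 : ℝ) ≤ d := Nat.cast_nonneg d
  linarith
end
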